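/- Suppose B₀ satisfies the vanishing-field assumption and b:(0,∞)→(0,∞) satisfies κ·b(κ)→∞ and b(κ)→0 as κ→∞. Then, as κ→∞, ∫_Ω g( b(κ) κ |B₀(x)| ) dx = κ^{-1} ∫_Γ ( b(κ)|∇B₀(x)| )^{1/3} E( b(κ)|∇B₀(x)| ) ds(x) + o( b(κ)^{-1} κ^{-1} ); that is, b(κ)·κ times the difference of the two sides tends to 0 as κ→∞. -/

import Mathlib

open MeasureTheory Real Set Filter Topology

noncomputable section

/-- The open square `Q_r = (-r/2, r/2) × (-r/2, r/2)`. -/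
def Qsq (r : ℝ) : Set (ℝ × ℝ) := Ioo (-r/2) (r/2) ×ˢ Ioo (-r/2) (r/2)

/-- The vertical strip `S_R = (-R/2, R/2) × ℝ`. -/
def Strip (R : ℝ) : Set (ℝ × ℝ) := Ioo (-R/2) (R/2) ×ˢ (univ : Set ℝ)

/-- The magnetic potential `A₀(x) = (-x₂/2, x₁/2)` of the constant unit magnetic field. -/
def A₀ (x : ℝ × ℝ) : ℝ × ℝ := (-x.2 / 2, x.1 / 2)

/-- The magnetic potential `A_van(x) = (-x₂²/2, 0)` generating the field `B(x) = x₂`. -/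
def Avan (x : ℝ × ℝ) : ℝ × ℝ := (-x.2 ^ 2 / 2, 0)

/-- The magnetic gradient energy density `|(∇ - iA)u|²` at `x`. -/
def magGradSq (A : ℝ × ℝ → ℝ × ℝ) (u : ℝ × ℝ → ℂ) (x : ℝ × ℝ) : ℝ :=
  ‖fderiv ℝ u x (1, 0) - Complex.I * ((A x).1 : ℂ) * u x‖ ^ 2 +
  ‖fderiv ℝ u x (0, 1) - Complex.I * ((A x).2 : ℂ) * u x‖ ^ 2

/-- The Ginzburg–Landau functional `F_{b,Q_r}` on the square `Q_r`. -/
def Fsq (b r : ℝ) (u : ℝ × ℝ → ℂ) : ℝ :=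
  ∫ x in Qsq r, (b * magGradSq A₀ u x - ‖u x‖ ^ 2 + ‖u x‖ ^ 4 / 2)

/-- (Smooth surrogate of) membership in `H¹(Q_r; ℂ)`. -/
def MemH1sq (u : ℝ × ℝ → ℂ) : Prop := ContDiff ℝ 1 u

/-- (Smooth surrogate of) membership in `H¹₀(Q_r; ℂ)`: vanishing on the boundary. -/
def MemH10sq (r : ℝ) (u : ℝ × ℝ → ℂ) : Prop :=
  ContDiff ℝ 1 u ∧ ∀ x ∈ frontier (Qsq r), u x = 0

/-- The Dirichlet ground-state energy `e_D(b, r)`. -/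
def eD (b r : ℝ) : ℝ := sInf (Fsq b r '' {u | MemH10sq r u})

/-- The Neumann ground-state energy `e_N(b, r)`. -/
def eN (b r : ℝ) : ℝ := sInf (Fsq b r '' {u | MemH1sq u})

/-- The energy density of the strip functional `𝓔_{L,R}` at `x`. -/
def stripDensity (L : ℝ) (u : ℝ × ℝ → ℂ) (x : ℝ × ℝ) : ℝ :=
  magGradSq Avan u x - L ^ (-(2:ℝ)/3) * ‖u x‖ ^ 2 + (L ^ (-(2:ℝ)/3) / 2) * ‖u x‖ ^ 4

/-- The strip functional `𝓔_{L,R}`. -/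
def Estrip (L R : ℝ) (u : ℝ × ℝ → ℂ) : ℝ := ∫ x in Strip R, stripDensity L u x

/-- (Surrogate of) membership in the space `H¹_{mag,0}(S_R)`. -/
def MemH1mag0 (R : ℝ) (u : ℝ × ℝ → ℂ) : Prop :=
  ContDiff ℝ 1 u ∧
  IntegrableOn (fun x => ‖u x‖ ^ 2) (Strip R) ∧
  IntegrableOn (magGradSq Avan u) (Strip R) ∧
  IntegrableOn (fun x => ‖u x‖ ^ 4) (Strip R) ∧
  ∀ x ∈ frontier (Strip R), u x = 0

/-- The ground-state energy `e_gs(L; R)` of the strip functional. -/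
def egs (L R : ℝ) : ℝ := sInf (Estrip L R '' {u | MemH1mag0 R u})

/-- `g : (0,∞) → ℝ` is the thermodynamic limit of the Dirichlet square energies. -/
def IsLimitG (g : ℝ → ℝ) : Prop :=
  ∀ b > 0, Tendsto (fun r => eD b r / r ^ 2) atTop (nhds (g b))

/-- `E : (0,∞) → ℝ` is the large-`R` limit of the strip energies. -/
def IsLimitE (E : ℝ → ℝ) : Prop :=
  ∀ L > 0, Tendsto (fun R => egs L R / R) atTop (nhds (E L))

/-- The Euclidean plane. -/
abbrev E2 := EuclideanSpace ℝ (Fin 2)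

/-- The magnetic gradient energy density `|(∇ - iA)ψ|²` at `x`. -/
def magGradSqE (A : E2 → E2) (ψ : E2 → ℂ) (x : E2) : ℝ :=
  ∑ i : Fin 2, ‖fderiv ℝ ψ x (EuclideanSpace.single i 1) - Complex.I * ((A x i : ℝ) : ℂ) * ψ x‖ ^ 2

/-- The two-dimensional curl `curl A = ∂₁A₂ - ∂₂A₁`. -/
def curl2 (A : E2 → E2) (x : E2) : ℝ :=
  fderiv ℝ A x (EuclideanSpace.single 0 1) 1 - fderiv ℝ A x (EuclideanSpace.single 1 1) 0

/-- The assumption on the magnetic field profile `B₀` (Assumption 1.1):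
`B₀` is smooth, `|B₀| + |∇B₀| ≥ c > 0` on the closure of `Ω`,
`Γ = {B₀ = 0} ∩ closure Ω` is a nonempty finite union of smooth curves,
and `Γ ∩ ∂Ω` is finite. -/
structure VanishingFieldAssumption (Ω : Set E2) (B₀ : E2 → ℝ) (Γ : Set E2) : Prop where
  smooth : ContDiff ℝ (⊤ : ℕ∞) B₀
  nondeg : ∃ c > (0:ℝ), ∀ x ∈ closure Ω, c ≤ |B₀ x| + ‖fderiv ℝ B₀ x‖
  zeroSet : Γ = {x ∈ closure Ω | B₀ x = 0}
  nonempty : Γ.Nonempty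
  curves : ∃ (n : ℕ) (γ : Fin n → ℝ → E2), 0 < n ∧ (∀ i, ContDiff ℝ (⊤ : ℕ∞) (γ i)) ∧
    Γ = ⋃ i, γ i '' Icc 0 1
  finiteBoundary : (Γ ∩ frontier Ω).Finite


/-- `C¹` functions with compact support inside `U`. -/
def Adm (U : Set (ℝ × ℝ)) (u : ℝ × ℝ → ℂ) : Prop :=
  ContDiff ℝ 1 u ∧ HasCompactSupport u ∧ tsupport u ⊆ U

/-- General Ginzburg–Landau density. -/
def dens (A : ℝ × ℝ → ℝ × ℝ) (α μ ν : ℝ) (u : ℝ × ℝ → ℂ) (x : ℝ × ℝ) : ℝ :=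
  α * magGradSq A u x - μ * ‖u x‖ ^ 2 + ν * ‖u x‖ ^ 4

/-- General Ginzburg–Landau energy. -/
def JJ (A : ℝ × ℝ → ℝ × ℝ) (α μ ν : ℝ) (u : ℝ × ℝ → ℂ) : ℝ := ∫ x, dens A α μ ν u x

lemma magGradSq_nonneg (A : ℝ × ℝ → ℝ × ℝ) (u : ℝ × ℝ → ℂ) (x) : 0 ≤ magGradSq A u x := by
  unfold magGradSq; positivity

lemma continuous_magGradSq {A : ℝ × ℝ → ℝ × ℝ} (hA : Continuous A) {u : ℝ × ℝ → ℂ}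
    (hu : ContDiff ℝ 1 u) : Continuous (magGradSq A u) := by
  have h1 : Continuous (fderiv ℝ u) := hu.continuous_fderiv (by norm_num)
  have h2 : Continuous u := hu.continuous
  unfold magGradSq
  fun_prop

lemma continuous_dens {A : ℝ × ℝ → ℝ × ℝ} (hA : Continuous A) {u : ℝ × ℝ → ℂ}
    (hu : ContDiff ℝ 1 u) (α μ ν : ℝ) : Continuous (dens A α μ ν u) := by
  have h1 := continuous_magGradSq hA hu
  have h2 : Continuous u := hu.continuous
  unfold dens
  fun_prop

lemma magGradSq_of_notMem {A : ℝ × ℝ → ℝ × ℝ} {u : ℝ × ℝ → ℂ} {x} (hx : x ∉ tsupport u) :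
    magGradSq A u x = 0 := by
  have h0 : u x = 0 := image_eq_zero_of_notMem_tsupport hx
  have h1 : fderiv ℝ u x = 0 := by
    have := support_fderiv_subset ℝ (f := u)
    by_contra h
    exact hx (this h)
  simp [magGradSq, h0, h1]

lemma dens_of_notMem {A : ℝ × ℝ → ℝ × ℝ} {α μ ν : ℝ} {u : ℝ × ℝ → ℂ} {x} (hx : x ∉ tsupport u) :
    dens A α μ ν u x = 0 := by
  have h0 : u x = 0 := image_eq_zero_of_notMem_tsupport hx
  simp [dens, h0, magGradSq_of_notMem hx]

lemma hcs_of_notMem {u : ℝ × ℝ → ℂ} (hu : HasCompactSupport u) {f : ℝ × ℝ → ℝ}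
    (hf : ∀ x, x ∉ tsupport u → f x = 0) : HasCompactSupport f :=
  HasCompactSupport.intro hu hf

lemma integrable_dens {A : ℝ × ℝ → ℝ × ℝ} (hA : Continuous A) {u : ℝ × ℝ → ℂ}
    (hu : ContDiff ℝ 1 u) (hc : HasCompactSupport u) (α μ ν : ℝ) : Integrable (dens A α μ ν u) :=
  (continuous_dens hA hu α μ ν).integrable_of_hasCompactSupport
    (hcs_of_notMem hc fun _ hx => dens_of_notMem hx)

lemma setIntegral_dens {A : ℝ × ℝ → ℝ × ℝ} {U : Set (ℝ × ℝ)} {u : ℝ × ℝ → ℂ}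
    (hU : tsupport u ⊆ U) (α μ ν : ℝ) : ∫ x in U, dens A α μ ν u x = JJ A α μ ν u := by
  apply setIntegral_eq_integral_of_forall_compl_eq_zero
  intro x hx
  exact dens_of_notMem fun h => hx (hU h)

/-- gluing -/
lemma glue {ι : Type*} (s : Finset ι) {A : ℝ × ℝ → ℝ × ℝ} (hA : Continuous A)
    (V : ι → Set (ℝ × ℝ)) (w : ι → ℝ × ℝ → ℂ) (hw : ∀ i ∈ s, Adm (V i) (w i))
    (hd : ∀ i ∈ s, ∀ j ∈ s, i ≠ j → Disjoint (V i) (V j)) (U : Set (ℝ × ℝ))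
    (hU : ∀ i ∈ s, V i ⊆ U) (α μ ν : ℝ) :
    Adm U (fun x => ∑ i ∈ s, w i x) ∧
      JJ A α μ ν (fun x => ∑ i ∈ s, w i x) = ∑ i ∈ s, JJ A α μ ν (w i) := by
  classical
  have hCD : ContDiff ℝ 1 (fun x => ∑ i ∈ s, w i x) := ContDiff.sum fun i hi => (hw i hi).1
  have hK : IsCompact (⋃ i ∈ s, tsupport (w i)) :=
    s.isCompact_biUnion fun i hi => (hw i hi).2.1
  have hz : ∀ x, x ∉ (⋃ i ∈ s, tsupport (w i)) → ∑ i ∈ s, w i x = 0 := by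
    intro x hx
    simp only [mem_iUnion, not_exists] at hx
    exact Finset.sum_eq_zero fun i hi => image_eq_zero_of_notMem_tsupport (hx i hi)
  refine ⟨⟨hCD, HasCompactSupport.intro hK hz, ?_⟩, ?_⟩
  · refine (closure_minimal (fun x hx => ?_) hK.isClosed).trans
      (iUnion₂_subset fun i hi => (hw i hi).2.2.trans (hU i hi))
    by_contra h
    exact hx (hz x h)
  · unfold JJ
    rw [← integral_finsetSum s fun i hi => integrable_dens hA (hw i hi).1 (hw i hi).2.1 α μ ν]
    congr 1
    ext x
    have hfd : fderiv ℝ (fun x => ∑ i ∈ s, w i x) x = ∑ i ∈ s, fderiv ℝ (w i) x := by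
      rw [fderiv_fun_sum]
      intro i hi
      exact ((hw i hi).1.differentiable (by norm_num)).differentiableAt
    by_cases hx : ∃ i ∈ s, x ∈ tsupport (w i)
    · obtain ⟨i, hi, hxi⟩ := hx
      have hne : ∀ j ∈ s, j ≠ i → x ∉ tsupport (w j) := by
        intro j hj hji hxj
        exact Set.disjoint_left.1 (hd j hj i hi hji) ((hw j hj).2.2 hxj) ((hw i hi).2.2 hxi)
      rw [Finset.sum_eq_single i (fun j hj hji => dens_of_notMem (hne j hj hji)) (by simp [hi])]
      have e1 : ∑ j ∈ s, w j x = w i x :=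
        Finset.sum_eq_single i (fun j hj hji => image_eq_zero_of_notMem_tsupport (hne j hj hji))
          (by simp [hi])
      have e2 : ∑ j ∈ s, fderiv ℝ (w j) x = fderiv ℝ (w i) x :=
        Finset.sum_eq_single i (fun j hj hji => by
          by_contra h
          exact hne j hj hji (support_fderiv_subset ℝ (f := w j) h)) (by simp [hi])
      simp only [dens, magGradSq, hfd, e1, e2]
    · push Not at hx
      have e1 : ∑ j ∈ s, w j x = 0 :=
        Finset.sum_eq_zero (fun j hj => image_eq_zero_of_notMem_tsupport (hx j hj))
      have e2 : ∑ j ∈ s, fderiv ℝ (w j) x = 0 :=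
        Finset.sum_eq_zero (fun j hj => by
          by_contra h
          exact hx j hj (support_fderiv_subset ℝ (f := w j) h))
      rw [Finset.sum_eq_zero (fun j hj => dens_of_notMem (hx j hj))]
      simp [dens, magGradSq, hfd, e1, e2]

/-- Rescaling, translation and gauge transformation. -/
def trf (s : ℝ) (p : ℝ × ℝ) (q l₁ l₂ : ℝ) (v : ℝ × ℝ → ℂ) (x : ℝ × ℝ) : ℂ :=
  v (s • (x - p)) * Complex.exp (Complex.I * ((q * (x.1 * x.2) + l₁ * x.1 + l₂ * x.2 : ℝ) : ℂ))

lemma norm_trf (s : ℝ) (p : ℝ × ℝ) (q l₁ l₂ : ℝ) (v : ℝ × ℝ → ℂ) (x : ℝ × ℝ) :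
    ‖trf s p q l₁ l₂ v x‖ = ‖v (s • (x - p))‖ := by
  unfold trf
  rw [norm_mul, mul_comm Complex.I, Complex.norm_exp_ofReal_mul_I, mul_one]

lemma contDiff_trf (s : ℝ) (p : ℝ × ℝ) (q l₁ l₂ : ℝ) {v : ℝ × ℝ → ℂ} (hv : ContDiff ℝ 1 v) :
    ContDiff ℝ 1 (trf s p q l₁ l₂ v) := by
  unfold trf
  have h1 : ContDiff ℝ 1 (fun x : ℝ × ℝ => v (s • (x - p))) := by
    apply hv.comp; fun_prop
  have h2 : ContDiff ℝ 1 (fun x : ℝ × ℝ => ((q * (x.1 * x.2) + l₁ * x.1 + l₂ * x.2 : ℝ) : ℂ)) :=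
    by
      have h3 : ContDiff ℝ 1 (fun x : ℝ × ℝ => q * (x.1 * x.2) + l₁ * x.1 + l₂ * x.2) := by fun_prop
      exact Complex.ofRealCLM.contDiff.comp h3
  exact h1.mul (Complex.contDiff_exp.comp (contDiff_const.mul h2))

lemma magGradSq_trf (s : ℝ) (p : ℝ × ℝ) (q l₁ l₂ : ℝ) {v : ℝ × ℝ → ℂ} (hv : ContDiff ℝ 1 v)
    (A A' : ℝ × ℝ → ℝ × ℝ)
    (hA' : ∀ x, A' x = (s * (A (s • (x - p))).1 + (q * x.2 + l₁),
      s * (A (s • (x - p))).2 + (q * x.1 + l₂))) (x : ℝ × ℝ) :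
    magGradSq A' (trf s p q l₁ l₂ v) x = s ^ 2 * magGradSq A v (s • (x - p)) := by
  set y := s • (x - p) with hy
  set θ : ℂ := Complex.exp (Complex.I * ((q * (x.1 * x.2) + l₁ * x.1 + l₂ * x.2 : ℝ) : ℂ)) with hθ
  have hθn : ‖θ‖ = 1 := by
    rw [hθ, mul_comm Complex.I, Complex.norm_exp_ofReal_mul_I]
  have h1 : HasFDerivAt (fun x : ℝ × ℝ => v (s • (x - p)))
      ((fderiv ℝ v y).comp (s • ContinuousLinearMap.id ℝ (ℝ × ℝ))) x := by
    have hvd : HasFDerivAt v (fderiv ℝ v y) y :=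
      ((hv.differentiable (by norm_num)).differentiableAt).hasFDerivAt
    have : HasFDerivAt (fun x : ℝ × ℝ => s • (x - p)) (s • ContinuousLinearMap.id ℝ (ℝ × ℝ)) x :=
      ((hasFDerivAt_id x).sub_const p).const_smul s
    exact HasFDerivAt.comp x hvd this
  have hfst : HasFDerivAt (fun x : ℝ × ℝ => x.1) (ContinuousLinearMap.fst ℝ ℝ ℝ) x := hasFDerivAt_fst
  have hsnd : HasFDerivAt (fun x : ℝ × ℝ => x.2) (ContinuousLinearMap.snd ℝ ℝ ℝ) x := hasFDerivAt_snd
  have h2 := (((hfst.mul hsnd).const_mul q).add (hfst.const_mul l₁)).add (hsnd.const_mul l₂)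
  have h3 := ((Complex.ofRealCLM.hasFDerivAt.comp x h2).const_mul Complex.I).cexp
  have h4 := h1.mul h3
  have h5 : fderiv ℝ (trf s p q l₁ l₂ v) x = _ := h4.fderiv
  have e1 : fderiv ℝ (trf s p q l₁ l₂ v) x (1, 0) =
      θ * (s * fderiv ℝ v y (1, 0)) + Complex.I * ((q * x.2 + l₁ : ℝ) : ℂ) * v y * θ := by
    rw [h5]
    simp [← hy]
    simp only [hθ]
    push_cast
    ring
  have e2 : fderiv ℝ (trf s p q l₁ l₂ v) x (0, 1) =
      θ * (s * fderiv ℝ v y (0, 1)) + Complex.I * ((q * x.1 + l₂ : ℝ) : ℂ) * v y * θ := by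
    rw [h5]
    simp [← hy]
    simp only [hθ]
    push_cast
    ring
  have ev : trf s p q l₁ l₂ v x = v y * θ := rfl
  unfold magGradSq
  rw [e1, e2, ev, hA' x]
  have f1 : θ * (s * fderiv ℝ v y (1, 0)) + Complex.I * ((q * x.2 + l₁ : ℝ) : ℂ) * v y * θ -
      Complex.I * ((s * (A (s • (x - p))).1 + (q * x.2 + l₁) : ℝ) : ℂ) * (v y * θ) =
      θ * (s * (fderiv ℝ v y (1, 0) - Complex.I * ((A y).1 : ℂ) * v y)) := by
    rw [← hy]; push_cast; ring
  have f2 : θ * (s * fderiv ℝ v y (0, 1)) + Complex.I * ((q * x.1 + l₂ : ℝ) : ℂ) * v y * θ -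
      Complex.I * ((s * (A (s • (x - p))).2 + (q * x.1 + l₂) : ℝ) : ℂ) * (v y * θ) =
      θ * (s * (fderiv ℝ v y (0, 1) - Complex.I * ((A y).2 : ℂ) * v y)) := by
    rw [← hy]; push_cast; ring
  dsimp only
  rw [f1, f2]
  simp only [norm_mul, hθn, Complex.norm_real, one_mul, mul_pow, Real.norm_eq_abs, sq_abs]
  ring

lemma JJ_trf {s : ℝ} (hs : 0 < s) (p : ℝ × ℝ) (q l₁ l₂ : ℝ) {v : ℝ × ℝ → ℂ} (hv : ContDiff ℝ 1 v)
    (A A' : ℝ × ℝ → ℝ × ℝ)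
    (hA' : ∀ x, A' x = (s * (A (s • (x - p))).1 + (q * x.2 + l₁),
      s * (A (s • (x - p))).2 + (q * x.1 + l₂))) (α μ ν : ℝ) :
    JJ A' α μ ν (trf s p q l₁ l₂ v) = (s ^ 2)⁻¹ * JJ A (s ^ 2 * α) μ ν v := by
  unfold JJ
  have : ∀ x, dens A' α μ ν (trf s p q l₁ l₂ v) x = dens A (s ^ 2 * α) μ ν v (s • (x - p)) := by
    intro x
    simp only [dens, magGradSq_trf s p q l₁ l₂ hv A A' hA', norm_trf]
    ring
  simp_rw [this]
  rw [integral_sub_right_eq_self (fun x => dens A (s ^ 2 * α) μ ν v (s • x)) p,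
    Measure.integral_comp_smul]
  simp [abs_of_pos, hs.le]

lemma tsupport_trf {s : ℝ} (hs : 0 < s) (p : ℝ × ℝ) (q l₁ l₂ : ℝ) (v : ℝ × ℝ → ℂ) :
    tsupport (trf s p q l₁ l₂ v) ⊆ (fun x => s • (x - p)) ⁻¹' tsupport v := by
  apply closure_minimal
  · intro x hx
    apply subset_tsupport
    simp only [Function.mem_support] at hx ⊢
    intro h
    apply hx
    simp [trf, h]
  · exact (isClosed_tsupport v).preimage (by fun_prop)

lemma adm_trf {s : ℝ} (hs : 0 < s) (p : ℝ × ℝ) (q l₁ l₂ : ℝ) {v : ℝ × ℝ → ℂ} {U V : Set (ℝ × ℝ)}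
    (hv : Adm V v) (hUV : ∀ x, s • (x - p) ∈ V → x ∈ U) : Adm U (trf s p q l₁ l₂ v) := by
  refine ⟨contDiff_trf s p q l₁ l₂ hv.1, ?_, ?_⟩
  · have hK : IsCompact ((fun y : ℝ × ℝ => s⁻¹ • y + p) '' tsupport v) :=
      hv.2.1.image (by fun_prop)
    refine HasCompactSupport.intro hK fun x hx => ?_
    have : v (s • (x - p)) = 0 := by
      by_contra h
      apply hx
      refine ⟨s • (x - p), subset_tsupport _ h, ?_⟩
      simp [smul_smul, hs.ne']
    simp [trf, this]
  · exact (tsupport_trf hs p q l₁ l₂ v).trans fun x hx => hUV x (hv.2.2 hx)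

lemma trf_trf {s : ℝ} (hs : 0 < s) (p : ℝ × ℝ) (q l₁ l₂ : ℝ) (w : ℝ × ℝ → ℂ) :
    ∃ (p' : ℝ × ℝ) (q' l₁' l₂' : ℝ) (θ : ℝ), (∀ x, s⁻¹ • (x - p') = s⁻¹ • x + p) ∧
      ∀ x, trf s p q l₁ l₂ (trf s⁻¹ p' q' l₁' l₂' w) x = w x * Complex.exp (Complex.I * θ) := by
  refine ⟨-(s • p), -q / s ^ 2, -(q * p.2 + l₁) / s, -(q * p.1 + l₂) / s,
    - (q * p.1 * p.2 + l₁ * p.1 + l₂ * p.2) + 2 * (q * p.1 * p.2 + l₁ * p.1 + l₂ * p.2), ?_, ?_⟩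
  · intro x; simp [smul_smul, hs.ne']
  · intro x
    have hx : s⁻¹ • (s • (x - p) - -(s • p)) = x := by
      simp [smul_smul, hs.ne']
    unfold trf
    rw [hx, mul_assoc, ← Complex.exp_add, ← mul_add]
    congr 3
    rw [← Complex.ofReal_add]
    congr 1
    simp
    field_simp
    ring

lemma magGradSq_conj (A : ℝ × ℝ → ℝ × ℝ) {u : ℝ × ℝ → ℂ} (hu : ContDiff ℝ 1 u) (x : ℝ × ℝ) :
    magGradSq A (fun x => (starRingEnd ℂ) (u x)) x = magGradSq (fun x => - A x) u x := by
  have h1 : HasFDerivAt (fun x => (starRingEnd ℂ) (u x))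
      ((Complex.conjCLE : ℂ →L[ℝ] ℂ).comp (fderiv ℝ u x)) x :=
    (Complex.conjCLE : ℂ →L[ℝ] ℂ).hasFDerivAt.comp x
      ((hu.differentiable (by norm_num)).differentiableAt).hasFDerivAt
  unfold magGradSq
  rw [h1.fderiv]
  congr 2 <;>
  · rw [← Complex.norm_conj]
    simp

lemma adm_conj {U : Set (ℝ × ℝ)} {u : ℝ × ℝ → ℂ} (hu : Adm U u) :
    Adm U (fun x => (starRingEnd ℂ) (u x)) := by
  have hsup : Function.support (fun x => (starRingEnd ℂ) (u x)) = Function.support u := by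
    ext x; simp
  refine ⟨?_, ?_, ?_⟩
  · exact (Complex.conjCLE : ℂ →L[ℝ] ℂ).contDiff.comp hu.1
  · have := hu.2.1
    unfold HasCompactSupport tsupport at *
    rwa [hsup]
  · have := hu.2.2
    unfold tsupport at *
    rwa [hsup]

lemma JJ_conj (A : ℝ × ℝ → ℝ × ℝ) {u : ℝ × ℝ → ℂ} (hu : ContDiff ℝ 1 u) (α μ ν : ℝ) :
    JJ A α μ ν (fun x => (starRingEnd ℂ) (u x)) = JJ (fun x => - A x) α μ ν u := by
  unfold JJ dens
  simp only [magGradSq_conj A hu, Complex.norm_conj]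

lemma magGradSq_const_mul (A : ℝ × ℝ → ℝ × ℝ) {u : ℝ × ℝ → ℂ} (hu : ContDiff ℝ 1 u) (c : ℂ)
    (x : ℝ × ℝ) : magGradSq A (fun x => u x * c) x = ‖c‖ ^ 2 * magGradSq A u x := by
  have h1 : fderiv ℝ (fun x => u x * c) x = c • fderiv ℝ u x :=
    (((hu.differentiable (by norm_num)).differentiableAt).hasFDerivAt.mul_const c).fderiv
  unfold magGradSq
  rw [h1]
  have : ∀ (a b : ℂ), c * a - b * (u x * c) = c * (a - b * u x) := by intros; ring
  simp only [ContinuousLinearMap.smul_apply, smul_eq_mul, this, norm_mul, mul_pow]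
  ring

lemma adm_const_mul {U : Set (ℝ × ℝ)} {u : ℝ × ℝ → ℂ} (hu : Adm U u) (c : ℂ) :
    Adm U (fun x => u x * c) := by
  refine ⟨hu.1.mul contDiff_const, hu.2.1.mul_right, ?_⟩
  refine Subset.trans (closure_mono ?_) hu.2.2
  intro x hx h
  simp [h] at hx

lemma JJ_const_mul (A : ℝ × ℝ → ℝ × ℝ) {u : ℝ × ℝ → ℂ} (hu : ContDiff ℝ 1 u) (c : ℂ)
    (α μ ν : ℝ) :
    JJ A α μ ν (fun x => u x * c) = ‖c‖ ^ 2 * JJ A α μ (ν * ‖c‖ ^ 2) u := by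
  unfold JJ
  rw [← integral_const_mul]
  congr 1; ext x
  simp only [dens, magGradSq_const_mul A hu, norm_mul]
  ring

lemma contDiff_sqpos : ContDiff ℝ 1 (fun x : ℝ => (max x 0) ^ 2) ∧
    ∀ x : ℝ, HasDerivAt (fun x : ℝ => (max x 0) ^ 2) (2 * max x 0) x := by
  have hd : ∀ x : ℝ, HasDerivAt (fun x : ℝ => (max x 0) ^ 2) (2 * max x 0) x := by
    intro x
    rcases lt_trichotomy x 0 with h | h | h
    · rw [max_eq_right h.le]
      have : (fun x : ℝ => (max x 0) ^ 2) =ᶠ[𝓝 x] fun _ => 0 := by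
        filter_upwards [Iio_mem_nhds h] with y hy
        rw [max_eq_right (le_of_lt hy)]; simp
      simpa using (hasDerivAt_const x (0:ℝ)).congr_of_eventuallyEq this
    · subst h
      rw [hasDerivAt_iff_isLittleO]
      simp only [max_self, sub_zero, mul_zero, smul_zero, ne_eq, OfNat.ofNat_ne_zero,
        not_false_eq_true, zero_pow]
      have h1 : (fun x : ℝ => max x 0 ^ 2) =O[𝓝 0] fun x => x ^ 2 := by
        apply Asymptotics.IsBigO.of_bound 1
        filter_upwards with x
        rw [one_mul, Real.norm_eq_abs, Real.norm_eq_abs, abs_pow, abs_pow]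
        apply pow_le_pow_left₀ (abs_nonneg _)
        rcases le_total x 0 with h | h
        · rw [max_eq_right h]; simp
        · simp [max_eq_left h]
      refine h1.trans_isLittleO ?_
      exact Asymptotics.isLittleO_pow_id (by norm_num : 1 < 2)
    · rw [max_eq_left h.le]
      have : (fun x : ℝ => (max x 0) ^ 2) =ᶠ[𝓝 x] fun x => x ^ 2 := by
        filter_upwards [Ioi_mem_nhds h] with y hy
        rw [max_eq_left (le_of_lt hy)]
      simpa using (hasDerivAt_pow 2 x).congr_of_eventuallyEq this
  refine ⟨?_, hd⟩
  rw [contDiff_one_iff_deriv]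
  refine ⟨fun x => (hd x).differentiableAt, ?_⟩
  have : deriv (fun x : ℝ => (max x 0) ^ 2) = fun x => 2 * max x 0 := by
    ext x; exact (hd x).deriv
  rw [this]; fun_prop

/-- radial truncation -/
def trunc (δ : ℝ) (z : ℂ) : ℂ := ((max (1 - δ * ‖z‖⁻¹) 0) ^ 2 : ℝ) • z

lemma trunc_small {δ : ℝ} (hδ : 0 < δ) {z : ℂ} (hz : ‖z‖ ≤ δ) : trunc δ z = 0 := by
  unfold trunc
  by_cases h : z = 0
  · simp [h]
  · have h1 : 0 < ‖z‖ := norm_pos_iff.2 h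
    have : 1 - δ * ‖z‖⁻¹ ≤ 0 := by
      rw [sub_nonpos, ← div_eq_mul_inv, le_div_iff₀ h1]; linarith
    rw [max_eq_right this]; simp

lemma norm_trunc_le {δ : ℝ} (hδ : 0 < δ) (z : ℂ) : ‖trunc δ z‖ ≤ ‖z‖ := by
  unfold trunc
  rw [norm_smul, Real.norm_eq_abs, abs_of_nonneg (by positivity)]
  have h1 : max (1 - δ * ‖z‖⁻¹) 0 ≤ 1 := by
    apply max_le _ zero_le_one
    have : 0 ≤ δ * ‖z‖⁻¹ := by positivity
    linarith
  have h2 : 0 ≤ max (1 - δ * ‖z‖⁻¹) 0 := le_max_right _ _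
  have : max (1 - δ * ‖z‖⁻¹) 0 ^ 2 ≤ 1 := pow_le_one₀ h2 h1
  nlinarith [norm_nonneg z]

lemma le_norm_trunc {δ : ℝ} (hδ : 0 < δ) (z : ℂ) : ‖z‖ - 2 * δ ≤ ‖trunc δ z‖ := by
  by_cases hz : ‖z‖ ≤ δ
  · rw [trunc_small hδ hz]; simp; linarith
  · push Not at hz
    have h1 : 0 < ‖z‖ := hδ.trans hz
    unfold trunc
    have : 0 ≤ 1 - δ * ‖z‖⁻¹ := by
      rw [sub_nonneg, ← div_eq_mul_inv, div_le_iff₀ h1]; linarith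
    rw [max_eq_left this, norm_smul, Real.norm_eq_abs, abs_of_nonneg (by positivity)]
    have : (1 - δ * ‖z‖⁻¹) ^ 2 * ‖z‖ = ‖z‖ - 2 * δ + δ ^ 2 * ‖z‖⁻¹ := by field_simp; ring
    rw [this]
    have : 0 ≤ δ ^ 2 * ‖z‖⁻¹ := by positivity
    linarith

lemma trunc_eventually {δ : ℝ} (hδ : 0 < δ) {z : ℂ} (hz : ‖z‖ < δ) : trunc δ =ᶠ[𝓝 z] fun _ => 0 := by
  have : IsOpen {y : ℂ | ‖y‖ < δ} := isOpen_lt continuous_norm continuous_const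
  filter_upwards [this.mem_nhds hz] with y hy
  exact trunc_small hδ (le_of_lt hy)

lemma contDiff_trunc {δ : ℝ} (hδ : 0 < δ) : ContDiff ℝ 1 (trunc δ) := by
  rw [contDiff_iff_contDiffAt]
  intro z
  by_cases hz : ‖z‖ < δ
  · exact contDiffAt_const.congr_of_eventuallyEq (trunc_eventually hδ hz)
  · have h0 : z ≠ 0 := by rintro rfl; simp at hz; linarith
    have h1 : ContDiffAt ℝ 1 (fun z : ℂ => 1 - δ * ‖z‖⁻¹) z :=
      contDiffAt_const.sub (contDiffAt_const.mul
        ((contDiffAt_norm ℝ h0).inv (norm_ne_zero_iff.2 h0)))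
    have h2 := contDiff_sqpos.1.contDiffAt.comp z h1
    exact h2.smul contDiffAt_id

lemma inner_I_self (a : ℝ) (z : ℂ) : inner ℝ z (Complex.I * (a:ℂ) * z) = 0 := by
  rw [Complex.inner]
  simp
  ring

lemma fderiv_trunc {δ : ℝ} (hδ : 0 < δ) (z : ℂ) :
    (∀ ξ, ‖fderiv ℝ (trunc δ) z ξ‖ ≤ ‖ξ‖) ∧
    ∀ a : ℝ, fderiv ℝ (trunc δ) z (Complex.I * (a:ℂ) * z) = Complex.I * (a:ℂ) * trunc δ z := by
  by_cases hz : ‖z‖ < δ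
  · rw [(trunc_eventually hδ hz).fderiv_eq]
    simp [trunc_small hδ hz.le]
  · have h0 : z ≠ 0 := by rintro rfl; simp at hz; linarith
    push Not at hz
    have hp : 0 < ‖z‖ := norm_pos_iff.2 h0
    have hn : HasFDerivAt (fun z : ℂ => ‖z‖) (‖z‖⁻¹ • innerSL ℝ z) z := by
      have h := (hasStrictFDerivAt_norm_sq z).hasFDerivAt.sqrt (by positivity)
      have e : (fun y : ℂ => √(‖y‖ ^ 2)) = fun y => ‖y‖ := by ext y; simp
      rw [e] at h
      have e3 : (1 / (2 * √(‖z‖ ^ 2))) • (2 • (innerSL ℝ) z) = ‖z‖⁻¹ • innerSL ℝ z := by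
        rw [Real.sqrt_sq hp.le, ← Nat.cast_smul_eq_nsmul ℝ, smul_smul]
        congr 1
        field_simp
        norm_num
      rw [← e3]
      exact h
    have hi : HasFDerivAt (fun z : ℂ => ‖z‖⁻¹) (-(‖z‖ ^ 2)⁻¹ • (‖z‖⁻¹ • innerSL ℝ z)) z :=
      (hasDerivAt_inv hp.ne').comp_hasFDerivAt z hn
    have h1 := (hi.const_mul δ).const_sub 1
    have h2 := (contDiff_sqpos.2 (1 - δ * ‖z‖⁻¹)).comp_hasFDerivAt z h1
    have h3 := h2.smul (hasFDerivAt_id z)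
    have hx0 : 0 ≤ 1 - δ * ‖z‖⁻¹ := by
      rw [sub_nonneg, ← div_eq_mul_inv, div_le_iff₀ hp]; linarith
    have hx1 : 1 - δ * ‖z‖⁻¹ ≤ 1 := by
      have : 0 ≤ δ * ‖z‖⁻¹ := by positivity
      linarith
    have h4 : ∀ ξ, fderiv ℝ (trunc δ) z ξ = ((1 - δ * ‖z‖⁻¹) ^ 2 : ℝ) • ξ +
        (2 * (1 - δ * ‖z‖⁻¹) * (δ * ‖z‖⁻¹) * (‖z‖⁻¹) ^ 2 * inner ℝ z ξ : ℝ) • z := by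
      intro ξ
      have : fderiv ℝ (trunc δ) z = _ := h3.fderiv
      rw [this]
      simp only [Function.comp, max_eq_left hx0]
      simp
      left
      field_simp
    constructor
    · intro ξ
      rw [h4]
      refine (norm_add_le _ _).trans ?_
      rw [norm_smul, norm_smul]
      simp only [norm_mul, norm_pow, Real.norm_eq_abs]
      rw [abs_of_nonneg hx0, abs_two, abs_of_nonneg hδ.le, abs_of_nonneg (inv_nonneg.2 hp.le)]
      have hin : |inner ℝ z ξ| ≤ ‖z‖ * ‖ξ‖ := abs_real_inner_le_norm z ξ
      set t := 1 - δ * ‖z‖⁻¹ with ht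
      have h5 : 2 * t * (δ * ‖z‖⁻¹) * ‖z‖⁻¹ ^ 2 * |inner ℝ z ξ| * ‖z‖ ≤
          2 * t * (δ * ‖z‖⁻¹) * ‖z‖⁻¹ ^ 2 * (‖z‖ * ‖ξ‖) * ‖z‖ := by
        gcongr
      have h6 : 2 * t * (δ * ‖z‖⁻¹) * ‖z‖⁻¹ ^ 2 * (‖z‖ * ‖ξ‖) * ‖z‖ = 2 * t * (1 - t) * ‖ξ‖ := by
        have : (1 - t) = δ * ‖z‖⁻¹ := by rw [ht]; ring
        rw [this]; field_simp
      nlinarith [norm_nonneg ξ, sq_nonneg (1 - t), mul_nonneg (sq_nonneg (1 - t)) (norm_nonneg ξ)]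
    · intro a
      rw [h4, inner_I_self]
      simp only [mul_zero, zero_smul, add_zero, trunc, max_eq_left hx0]
      rw [Complex.real_smul, Complex.real_smul]; ring

lemma magGradSq_trunc_le (A : ℝ × ℝ → ℝ × ℝ) {u : ℝ × ℝ → ℂ} (hu : ContDiff ℝ 1 u) {δ : ℝ}
    (hδ : 0 < δ) (x : ℝ × ℝ) : magGradSq A (fun x => trunc δ (u x)) x ≤ magGradSq A u x := by
  have h1 : HasFDerivAt (fun x => trunc δ (u x)) ((fderiv ℝ (trunc δ) (u x)).comp (fderiv ℝ u x)) x :=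
    HasFDerivAt.comp x
      (((contDiff_trunc hδ).differentiable (by norm_num)).differentiableAt).hasFDerivAt
      ((hu.differentiable (by norm_num)).differentiableAt).hasFDerivAt
  unfold magGradSq
  rw [h1.fderiv]
  obtain ⟨hA, hB⟩ := fderiv_trunc hδ (u x)
  simp only [ContinuousLinearMap.comp_apply]
  rw [← hB, ← hB, ← map_sub, ← map_sub]
  gcongr <;> exact hA _

/-- Truncation lemma: `C¹` functions vanishing on the boundary can be approximated in energy by
compactly supported ones. -/
lemma exists_adm_le {U : Set (ℝ × ℝ)} (hUo : IsOpen U) (hUb : Bornology.IsBounded U)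
    {A : ℝ × ℝ → ℝ × ℝ} (hA : Continuous A) {u : ℝ × ℝ → ℂ} (hu : ContDiff ℝ 1 u)
    (hu0 : ∀ x ∈ frontier U, u x = 0) {α μ ν : ℝ} (hα : 0 ≤ α) (hμ : 0 ≤ μ) (hν : 0 ≤ ν)
    {η : ℝ} (hη : 0 < η) :
    ∃ v, Adm U v ∧ JJ A α μ ν v ≤ (∫ x in U, dens A α μ ν u x) + η := by
  classical
  have hK : IsCompact (closure U) := hUb.isCompact_closure
  obtain ⟨M, hM⟩ := hK.exists_bound_of_continuousOn hu.continuous.continuousOn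
  have hvol : volume U < ⊤ := hUb.measure_lt_top
  have hm : 0 ≤ volume.real U := measureReal_nonneg
  set M' := max M 0 with hM'
  have hM'0 : 0 ≤ M' := le_max_right _ _
  obtain ⟨δ, hδ, hδη⟩ : ∃ δ > 0, μ * (4 * δ * M') * volume.real U ≤ η := by
    refine ⟨η / (4 * μ * M' * volume.real U + 1), by positivity, ?_⟩
    have h : 0 < 4 * μ * M' * volume.real U + 1 := by positivity
    have : μ * (4 * (η / (4 * μ * M' * volume.real U + 1)) * M') * volume.real U =
        η * ((4 * μ * M' * volume.real U) / (4 * μ * M' * volume.real U + 1)) := by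
      field_simp
    rw [this]
    have : (4 * μ * M' * volume.real U) / (4 * μ * M' * volume.real U + 1) ≤ 1 := by
      rw [div_le_one h]; linarith
    nlinarith
  set K' := closure U ∩ {x | δ ≤ ‖u x‖} with hK'
  have hK'c : IsCompact K' := hK.inter_right (isClosed_le continuous_const hu.continuous.norm)
  have hK'U : K' ⊆ U := by
    intro x hx
    by_contra hxU
    have : x ∈ frontier U := ⟨hx.1, by rwa [hUo.interior_eq]⟩
    have h2 := hx.2
    simp only [mem_ofPred_eq, hu0 x this, norm_zero] at h2
    linarith
  have hcomp : ContDiff ℝ 1 (fun x => trunc δ (u x)) := (contDiff_trunc hδ).comp hu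
  set v : ℝ × ℝ → ℂ := U.indicator (fun x => trunc δ (u x)) with hv
  have hvU : ∀ x ∈ U, v =ᶠ[𝓝 x] fun x => trunc δ (u x) := by
    intro x hx
    filter_upwards [hUo.mem_nhds hx] with y hy
    simp [hv, hy]
  have hv0 : ∀ x, x ∉ K' → v x = 0 := by
    intro x hx
    by_cases hxU : x ∈ U
    · simp only [hv, indicator_of_mem hxU]
      apply trunc_small hδ
      by_contra h
      push Not at h
      exact hx ⟨subset_closure hxU, h.le⟩
    · simp [hv, hxU]
  have hvts : tsupport v ⊆ K' := closure_minimal (fun x hx => by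
    by_contra h; exact hx (hv0 x h)) hK'c.isClosed
  have hvC : ContDiff ℝ 1 v := by
    rw [contDiff_iff_contDiffAt]
    intro x
    by_cases hx : x ∈ U
    · exact hcomp.contDiffAt.congr_of_eventuallyEq (hvU x hx)
    · have : x ∈ K'ᶜ := fun h => hx (hK'U h)
      refine (contDiffAt_const (c := (0:ℂ))).congr_of_eventuallyEq ?_
      filter_upwards [hK'c.isClosed.isOpen_compl.mem_nhds this] with y hy
      exact hv0 y hy
  have hadm : Adm U v := ⟨hvC, HasCompactSupport.intro hK'c hv0, hvts.trans hK'U⟩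
  refine ⟨v, hadm, ?_⟩
  rw [← setIntegral_dens hadm.2.2]
  have hintg : IntegrableOn (dens A α μ ν u) U :=
    ((continuous_dens hA hu α μ ν).continuousOn.integrableOn_compact hK).mono_set subset_closure
  have hconst : IntegrableOn (fun _ : ℝ × ℝ => μ * (4 * δ * M')) U := integrableOn_const hvol.ne
  calc ∫ x in U, dens A α μ ν v x ≤ ∫ x in U, (dens A α μ ν u x + μ * (4 * δ * M')) := by
        apply setIntegral_mono_on (integrable_dens hA hvC hadm.2.1 α μ ν).integrableOn
          (hintg.add hconst) hUo.measurableSet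
        intro x hx
        have e1 : v x = trunc δ (u x) := (hvU x hx).eq_of_nhds
        have e2 : magGradSq A v x = magGradSq A (fun x => trunc δ (u x)) x := by
          unfold magGradSq
          rw [(hvU x hx).fderiv_eq, e1]
        have h1 := magGradSq_trunc_le A hu hδ x
        have h2 := norm_trunc_le hδ (u x)
        have h3 := le_norm_trunc hδ (u x)
        have h4 : ‖u x‖ ≤ M' := (hM x (subset_closure hx)).trans (le_max_left _ _)
        have h5 := norm_nonneg (trunc δ (u x))
        show dens A α μ ν v x ≤ dens A α μ ν u x + μ * (4 * δ * M')
        simp only [dens, e2, e1]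
        have h6 : ‖u x‖ ^ 2 - ‖trunc δ (u x)‖ ^ 2 ≤ 4 * δ * M' := by
          by_cases hc : ‖u x‖ ≤ 2 * δ
          · nlinarith [norm_nonneg (u x)]
          · push Not at hc
            have : (‖u x‖ - 2 * δ) ^ 2 ≤ ‖trunc δ (u x)‖ ^ 2 := by
              apply pow_le_pow_left₀ _ h3
              linarith
            nlinarith
        have h7 : α * magGradSq A (fun x => trunc δ (u x)) x ≤ α * magGradSq A u x := by gcongr
        have h8 : ν * ‖trunc δ (u x)‖ ^ 4 ≤ ν * ‖u x‖ ^ 4 := by gcongr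
        nlinarith
    _ = (∫ x in U, dens A α μ ν u x) + μ * (4 * δ * M') * volume.real U := by
        rw [integral_add hintg hconst]
        simp [mul_comm]
    _ ≤ _ := by linarith

lemma integrable_mul_cs {a h : ℝ × ℝ → ℝ} (ha : Continuous a) (hh : Continuous h)
    (hc : HasCompactSupport h) : Integrable (fun x => a x * h x) :=
  (ha.mul hh).integrable_of_hasCompactSupport hc.mul_left

lemma integrable_mul_cs' {a h : ℝ × ℝ → ℝ} (ha : Continuous a) (hh : Continuous h)
    (hc : HasCompactSupport a) : Integrable (fun x => a x * h x) :=
  (ha.mul hh).integrable_of_hasCompactSupport hc.mul_right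

lemma hasDerivAt_shift {a h : ℝ × ℝ → ℝ} (ha : Continuous a) (hac : HasCompactSupport a)
    (hh : ContDiff ℝ 1 h) (hc : HasCompactSupport h) (v : ℝ × ℝ) :
    HasDerivAt (fun τ : ℝ => ∫ x, a x * h (x + τ • v)) (∫ x, a x * fderiv ℝ h x v) 0 := by
  have hcf : Continuous (fderiv ℝ h) := hh.continuous_fderiv (by norm_num)
  obtain ⟨M, hM⟩ := (hc.fderiv ℝ).exists_bound_of_continuous hcf
  have key := hasDerivAt_integral_of_dominated_loc_of_deriv_le (μ := (volume : Measure (ℝ × ℝ)))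
    (F := fun τ : ℝ => fun x => a x * h (x + τ • v))
    (F' := fun τ : ℝ => fun x => a x * fderiv ℝ h (x + τ • v) v) (x₀ := 0) (s := univ)
    (bound := fun x => |a x| * (M * ‖v‖)) univ_mem ?_ ?_ ?_ ?_ ?_ ?_
  · simpa using key.2
  · refine Eventually.of_forall fun τ => ?_
    have := hh.continuous
    exact Continuous.aestronglyMeasurable (by fun_prop)
  · have := hh.continuous
    exact integrable_mul_cs' ha (by fun_prop) hac
  · exact Continuous.aestronglyMeasurable (by fun_prop)
  · refine Eventually.of_forall fun x τ _ => ?_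
    rw [norm_mul, Real.norm_eq_abs]
    gcongr
    exact (ContinuousLinearMap.le_opNorm _ _).trans (by gcongr; exact hM _)
  · exact ((ha.integrable_of_hasCompactSupport hac).abs).mul_const _
  · refine Eventually.of_forall fun x τ _ => ?_
    apply HasDerivAt.const_mul
    have h1 : HasFDerivAt h (fderiv ℝ h (x + τ • v)) (x + τ • v) :=
      ((hh.differentiable (by norm_num)).differentiableAt).hasFDerivAt
    have h2 : HasDerivAt (fun τ : ℝ => x + τ • v) v τ := by
      simpa using ((hasDerivAt_id τ).smul_const v).const_add x
    exact h1.comp_hasDerivAt τ h2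

lemma jacobian_zero {f h : ℝ × ℝ → ℝ} (hf : ContDiff ℝ 1 f) (hfc : HasCompactSupport f)
    (hh : ContDiff ℝ 1 h) (hc : HasCompactSupport h) (e v : ℝ × ℝ) :
    ∫ x, fderiv ℝ f x e * fderiv ℝ h x v = ∫ x, fderiv ℝ h x e * fderiv ℝ f x v := by
  have hcf : Continuous (fderiv ℝ f) := hf.continuous_fderiv (by norm_num)
  have hch : Continuous (fderiv ℝ h) := hh.continuous_fderiv (by norm_num)
  have cf := hf.continuous
  have chh := hh.continuous
  have hfe : HasCompactSupport (fun x => fderiv ℝ f x e) := hfc.fderiv_apply ℝ e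
  have hhe : HasCompactSupport (fun x => fderiv ℝ h x e) := hc.fderiv_apply ℝ e
  have h1 := hasDerivAt_shift (a := fun x => fderiv ℝ f x e) (by fun_prop) hfe hh hc v
  have h2 := hasDerivAt_shift (a := fun x => fderiv ℝ h x e) (by fun_prop) hhe hf hfc (-v)
  have e1 : (fun τ : ℝ => ∫ x, fderiv ℝ f x e * h (x + τ • v)) =
      fun τ : ℝ => -∫ x, fderiv ℝ h x e * f (x + τ • (-v)) := by
    ext τ
    have hd : Differentiable ℝ (fun x => h (x + τ • v)) :=
      (hh.differentiable (by norm_num)).comp (by fun_prop)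
    have hfd : ∀ x, fderiv ℝ (fun x => h (x + τ • v)) x = fderiv ℝ h (x + τ • v) := by
      intro x; rw [fderiv_comp_add_right]
    have key := integral_mul_fderiv_eq_neg_fderiv_mul_of_integrable (μ := (volume : Measure (ℝ × ℝ)))
      (f := f) (g := fun x => h (x + τ • v)) (v := e) ?_ ?_ ?_
      (fun x _ => (hf.differentiable (by norm_num)).differentiableAt) (fun x _ => hd x)
    · have : ∫ x, fderiv ℝ f x e * h (x + τ • v) = -∫ x, f x * fderiv ℝ h (x + τ • v) e := by
        rw [eq_neg_iff_add_eq_zero, ← neg_eq_iff_add_eq_zero, ← key]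
        simp_rw [hfd]
      rw [this]
      congr 1
      rw [← integral_sub_right_eq_self _ (τ • v)]
      congr 1; ext x
      simp only [sub_add_cancel, smul_neg, ← sub_eq_add_neg]
      ring
    · exact integrable_mul_cs' (by fun_prop) (by fun_prop) hfe
    · simp_rw [hfd]
      exact integrable_mul_cs' (by fun_prop) (by fun_prop) hfc
    · exact integrable_mul_cs' (by fun_prop) (by fun_prop) hfc
  rw [e1] at h1
  have h3 := h1.unique h2.neg
  rw [h3]
  simp [integral_neg]

lemma virial {f : ℝ × ℝ → ℝ} (hf : ContDiff ℝ 1 f) (hfc : HasCompactSupport f)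
    (l : ℝ × ℝ →L[ℝ] ℝ) (e : ℝ × ℝ) (hle : l e = 1) :
    ∫ x, l x * f x * fderiv ℝ f x e = - (1/2) * ∫ x, f x ^ 2 := by
  have hcf : Continuous (fderiv ℝ f) := hf.continuous_fderiv (by norm_num)
  have cf := hf.continuous
  have hd := hf.differentiable (by norm_num)
  have hfd : ∀ x, fderiv ℝ (fun x => l x * f x) x e = l x * fderiv ℝ f x e + f x := by
    intro x
    have h0 : HasFDerivAt (fun x => l x * f x) (l x • fderiv ℝ f x + f x • l) x :=
      (l.hasFDerivAt (x := x)).mul (hd x).hasFDerivAt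
    rw [h0.fderiv]
    simp [hle]
  have i1 : Integrable (fun x => l x * fderiv ℝ f x e * f x) :=
    integrable_mul_cs (by fun_prop) cf hfc
  have i2 : Integrable (fun x => f x * f x) := integrable_mul_cs cf cf hfc
  have key := integral_mul_fderiv_eq_neg_fderiv_mul_of_integrable (μ := (volume : Measure (ℝ × ℝ)))
      (f := fun x => l x * f x) (g := f) (v := e) ?_ ?_ ?_
      (fun x _ => by fun_prop) (fun x _ => hd x)
  · simp_rw [hfd, add_mul] at key
    rw [integral_add i1 i2] at key
    have e1 : ∫ x, l x * fderiv ℝ f x e * f x = ∫ x, l x * f x * fderiv ℝ f x e := by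
      congr 1; ext x; ring
    have e2 : ∫ x, f x * f x = ∫ x, f x ^ 2 := by congr 1; ext x; ring
    rw [e1, e2] at key
    linarith
  · simp_rw [hfd]
    exact integrable_mul_cs (by fun_prop) cf hfc
  · exact integrable_mul_cs' (by fun_prop) (by fun_prop) hfc.mul_left
  · exact integrable_mul_cs (by fun_prop) (by fun_prop) hfc

lemma magnetic_bound {u : ℝ × ℝ → ℂ} (hu : ContDiff ℝ 1 u) (hc : HasCompactSupport u) :
    ∫ x, ‖u x‖ ^ 2 ≤ ∫ x, magGradSq A₀ u x := by
  set f : ℝ × ℝ → ℝ := fun x => (u x).re with hf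
  set h : ℝ × ℝ → ℝ := fun x => (u x).im with hh
  have fC : ContDiff ℝ 1 f := Complex.reCLM.contDiff.comp hu
  have hC : ContDiff ℝ 1 h := Complex.imCLM.contDiff.comp hu
  have fc : HasCompactSupport f := hc.comp_left (g := Complex.re) rfl
  have hhc : HasCompactSupport h := hc.comp_left (g := Complex.im) rfl
  have cF : Continuous (fderiv ℝ f) := fC.continuous_fderiv (by norm_num)
  have cH : Continuous (fderiv ℝ h) := hC.continuous_fderiv (by norm_num)
  have cf := fC.continuous
  have ch := hC.continuous
  have ud := hu.differentiable (by norm_num)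
  have dre : ∀ x v, fderiv ℝ f x v = (fderiv ℝ u x v).re := by
    intro x v
    have := (Complex.reCLM.hasFDerivAt.comp x (ud x).hasFDerivAt).fderiv
    have e : fderiv ℝ f x = Complex.reCLM.comp (fderiv ℝ u x) := this
    rw [e]; simp
  have dim : ∀ x v, fderiv ℝ h x v = (fderiv ℝ u x v).im := by
    intro x v
    have := (Complex.imCLM.hasFDerivAt.comp x (ud x).hasFDerivAt).fderiv
    have e : fderiv ℝ h x = Complex.imCLM.comp (fderiv ℝ u x) := this
    rw [e]; simp
  let l₁ := ContinuousLinearMap.fst ℝ ℝ ℝ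
  let l₂ := ContinuousLinearMap.snd ℝ ℝ ℝ
  have v1 := virial fC fc l₁ (1, 0) (by simp [l₁])
  have v2 := virial fC fc l₂ (0, 1) (by simp [l₂])
  have v3 := virial hC hhc l₁ (1, 0) (by simp [l₁])
  have v4 := virial hC hhc l₂ (0, 1) (by simp [l₂])
  have jz := jacobian_zero fC fc hC hhc (1, 0) (0, 1)
  have ia : Integrable (fun x => fderiv ℝ f x (1, 0) * fderiv ℝ h x (0, 1)) :=
    integrable_mul_cs' (by fun_prop) (by fun_prop) (fc.fderiv_apply ℝ _)
  have ib : Integrable (fun x => fderiv ℝ h x (1, 0) * fderiv ℝ f x (0, 1)) :=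
    integrable_mul_cs' (by fun_prop) (by fun_prop) (hhc.fderiv_apply ℝ _)
  have i1 : Integrable (fun x => l₁ x * f x * fderiv ℝ f x (1, 0)) :=
    integrable_mul_cs (by fun_prop) (by fun_prop) (fc.fderiv_apply ℝ _)
  have i2 : Integrable (fun x => l₂ x * f x * fderiv ℝ f x (0, 1)) :=
    integrable_mul_cs (by fun_prop) (by fun_prop) (fc.fderiv_apply ℝ _)
  have i3 : Integrable (fun x => l₁ x * h x * fderiv ℝ h x (1, 0)) :=
    integrable_mul_cs (by fun_prop) (by fun_prop) (hhc.fderiv_apply ℝ _)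
  have i4 : Integrable (fun x => l₂ x * h x * fderiv ℝ h x (0, 1)) :=
    integrable_mul_cs (by fun_prop) (by fun_prop) (hhc.fderiv_apply ℝ _)
  have j1 : Integrable (fun x => f x ^ 2) := by
    simp_rw [pow_two]; exact integrable_mul_cs cf cf fc
  have j2 : Integrable (fun x => h x ^ 2) := by
    simp_rw [pow_two]; exact integrable_mul_cs ch ch hhc
  have k1 : Integrable (fun x => 2 * (fderiv ℝ f x (1, 0) * fderiv ℝ h x (0, 1)
      - fderiv ℝ h x (1, 0) * fderiv ℝ f x (0, 1))) := (ia.sub ib).const_mul 2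
  have k2 : Integrable (fun x => l₁ x * f x * fderiv ℝ f x (1, 0)
      + l₂ x * f x * fderiv ℝ f x (0, 1)) := i1.add i2
  have k3 : Integrable (fun x => l₁ x * f x * fderiv ℝ f x (1, 0)
      + l₂ x * f x * fderiv ℝ f x (0, 1) + l₁ x * h x * fderiv ℝ h x (1, 0)) := k2.add i3
  have k4 : Integrable (fun x => l₁ x * f x * fderiv ℝ f x (1, 0)
      + l₂ x * f x * fderiv ℝ f x (0, 1) + l₁ x * h x * fderiv ℝ h x (1, 0)
      + l₂ x * h x * fderiv ℝ h x (0, 1)) := k3.add i4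
  have eu : ∫ x, ‖u x‖ ^ 2 = (∫ x, f x ^ 2) + ∫ x, h x ^ 2 := by
    rw [← integral_add j1 j2]
    congr 1; ext x
    rw [← Complex.normSq_eq_norm_sq, Complex.normSq_apply]; simp only [hf, hh]; ring
  have eR : ∫ x, (2 * (fderiv ℝ f x (1, 0) * fderiv ℝ h x (0, 1)
      - fderiv ℝ h x (1, 0) * fderiv ℝ f x (0, 1))
      - (l₁ x * f x * fderiv ℝ f x (1, 0) + l₂ x * f x * fderiv ℝ f x (0, 1)
        + l₁ x * h x * fderiv ℝ h x (1, 0) + l₂ x * h x * fderiv ℝ h x (0, 1))) = ∫ x, ‖u x‖ ^ 2 := by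
    rw [integral_sub k1 k4, integral_const_mul,
      integral_sub ia ib, integral_add k3 i4, integral_add k2 i3,
      integral_add i1 i2, eu, v1, v2, v3, v4, jz]
    ring
  rw [← eR]
  apply integral_mono
  · exact k1.sub k4
  · exact (continuous_magGradSq (by unfold A₀; fun_prop) hu).integrable_of_hasCompactSupport
      (hcs_of_notMem hc fun _ hx => magGradSq_of_notMem hx)
  · intro x
    dsimp only
    unfold magGradSq
    rw [← Complex.normSq_eq_norm_sq, ← Complex.normSq_eq_norm_sq, Complex.normSq_apply,
      Complex.normSq_apply]
    simp only [dre, dim]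
    simp only [A₀, l₁, l₂, hf, hh]
    simp
    set a := (fderiv ℝ u x (1, 0)).re
    set b := (fderiv ℝ u x (1, 0)).im
    set c := (fderiv ℝ u x (0, 1)).re
    set d := (fderiv ℝ u x (0, 1)).im
    set F := (u x).re
    set H := (u x).im
    nlinarith [sq_nonneg ((a - x.2 / 2 * H) - (d - x.1 / 2 * F)),
      sq_nonneg ((b + x.2 / 2 * F) + (c + x.1 / 2 * H))]

lemma Fsq_eq (b r : ℝ) (u : ℝ × ℝ → ℂ) : Fsq b r u = ∫ x in Qsq r, dens A₀ b 1 (1/2) u x := by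
  unfold Fsq dens
  congr 1; ext x; ring

lemma continuous_A₀ : Continuous A₀ := by unfold A₀; fun_prop

lemma mem_Qsq {r : ℝ} {x : ℝ × ℝ} : x ∈ Qsq r ↔ |x.1| < r/2 ∧ |x.2| < r/2 := by
  unfold Qsq
  rw [mem_prod, mem_Ioo, mem_Ioo, abs_lt, abs_lt, neg_div]

lemma isOpen_Qsq (r : ℝ) : IsOpen (Qsq r) := isOpen_Ioo.prod isOpen_Ioo

lemma isBounded_Qsq (r : ℝ) : Bornology.IsBounded (Qsq r) :=
  (Metric.isBounded_Ioo _ _).prod (Metric.isBounded_Ioo _ _)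

lemma volume_Qsq {r : ℝ} (hr : 0 ≤ r) : volume.real (Qsq r) = r ^ 2 := by
  unfold Qsq Measure.real
  rw [Measure.volume_eq_prod, Measure.prod_prod, Real.volume_Ioo, ← ENNReal.ofReal_mul (by linarith),
    ENNReal.toReal_ofReal (by nlinarith)]
  ring

lemma integrableOn_dens_bdd {U : Set (ℝ × ℝ)} (hUb : Bornology.IsBounded U)
    {A : ℝ × ℝ → ℝ × ℝ} (hA : Continuous A) {u : ℝ × ℝ → ℂ} (hu : ContDiff ℝ 1 u) (α μ ν : ℝ) :
    IntegrableOn (dens A α μ ν u) U :=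
  (((continuous_dens hA hu α μ ν).continuousOn).integrableOn_compact
    hUb.isCompact_closure).mono_set subset_closure

lemma Fsq_lower {b r : ℝ} (hb : 0 ≤ b) (hr : 0 ≤ r) {u : ℝ × ℝ → ℂ} (hu : ContDiff ℝ 1 u) :
    -(r ^ 2 / 2) ≤ Fsq b r u := by
  rw [Fsq_eq]
  have h1 : ∫ x in Qsq r, (-(1/2) : ℝ) = -(r ^ 2 / 2) := by
    rw [setIntegral_const, volume_Qsq hr]; simp; ring
  rw [← h1]
  apply setIntegral_mono
  · exact integrableOn_const (by
      exact (isBounded_Qsq r).measure_lt_top.ne)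
  · exact integrableOn_dens_bdd (isBounded_Qsq r) continuous_A₀ hu _ _ _
  · intro x
    unfold dens
    have := mul_nonneg hb (magGradSq_nonneg A₀ u x)
    dsimp only
    nlinarith [sq_nonneg (‖u x‖ ^ 2 - 1)]

lemma bddBelow_Fsq {b r : ℝ} (hb : 0 ≤ b) (hr : 0 ≤ r) :
    BddBelow (Fsq b r '' {u | MemH10sq r u}) := by
  refine ⟨-(r ^ 2 / 2), ?_⟩
  rintro _ ⟨u, hu, rfl⟩
  exact Fsq_lower hb hr hu.1

lemma Fsq_zero (b r : ℝ) : Fsq b r (fun _ => 0) = 0 := by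
  unfold Fsq magGradSq; simp

lemma memH10sq_zero (r : ℝ) : MemH10sq r (fun _ => 0) := ⟨contDiff_const, fun _ _ => rfl⟩

lemma nonempty_Fsq (b r : ℝ) : (Fsq b r '' {u | MemH10sq r u}).Nonempty :=
  ⟨_, _, memH10sq_zero r, rfl⟩

lemma eD_lower {b r : ℝ} (hb : 0 ≤ b) (hr : 0 ≤ r) : -(r ^ 2 / 2) ≤ eD b r := by
  apply le_csInf (nonempty_Fsq _ r)
  rintro _ ⟨u, hu, rfl⟩
  exact Fsq_lower hb hr hu.1

lemma eD_nonpos {b r : ℝ} (hb : 0 ≤ b) (hr : 0 ≤ r) : eD b r ≤ 0 :=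
  (csInf_le (bddBelow_Fsq hb hr) ⟨_, memH10sq_zero r, rfl⟩).trans (Fsq_zero b r).le

lemma eD_mono {b b' r : ℝ} (hb : 0 ≤ b) (hbb : b ≤ b') (hr : 0 ≤ r) : eD b r ≤ eD b' r := by
  apply le_csInf (nonempty_Fsq _ r)
  rintro _ ⟨u, hu, rfl⟩
  refine (csInf_le (bddBelow_Fsq hb hr) ⟨u, hu, rfl⟩).trans ?_
  rw [Fsq_eq, Fsq_eq]
  apply setIntegral_mono
  · exact integrableOn_dens_bdd (isBounded_Qsq r) continuous_A₀ hu.1 _ _ _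
  · exact integrableOn_dens_bdd (isBounded_Qsq r) continuous_A₀ hu.1 _ _ _
  · intro x
    unfold dens
    have := mul_le_mul_of_nonneg_right hbb (magGradSq_nonneg A₀ u x)
    dsimp only
    linarith

lemma eD_le_JJ {b r : ℝ} (hb : 0 ≤ b) (hr : 0 ≤ r) {u : ℝ × ℝ → ℂ} (hu : Adm (Qsq r) u) :
    eD b r ≤ JJ A₀ b 1 (1/2) u := by
  have hm : MemH10sq r u := by
    refine ⟨hu.1, fun x hx => ?_⟩
    by_contra h
    have h1 : x ∈ Qsq r := hu.2.2 (subset_tsupport _ h)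
    rw [(isOpen_Qsq r).frontier_eq] at hx
    exact hx.2 h1
  refine (csInf_le (bddBelow_Fsq hb hr) ⟨u, hm, rfl⟩).trans ?_
  rw [Fsq_eq, setIntegral_dens hu.2.2]

lemma exists_adm_eD {b r : ℝ} (hb : 0 ≤ b) {η : ℝ} (hη : 0 < η) :
    ∃ u, Adm (Qsq r) u ∧ JJ A₀ b 1 (1/2) u ≤ eD b r + η := by
  have hne := nonempty_Fsq b r
  obtain ⟨_, ⟨u, hu, rfl⟩, h2⟩ := exists_lt_of_csInf_lt hne
    (show eD b r < eD b r + η / 2 by linarith)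
  obtain ⟨v, hv, hv2⟩ := exists_adm_le (isOpen_Qsq r) (isBounded_Qsq r) continuous_A₀ hu.1 hu.2
    hb (zero_le_one) (by norm_num : (0:ℝ) ≤ 1/2) (half_pos hη)
  refine ⟨v, hv, ?_⟩
  rw [← Fsq_eq] at hv2
  linarith

/-- cell of side r centred at p -/
def cell (p : ℝ × ℝ) (r : ℝ) : Set (ℝ × ℝ) := {x | x - p ∈ Qsq r}

lemma mem_cell {p : ℝ × ℝ} {r : ℝ} {x : ℝ × ℝ} :
    x ∈ cell p r ↔ |x.1 - p.1| < r/2 ∧ |x.2 - p.2| < r/2 := by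
  unfold cell
  rw [mem_setOf, mem_Qsq]; rfl

lemma cell_disjoint {p q : ℝ × ℝ} {r : ℝ} (h : r ≤ |p.1 - q.1| ∨ r ≤ |p.2 - q.2|) :
    Disjoint (cell p r) (cell q r) := by
  rw [Set.disjoint_left]
  intro x hx hy
  rw [mem_cell] at hx hy
  rcases h with h | h
  · have := abs_sub_le p.1 x.1 q.1
    rw [abs_sub_comm p.1 x.1] at this
    linarith [hx.1, hy.1]
  · have := abs_sub_le p.2 x.2 q.2
    rw [abs_sub_comm p.2 x.2] at this
    linarith [hx.2, hy.2]

lemma nat_sep {r : ℝ} (hr : 0 ≤ r) {i j : ℕ} (h : i ≠ j) : r ≤ |((i:ℝ) - j) * r| := by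
  rw [abs_mul, abs_of_nonneg hr]
  have : (1:ℝ) ≤ |(i:ℝ) - j| := by
    have h2 : (1:ℤ) ≤ |(i:ℤ) - j| := Int.one_le_abs (by omega)
    exact_mod_cast h2
  nlinarith

lemma eD_subadd {b r : ℝ} (hb : 0 ≤ b) (hr : 0 < r) (n : ℕ) :
    eD b (n * r) ≤ (n:ℝ) ^ 2 * eD b r := by
  have hnr : 0 ≤ (n:ℝ) * r := by positivity
  by_contra hcon
  push Not at hcon
  have hn : 0 < n := by
    rcases Nat.eq_zero_or_pos n with h | h
    · subst h
      have := eD_nonpos hb (le_refl (0:ℝ))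
      simp at hcon; linarith
    · exact h
  have hnp : (0:ℝ) < (n:ℝ) ^ 2 := by positivity
  obtain ⟨u, hu, hu2⟩ := exists_adm_eD (b := b) (r := r) hb
    (η := (eD b (n * r) - (n:ℝ)^2 * eD b r) / (2 * (n:ℝ)^2)) (div_pos (by linarith) (by positivity))
  let c : ℕ → ℝ := fun i => ((i:ℝ) + 1/2) * r - n * r / 2
  let P : ℕ × ℕ → ℝ × ℝ := fun ij => (c ij.1, c ij.2)
  let w : ℕ × ℕ → ℝ × ℝ → ℂ := fun ij => trf 1 (P ij) 0 (-(P ij).2/2) ((P ij).1/2) u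
  have hw : ∀ ij, Adm (cell (P ij) r) (w ij) := by
    intro ij
    apply adm_trf one_pos _ _ _ _ hu
    intro x hx
    simpa [cell] using hx
  have hJ : ∀ ij, JJ A₀ b 1 (1/2) (w ij) = JJ A₀ b 1 (1/2) u := by
    intro ij
    have := JJ_trf one_pos (P ij) 0 (-(P ij).2/2) ((P ij).1/2) hu.1 A₀ A₀ (by
      intro x; ext <;> simp [A₀] <;> ring) b 1 (1/2)
    simpa using this
  have cd : ∀ i j : ℕ, c i - c j = ((i:ℝ) - j) * r := by intro i j; simp only [c]; ring
  obtain ⟨h1, h2⟩ := glue (Finset.range n ×ˢ Finset.range n) continuous_A₀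
    (fun ij => cell (P ij) r) w (fun ij _ => hw ij) (by
      intro i _ j _ hij
      apply cell_disjoint
      by_cases h : i.1 = j.1
      · right
        have : i.2 ≠ j.2 := fun h' => hij (Prod.ext h h')
        simp only [P, cd]
        exact nat_sep hr.le this
      · left
        simp only [P, cd]
        exact nat_sep hr.le h) (Qsq (n * r)) (by
      intro ij hij x hx
      rw [Finset.mem_product, Finset.mem_range, Finset.mem_range] at hij
      rw [mem_cell, abs_lt, abs_lt] at hx
      rw [mem_Qsq, abs_lt, abs_lt]
      have bd : ∀ i < n, r/2 - n * r / 2 ≤ c i ∧ c i ≤ n * r / 2 - r / 2 := by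
        intro i hi
        simp only [c]
        have : (i:ℝ) + 1 ≤ n := by exact_mod_cast hi
        have h0 : (0:ℝ) ≤ i := by positivity
        constructor <;> nlinarith
      have b1 := bd _ hij.1
      have b2 := bd _ hij.2
      simp only [P] at hx
      refine ⟨⟨?_, ?_⟩, ⟨?_, ?_⟩⟩ <;> linarith [hx.1.1, hx.1.2, hx.2.1, hx.2.2, b1.1, b1.2, b2.1, b2.2])
    b 1 (1/2)
  have h3 := eD_le_JJ hb hnr h1
  rw [h2] at h3
  simp only [hJ, Finset.sum_const, Finset.card_product, Finset.card_range, nsmul_eq_mul] at h3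
  push_cast at h3
  have h4 : (n:ℝ) ^ 2 * JJ A₀ b 1 (1/2) u ≤ (n:ℝ)^2 * eD b r +
      (eD b (n * r) - (n:ℝ)^2 * eD b r) / 2 := by
    have := mul_le_mul_of_nonneg_left hu2 hnp.le
    rw [mul_add] at this
    refine this.trans (le_of_eq ?_)
    field_simp
  nlinarith

section gfacts
variable {g : ℝ → ℝ}

lemma g_le_eD (hg : IsLimitG g) {b r : ℝ} (hb : 0 < b) (hr : 0 < r) : g b ≤ eD b r / r ^ 2 := by
  have h1 : Tendsto (fun n : ℕ => (n:ℝ) * r) atTop atTop :=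
    tendsto_natCast_atTop_atTop.atTop_mul_const hr
  have h2 := (hg b hb).comp h1
  apply le_of_tendsto h2
  filter_upwards [eventually_gt_atTop 0] with n hn
  simp only [Function.comp]
  have hn' : (0:ℝ) < n := by exact_mod_cast hn
  rw [div_le_div_iff₀ (by positivity) (by positivity)]
  have := eD_subadd hb.le hr n
  nlinarith [mul_le_mul_of_nonneg_right this (sq_nonneg r)]

lemma g_mono (hg : IsLimitG g) {b b' : ℝ} (hb : 0 < b) (h : b ≤ b') : g b ≤ g b' := by
  apply le_of_tendsto_of_tendsto (hg b hb) (hg b' (hb.trans_le h))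
  filter_upwards [eventually_gt_atTop 0] with r hr
  exact div_le_div_of_nonneg_right (eD_mono hb.le h hr.le) (sq_nonneg r)

lemma g_nonpos (hg : IsLimitG g) {b : ℝ} (hb : 0 < b) : g b ≤ 0 := by
  apply le_of_tendsto (hg b hb)
  filter_upwards [eventually_gt_atTop 0] with r hr
  exact div_nonpos_of_nonpos_of_nonneg (eD_nonpos hb.le hr.le) (sq_nonneg r)

lemma g_lower (hg : IsLimitG g) {b : ℝ} (hb : 0 < b) : -(1/2) ≤ g b := by
  apply ge_of_tendsto (hg b hb)
  filter_upwards [eventually_gt_atTop 0] with r hr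
  rw [le_div_iff₀ (by positivity)]
  have := eD_lower hb.le hr.le
  linarith

lemma eD_zero_of_one_le {b r : ℝ} (hb : 1 ≤ b) (hr : 0 ≤ r) : eD b r = 0 := by
  apply le_antisymm (eD_nonpos (by linarith) hr)
  apply le_of_forall_pos_le_add
  intro η hη
  obtain ⟨u, hu, hu2⟩ := exists_adm_eD (b := b) (r := r) (by linarith) hη
  refine le_trans ?_ hu2
  have hm := magnetic_bound hu.1 hu.2.1
  have i1 : Integrable (magGradSq A₀ u) :=
    (continuous_magGradSq continuous_A₀ hu.1).integrable_of_hasCompactSupport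
      (hcs_of_notMem hu.2.1 fun _ hx => magGradSq_of_notMem hx)
  have i2 : Integrable (fun x => ‖u x‖ ^ 2) := by
    have := hu.1.continuous
    exact Continuous.integrable_of_hasCompactSupport (by fun_prop)
      (hu.2.1.norm.comp_left (g := fun t : ℝ => t ^ 2) (by simp))
  have i3 : Integrable (fun x => magGradSq A₀ u x - ‖u x‖ ^ 2) := i1.sub i2
  have : 0 ≤ ∫ x, (magGradSq A₀ u x - ‖u x‖ ^ 2) := by
    rw [integral_sub i1 i2]; linarith
  refine this.trans ?_
  apply integral_mono i3 (integrable_dens continuous_A₀ hu.1 hu.2.1 _ _ _)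
  intro x
  unfold dens
  have := mul_le_mul_of_nonneg_right hb (magGradSq_nonneg A₀ u x)
  dsimp only
  nlinarith [sq_nonneg (‖u x‖ ^ 2)]

lemma g_zero (hg : IsLimitG g) {b : ℝ} (hb : 1 ≤ b) : g b = 0 := by
  have h := hg b (by linarith)
  refine tendsto_nhds_unique h ?_
  refine tendsto_const_nhds.congr' ?_
  filter_upwards [eventually_gt_atTop 0] with r hr
  rw [eD_zero_of_one_le hb hr.le, zero_div]

end gfacts

/-- Linear potential of constant field c. -/
def Alin (c a : ℝ) (x : ℝ × ℝ) : ℝ × ℝ := (-c * x.2 + a, 0)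

lemma continuous_Alin (c a : ℝ) : Continuous (Alin c a) := by unfold Alin; fun_prop

lemma JJ_smul (A : ℝ × ℝ → ℝ × ℝ) (α μ ν k : ℝ) (u : ℝ × ℝ → ℂ) :
    JJ A (k * α) (k * μ) (k * ν) u = k * JJ A α μ ν u := by
  unfold JJ
  rw [← integral_const_mul]
  congr 1; ext x; unfold dens; ring

/-- reduction of the nonlinearity -/
lemma JJ_normalize (A : ℝ × ℝ → ℝ × ℝ) {α μ ν : ℝ} (hμ : 0 < μ) (hν : 0 < ν) {u : ℝ × ℝ → ℂ}
    (hu : ContDiff ℝ 1 u) :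
    JJ A α μ ν (fun x => u x * ((√(μ / (2 * ν)) : ℝ) : ℂ)) =
      μ ^ 2 / (2 * ν) * JJ A (α / μ) 1 (1/2) u := by
  rw [JJ_const_mul A hu, Complex.norm_real, Real.norm_eq_abs, sq_abs, Real.sq_sqrt (by positivity)]
  have h1 : ν * (μ / (2 * ν)) = μ * (1/2) := by field_simp
  have h2 : α = μ * (α / μ) := by field_simp
  have h3 := JJ_smul A (α / μ) 1 (1/2) μ u
  rw [← h2, mul_one] at h3
  rw [h1, h3]
  field_simp

lemma cell_scale {c : ℝ} (hc : 0 < c) (p x : ℝ × ℝ) :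
    √c • (x - p) ∈ Qsq (√c) ↔ x ∈ cell p 1 := by
  have hs : 0 < √c := Real.sqrt_pos.mpr hc
  rw [mem_Qsq, mem_cell]
  simp only [Prod.smul_fst, Prod.smul_snd, Prod.fst_sub, Prod.snd_sub, smul_eq_mul, abs_mul,
    abs_of_pos hs]
  have : ∀ t : ℝ, √c * t < √c / 2 ↔ t < 1 / 2 := by
    intro t
    rw [show √c / 2 = √c * (1/2) by ring]
    exact mul_lt_mul_iff_right₀ hs
  rw [this, this]

lemma JJ_cell {c : ℝ} (hc : 0 < c) (a : ℝ) (p : ℝ × ℝ) {v : ℝ × ℝ → ℂ} (hv : ContDiff ℝ 1 v)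
    (α μ ν : ℝ) :
    JJ (Alin c a) α μ ν (trf (√c) p (-c/2) (a - c * p.2 / 2) (c * p.1 / 2) v) =
      c⁻¹ * JJ A₀ (c * α) μ ν v := by
  have hs : 0 < √c := Real.sqrt_pos.mpr hc
  have h2 : √c * √c = c := Real.mul_self_sqrt hc.le
  have := JJ_trf hs p (-c/2) (a - c * p.2 / 2) (c * p.1 / 2) hv A₀ (Alin c a) (by
    intro x
    unfold Alin A₀
    ext
    · simp only [Prod.smul_snd, Prod.snd_sub, smul_eq_mul]
      linear_combination (x.2 - p.2) / 2 * h2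
    · simp only [Prod.smul_fst, Prod.fst_sub, smul_eq_mul]
      linear_combination -(x.1 - p.1) / 2 * h2) α μ ν
  rw [this, Real.sq_sqrt hc.le]

lemma cell_upper_pos {c : ℝ} (hc : 0 < c) (a : ℝ) (p : ℝ × ℝ) {α μ ν : ℝ} (hα : 0 ≤ α)
    (hμ : 0 < μ) (hν : 0 < ν) {η : ℝ} (hη : 0 < η) :
    ∃ w, Adm (cell p 1) w ∧ JJ (Alin c a) α μ ν w ≤
      μ ^ 2 / (2 * ν) * (eD (c * α / μ) (√c) / c) + η := by
  have hk : 0 < μ ^ 2 / (2 * ν) := by positivity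
  obtain ⟨u, hu, hu2⟩ := exists_adm_eD (b := c * α / μ) (r := √c) (by positivity)
    (η := η * c / (μ ^ 2 / (2 * ν))) (by positivity)
  have hu' := adm_const_mul hu ((√(μ / (2 * ν)) : ℝ) : ℂ)
  refine ⟨_, adm_trf (Real.sqrt_pos.mpr hc) p (-c/2) (a - c * p.2 / 2) (c * p.1 / 2) hu'
    (fun x hx => (cell_scale hc p x).mp hx), ?_⟩
  rw [JJ_cell hc a p hu'.1, JJ_normalize A₀ hμ hν hu.1]
  calc c⁻¹ * (μ ^ 2 / (2 * ν) * JJ A₀ (c * α / μ) 1 (1/2) u)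
      ≤ c⁻¹ * (μ ^ 2 / (2 * ν) * (eD (c * α / μ) (√c) + η * c / (μ ^ 2 / (2 * ν)))) := by gcongr
    _ = _ := by field_simp

lemma cell_lower_pos {g : ℝ → ℝ} (hg : IsLimitG g) {c : ℝ} (hc : 0 < c) (a : ℝ) (p : ℝ × ℝ)
    {α μ ν : ℝ} (hα : 0 < α) (hμ : 0 < μ) (hν : 0 < ν) {w : ℝ × ℝ → ℂ} (hw : Adm (cell p 1) w) :
    μ ^ 2 / (2 * ν) * g (c * α / μ) ≤ JJ (Alin c a) α μ ν w := by
  have hs : 0 < √c := Real.sqrt_pos.mpr hc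
  obtain ⟨p', q', l₁', l₂', θ, hp', htt⟩ :=
    trf_trf hs p (-c/2) (a - c * p.2 / 2) (c * p.1 / 2) w
  set v := trf (√c)⁻¹ p' q' l₁' l₂' w with hv
  have hva : Adm (Qsq (√c)) v := by
    apply adm_trf (inv_pos.mpr hs) _ _ _ _ hw
    intro x hx
    rw [hp'] at hx
    rw [← cell_scale hc] at hx
    simpa [smul_smul, hs.ne'] using hx
  have h1 := JJ_cell hc a p hva.1 α μ ν
  have h2 : JJ (Alin c a) α μ ν w = c⁻¹ * JJ A₀ (c * α) μ ν v := by
    rw [← h1]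
    have : trf (√c) p (-c/2) (a - c * p.2 / 2) (c * p.1 / 2) v =
      fun x => w x * Complex.exp (Complex.I * θ) := by ext x; exact htt x
    rw [this, JJ_const_mul _ hw.1]
    have : ‖Complex.exp (Complex.I * θ)‖ = 1 := by
      rw [mul_comm]; exact Complex.norm_exp_ofReal_mul_I θ
    rw [this]; simp
  rw [h2]
  -- normalise v
  set k : ℝ := √(μ / (2 * ν)) with hk
  have hk0 : 0 < k := Real.sqrt_pos.mpr (by positivity)
  set v' : ℝ × ℝ → ℂ := fun x => v x * ((k⁻¹ : ℝ) : ℂ) with hv'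
  have hva' : Adm (Qsq (√c)) v' := adm_const_mul hva _
  have h3 : v = fun x => v' x * ((k : ℝ) : ℂ) := by
    ext x
    simp only [hv']
    rw [mul_assoc, ← Complex.ofReal_mul, inv_mul_cancel₀ hk0.ne']; simp
  rw [h3, JJ_normalize A₀ hμ hν hva'.1]
  have h4 := eD_le_JJ (b := c * α / μ) (by positivity) hs.le hva'
  have h5 := g_le_eD hg (b := c * α / μ) (by positivity) hs
  rw [Real.sq_sqrt hc.le] at h5
  have hkk : 0 < μ ^ 2 / (2 * ν) := by positivity
  calc μ ^ 2 / (2 * ν) * g (c * α / μ) ≤ μ ^ 2 / (2 * ν) * (JJ A₀ (c * α / μ) 1 (1 / 2) v' / c) := by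
        gcongr
        exact h5.trans (by gcongr)
    _ = _ := by field_simp

lemma neg_Alin (c a : ℝ) : (fun x => - Alin c a x) = Alin (-c) (-a) := by
  ext x <;> simp [Alin]; ring

lemma cell_upper {c : ℝ} (hc : c ≠ 0) (a : ℝ) (p : ℝ × ℝ) {α μ ν : ℝ} (hα : 0 ≤ α)
    (hμ : 0 < μ) (hν : 0 < ν) {η : ℝ} (hη : 0 < η) :
    ∃ w, Adm (cell p 1) w ∧ JJ (Alin c a) α μ ν w ≤
      μ ^ 2 / (2 * ν) * (eD (|c| * α / μ) (√|c|) / |c|) + η := by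
  rcases lt_or_gt_of_ne hc with h | h
  · obtain ⟨w, h1, h2⟩ := cell_upper_pos (neg_pos.mpr h) (-a) p hα hμ hν hη
    refine ⟨_, adm_conj h1, ?_⟩
    rw [JJ_conj _ h1.1, neg_Alin, abs_of_neg h]
    exact h2
  · rw [abs_of_pos h]; exact cell_upper_pos h a p hα hμ hν hη

lemma cell_lower {g : ℝ → ℝ} (hg : IsLimitG g) {c : ℝ} (hc : c ≠ 0) (a : ℝ) (p : ℝ × ℝ)
    {α μ ν : ℝ} (hα : 0 < α) (hμ : 0 < μ) (hν : 0 < ν) {w : ℝ × ℝ → ℂ} (hw : Adm (cell p 1) w) :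
    μ ^ 2 / (2 * ν) * g (|c| * α / μ) ≤ JJ (Alin c a) α μ ν w := by
  rcases lt_or_gt_of_ne hc with h | h
  · have h1 := adm_conj hw
    have h2 := cell_lower_pos hg (neg_pos.mpr h) (-a) p hα hμ hν h1
    rw [abs_of_neg h]
    refine h2.trans (le_of_eq ?_)
    rw [JJ_conj _ hw.1, neg_Alin, neg_neg, neg_neg]
  · rw [abs_of_pos h]; exact cell_lower_pos hg h a p hα hμ hν hw

/-- monotone extension of g -/
def gh (g : ℝ → ℝ) (t : ℝ) : ℝ := if 0 < t then g t else -(1/2)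

section
variable {g : ℝ → ℝ}
lemma gh_pos {t : ℝ} (ht : 0 < t) : gh g t = g t := by simp [gh, ht]

lemma gh_lower (hg : IsLimitG g) (t : ℝ) : -(1/2) ≤ gh g t := by
  unfold gh; split_ifs with h
  · exact g_lower hg h
  · exact le_refl _

lemma gh_nonpos (hg : IsLimitG g) (t : ℝ) : gh g t ≤ 0 := by
  unfold gh; split_ifs with h
  · exact g_nonpos hg h
  · norm_num

lemma gh_mono (hg : IsLimitG g) : Monotone (gh g) := by
  intro s t hst
  by_cases hs : 0 < s
  · rw [gh_pos hs, gh_pos (hs.trans_le hst)]; exact g_mono hg hs hst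
  · have : gh g s = -(1/2) := by simp [gh, hs]
    rw [this]; exact gh_lower hg t

lemma gh_zero (hg : IsLimitG g) {t : ℝ} (ht : 1 ≤ t) : gh g t = 0 := by
  rw [gh_pos (by linarith), g_zero hg ht]

lemma gh_abs_le (hg : IsLimitG g) (t : ℝ) : |gh g t| ≤ 1/2 := by
  rw [abs_le]; exact ⟨gh_lower hg t, (gh_nonpos hg t).trans (by norm_num)⟩

lemma measurable_gh (hg : IsLimitG g) : Measurable (gh g) := (gh_mono hg).measurable

lemma integrable_gh (hg : IsLimitG g) : Integrable (fun t => gh g |t|) := by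
  have h : (fun t => gh g |t|) = (Icc (-1:ℝ) 1).indicator (fun t => gh g |t|) := by
    ext t
    by_cases h : t ∈ Icc (-1:ℝ) 1
    · rw [indicator_of_mem h]
    · rw [indicator_of_notMem h]
      apply gh_zero hg
      by_contra h2
      push Not at h2
      exact h ⟨(abs_lt.mp h2).1.le, (abs_lt.mp h2).2.le⟩
  rw [h, integrable_indicator_iff measurableSet_Icc]
  refine Measure.integrableOn_of_bounded (M := 1/2) (by simp) ?_ ?_
  · exact ((measurable_gh hg).comp measurable_norm).aestronglyMeasurable
  · exact Eventually.of_forall fun t => gh_abs_le hg _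

/-- the total mass -/
def Gtot (g : ℝ → ℝ) : ℝ := ∫ t, gh g |t|

lemma Gtot_nonpos (hg : IsLimitG g) : Gtot g ≤ 0 :=
  integral_nonpos fun t => gh_nonpos hg _
end

lemma exists_bump {ε : ℝ} (hε : 0 < ε) : ∃ χ : ℝ × ℝ → ℝ, ContDiff ℝ 1 χ ∧ HasCompactSupport χ ∧
    tsupport χ ⊆ Qsq 1 ∧ (∀ x, 0 ≤ χ x) ∧ (∀ x, χ x ≤ 1) ∧ 1 / (1 + ε) ≤ ∫ x, χ x ^ 2 := by
  obtain ⟨ρ, hρ0, hρ1, hρ⟩ : ∃ ρ : ℝ, 0 < ρ ∧ ρ < 1/2 ∧ 1 / (1 + ε) ≤ (2 * ρ) ^ 2 := by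
    refine ⟨√(1/(1+ε)) / 2, by positivity, ?_, ?_⟩
    · have : √(1/(1+ε)) < 1 := by
        rw [Real.sqrt_lt' one_pos, div_lt_iff₀ (by linarith)]; linarith
      linarith
    · rw [show 2 * (√(1/(1+ε)) / 2) = √(1/(1+ε)) by ring, Real.sq_sqrt (by positivity)]
  let f : ContDiffBump (0 : ℝ × ℝ) := ⟨ρ, (ρ + 1/2) / 2, hρ0, by linarith⟩
  refine ⟨f, f.contDiff, f.hasCompactSupport, ?_, fun x => f.nonneg, fun x => f.le_one, ?_⟩
  · rw [f.tsupport_eq]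
    intro x hx
    rw [Metric.mem_closedBall, dist_zero_right, Prod.norm_def, max_le_iff] at hx
    rw [mem_Qsq]
    have : f.rOut = (ρ + 1/2)/2 := rfl
    rw [this] at hx
    simp only [Real.norm_eq_abs] at hx
    constructor <;> linarith [hx.1, hx.2]
  · refine hρ.trans ?_
    have i1 : Integrable (fun x => f x ^ 2) := by
      have := f.continuous
      exact Continuous.integrable_of_hasCompactSupport (by fun_prop)
        (f.hasCompactSupport.comp_left (g := fun t : ℝ => t ^ 2) (by simp))
    have h1 : ∫ x in Qsq (2 * ρ), (1:ℝ) ≤ ∫ x in Qsq (2 * ρ), f x ^ 2 := by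
      apply setIntegral_mono_on
      · exact integrableOn_const (isBounded_Qsq _).measure_lt_top.ne
      · exact i1.integrableOn
      · exact (isOpen_Qsq _).measurableSet
      · intro x hx
        rw [mem_Qsq] at hx
        rw [f.one_of_mem_closedBall]
        · norm_num
        · rw [Metric.mem_closedBall, dist_zero_right, Prod.norm_def, max_le_iff]
          simp only [Real.norm_eq_abs]
          have : f.rIn = ρ := rfl
          rw [this]
          constructor <;> linarith [hx.1, hx.2]
    rw [setIntegral_const, volume_Qsq (by positivity)] at h1
    simp only [smul_eq_mul, mul_one] at h1
    exact h1.trans (setIntegral_le_integral i1 (Eventually.of_forall fun x => sq_nonneg _))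

lemma conv_int {a h : ℝ × ℝ → ℝ} (ha : Integrable a) (hh : Integrable h) :
    Integrable (fun y => ∫ x, a (x - y) * h x) ∧
    ∫ y, ∫ x, a (x - y) * h x = (∫ x, a x) * ∫ x, h x := by
  have ha' : Integrable (fun x => a (-x)) := ha.comp_neg
  have e : (fun y => ∫ x, a (x - y) * h x) =
      convolution h (fun x => a (-x)) (ContinuousLinearMap.mul ℝ ℝ) volume := by
    ext y
    rw [convolution_def]
    congr 1; ext x
    simp only [ContinuousLinearMap.mul_apply', neg_sub]
    ring
  constructor
  · rw [e]; exact hh.integrable_convolution _ ha'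
  · rw [e, integral_convolution _ hh ha']
    simp only [ContinuousLinearMap.mul_apply']
    rw [integral_neg_eq_self a, mul_comm]

/-- localisation error density -/
def kloc (χ : ℝ × ℝ → ℝ) (z : ℝ × ℝ) : ℝ :=
  (fderiv ℝ χ z (1, 0)) ^ 2 + (fderiv ℝ χ z (0, 1)) ^ 2 + (z.2 ^ 2 / 2) ^ 2 * χ z ^ 2

lemma kloc_nonneg (χ : ℝ × ℝ → ℝ) (z) : 0 ≤ kloc χ z := by unfold kloc; positivity

lemma norm_add_sq_le_eps {ε : ℝ} (hε : 0 < ε) (a b : ℂ) :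
    ‖a + b‖ ^ 2 ≤ (1 + ε) * ‖a‖ ^ 2 + (1 + 1/ε) * ‖b‖ ^ 2 := by
  have h1 : ‖a + b‖ ^ 2 ≤ (‖a‖ + ‖b‖) ^ 2 := by gcongr; exact norm_add_le a b
  have h2 : 2 * ‖a‖ * ‖b‖ ≤ ε * ‖a‖ ^ 2 + 1/ε * ‖b‖ ^ 2 := by
    have : ε * ‖a‖ ^ 2 + 1/ε * ‖b‖ ^ 2 - 2 * ‖a‖ * ‖b‖ = (ε * ‖a‖ - ‖b‖) ^ 2 / ε := by
      field_simp; ring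
    have h3 : 0 ≤ (ε * ‖a‖ - ‖b‖) ^ 2 / ε := by positivity
    linarith
  nlinarith

lemma loc_est {χ : ℝ × ℝ → ℝ} (hχ : ContDiff ℝ 1 χ) {u : ℝ × ℝ → ℂ} (hu : ContDiff ℝ 1 u)
    {ε : ℝ} (hε : 0 < ε) (y x : ℝ × ℝ) :
    magGradSq (Alin y.2 (y.2 ^ 2 / 2)) (fun x => χ (x - y) • u x) x ≤
      (1 + ε) * (χ (x - y) ^ 2 * magGradSq Avan u x) + (1 + 1/ε) * (kloc χ (x - y) * ‖u x‖ ^ 2) := by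
  have hd : HasFDerivAt (fun x => χ (x - y) • u x)
      (χ (x - y) • fderiv ℝ u x + (fderiv ℝ χ (x - y)).smulRight (u x)) x := by
    have h1 : HasFDerivAt (fun x => χ (x - y)) (fderiv ℝ χ (x - y)) x := by
      have := ((hχ.differentiable (by norm_num)) (x - y)).hasFDerivAt.comp x
        ((hasFDerivAt_id x).sub_const y)
      rw [ContinuousLinearMap.comp_id] at this
      exact this
    exact h1.smul ((hu.differentiable (by norm_num)) x).hasFDerivAt
  unfold magGradSq
  rw [hd.fderiv]
  simp only [add_apply, smul_apply, ContinuousLinearMap.smulRight_apply, Complex.real_smul]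
  set X := χ (x - y)
  set d₁ := fderiv ℝ χ (x - y) (1, 0) with hd₁
  set d₂ := fderiv ℝ χ (x - y) (0, 1) with hd₂
  set U₁ := fderiv ℝ u x (1, 0)
  set U₂ := fderiv ℝ u x (0, 1)
  set v := u x
  have e1 : (X:ℂ) * U₁ + (d₁:ℂ) * v - Complex.I * ((Alin y.2 (y.2 ^ 2 / 2) x).1 : ℂ) * (X * v) =
      (X:ℂ) * (U₁ - Complex.I * ((Avan x).1 : ℂ) * v) +
        ((d₁:ℂ) + ((-((x.2 - y.2) ^ 2 / 2 * X) : ℝ) : ℂ) * Complex.I) * v := by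
    simp only [Alin, Avan]; push_cast; ring
  have e2 : (X:ℂ) * U₂ + (d₂:ℂ) * v - Complex.I * ((Alin y.2 (y.2 ^ 2 / 2) x).2 : ℂ) * (X * v) =
      (X:ℂ) * (U₂ - Complex.I * ((Avan x).2 : ℂ) * v) + (d₂:ℂ) * v := by
    simp only [Alin, Avan]; push_cast; ring
  rw [e1, e2]
  have f1 := norm_add_sq_le_eps hε ((X:ℂ) * (U₁ - Complex.I * ((Avan x).1 : ℂ) * v))
    (((d₁:ℂ) + ((-((x.2 - y.2) ^ 2 / 2 * X) : ℝ) : ℂ) * Complex.I) * v)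
  have f2 := norm_add_sq_le_eps hε ((X:ℂ) * (U₂ - Complex.I * ((Avan x).2 : ℂ) * v)) ((d₂:ℂ) * v)
  have n1 : ‖(d₁:ℂ) + ((-((x.2 - y.2) ^ 2 / 2 * X) : ℝ) : ℂ) * Complex.I‖ ^ 2 =
      d₁ ^ 2 + ((x.2 - y.2) ^ 2 / 2) ^ 2 * X ^ 2 := by
    rw [← Complex.normSq_eq_norm_sq, Complex.normSq_add_mul_I]; ring
  simp only [norm_mul, mul_pow, Complex.norm_real, Real.norm_eq_abs, sq_abs] at f1 f2
  rw [n1] at f1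
  have hk : kloc χ (x - y) = d₁ ^ 2 + d₂ ^ 2 + ((x.2 - y.2) ^ 2 / 2) ^ 2 * X ^ 2 := rfl
  rw [hk]
  refine (add_le_add f1 f2).trans (le_of_eq ?_)
  ring


lemma continuous_Avan : Continuous Avan := by unfold Avan; fun_prop

lemma mem_Strip {R : ℝ} {x : ℝ × ℝ} : x ∈ Strip R ↔ |x.1| < R/2 := by
  unfold Strip
  rw [mem_prod, mem_Ioo, abs_lt, neg_div]
  simp

lemma integrable_normpow {u : ℝ × ℝ → ℂ} (hu : Continuous u) (hc : HasCompactSupport u) {n : ℕ}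
    (hn : n ≠ 0) : Integrable (fun x => ‖u x‖ ^ n) :=
  Continuous.integrable_of_hasCompactSupport (by fun_prop)
    (hc.norm.comp_left (g := fun t : ℝ => t ^ n) (by simp [hn]))

lemma integrable_mg {A : ℝ × ℝ → ℝ × ℝ} (hA : Continuous A) {u : ℝ × ℝ → ℂ} (hu : ContDiff ℝ 1 u)
    (hc : HasCompactSupport u) : Integrable (magGradSq A u) :=
  (continuous_magGradSq hA hu).integrable_of_hasCompactSupport
      (hcs_of_notMem hc fun _ hx => magGradSq_of_notMem hx)

lemma JJ_split {A : ℝ × ℝ → ℝ × ℝ} (hA : Continuous A) {u : ℝ × ℝ → ℂ} (hu : ContDiff ℝ 1 u)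
    (hc : HasCompactSupport u) (α μ ν : ℝ) :
    JJ A α μ ν u = α * (∫ x, magGradSq A u x) - μ * (∫ x, ‖u x‖ ^ 2) + ν * ∫ x, ‖u x‖ ^ 4 := by
  have i1 : Integrable (fun x => α * magGradSq A u x) := (integrable_mg hA hu hc).const_mul α
  have i2 : Integrable (fun x => μ * ‖u x‖ ^ 2) :=
    (integrable_normpow hu.continuous hc two_ne_zero).const_mul μ
  have i3 : Integrable (fun x => ν * ‖u x‖ ^ 4) :=
    (integrable_normpow hu.continuous hc four_ne_zero).const_mul ν
  have i4 : Integrable (fun x => α * magGradSq A u x - μ * ‖u x‖ ^ 2) := i1.sub i2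
  unfold JJ dens
  rw [integral_add i4 i3, integral_sub i1 i2, integral_const_mul, integral_const_mul,
    integral_const_mul]

set_option maxHeartbeats 800000 in
lemma strip_lower {g : ℝ → ℝ} (hg : IsLimitG g) {ε : ℝ} (hε : 0 < ε) :
    ∃ C : ℝ, 0 ≤ C ∧ ∀ R lam : ℝ, 0 ≤ R → 0 < lam → ∀ u, Adm (Strip R) u →
      (R + 1) * ((1 + ε) ^ 2 * (lam + C) ^ 3 / lam) * Gtot g ≤ JJ Avan 1 lam (lam / 2) u := by
  obtain ⟨χ, hχ, hχc, hχs, hχ0, hχ1, hm⟩ := exists_bump hε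
  set m := ∫ x, χ x ^ 2 with hmdef
  have hm0 : 0 < m := lt_of_lt_of_le (by positivity) hm
  have cχ := hχ.continuous
  have cdχ : Continuous (fderiv ℝ χ) := hχ.continuous_fderiv (by norm_num)
  have iχ : Integrable (fun x => χ x ^ 2) := Continuous.integrable_of_hasCompactSupport (by fun_prop)
        (hχc.comp_left (g := fun t : ℝ => t ^ 2) (by simp))
  have ik : Integrable (kloc χ) := by
    unfold kloc
    refine ((Continuous.integrable_of_hasCompactSupport (by fun_prop)
        ((hχc.fderiv_apply ℝ (1,0)).comp_left (g := fun t : ℝ => t ^ 2) (by simp))).add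
      (Continuous.integrable_of_hasCompactSupport (by fun_prop)
        ((hχc.fderiv_apply ℝ (0,1)).comp_left (g := fun t : ℝ => t ^ 2) (by simp)))).add
      (Continuous.integrable_of_hasCompactSupport (by fun_prop)
        (HasCompactSupport.mul_left (hχc.comp_left (g := fun t : ℝ => t ^ 2) (by simp))))
  set K := ∫ x, kloc χ x with hK
  have hK0 : 0 ≤ K := integral_nonneg fun x => kloc_nonneg χ x
  refine ⟨K / (m * ε), by positivity, ?_⟩
  intro R lam hR hlam u hu
  set C := K / (m * ε) with hC
  have hC0 : 0 ≤ C := by positivity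
  have hεne : ε ≠ 0 := hε.ne'
  set μ := (1 + ε) * (lam + C) with hμ
  set ν := (1 + ε) * lam / 2 with hν
  have hμ0 : 0 < μ := by positivity
  have hν0 : 0 < ν := by positivity
  let b₁ : ℝ × ℝ → ℝ := dens Avan (1 + ε) μ ν u
  let b₂ : ℝ × ℝ → ℝ := fun x => (1 + 1/ε) * ‖u x‖ ^ 2
  have ib₁ : Integrable b₁ := integrable_dens continuous_Avan hu.1 hu.2.1 _ _ _
  have ib₂ : Integrable b₂ := (integrable_normpow hu.1.continuous hu.2.1 two_ne_zero).const_mul _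
  obtain ⟨c1, c2⟩ := conv_int iχ ib₁
  obtain ⟨c3, c4⟩ := conv_int ik ib₂
  let Φ : ℝ × ℝ → ℝ := fun y => (∫ x, χ (x - y) ^ 2 * b₁ x) + ∫ x, kloc χ (x - y) * b₂ x
  have iΦ : Integrable Φ := c1.add c3
  have eΦ : ∫ y, Φ y = m * (1 + ε) * JJ Avan 1 lam (lam / 2) u := by
    have : ∫ y, Φ y = m * JJ Avan (1 + ε) μ ν u + K * ∫ x, b₂ x := by
      simp only [Φ]
      rw [integral_add c1 c3, c2, c4]
      rfl
    rw [this, JJ_split continuous_Avan hu.1 hu.2.1, JJ_split continuous_Avan hu.1 hu.2.1]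
    simp only [b₂]
    rw [integral_const_mul, hμ, hν, hC]
    field_simp
    ring
  -- pointwise lower bound
  let S : Set ℝ := Ioo (-(R+1)/2) ((R+1)/2)
  let Ψ : ℝ × ℝ → ℝ := fun y => S.indicator (fun _ => μ ^ 2 / (2 * ν)) y.1 * gh g |y.2 / μ|
  have hw : ∀ y, Adm (cell y 1) (fun x => χ (x - y) • u x) ∧
      JJ (Alin y.2 (y.2 ^ 2 / 2)) 1 μ ν (fun x => χ (x - y) • u x) ≤ Φ y := by
    intro y
    have ht : tsupport (fun x => χ (x - y) • u x) ⊆ (fun x => x - y) ⁻¹' tsupport χ := by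
      apply closure_minimal
      · intro x hx
        have : χ (x - y) ≠ 0 := fun h => hx (by simp [h])
        exact subset_tsupport _ this
      · exact (isClosed_tsupport χ).preimage (by fun_prop)
    have hcd : ContDiff ℝ 1 (fun x => χ (x - y) • u x) :=
      (hχ.comp (contDiff_id.sub contDiff_const)).smul hu.1
    have hcs : HasCompactSupport (fun x => χ (x - y) • u x) := by
      apply hu.2.1.mono
      intro x hx h
      exact hx (by simp [h])
    refine ⟨⟨hcd, hcs, fun x hx => hχs (ht hx)⟩, ?_⟩
    have j1 : Integrable (fun x => χ (x - y) ^ 2 * b₁ x) :=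
      integrable_mul_cs (by fun_prop) (continuous_dens continuous_Avan hu.1 _ _ _)
        (hcs_of_notMem hu.2.1 fun _ hx => dens_of_notMem hx)
    have j2 : Integrable (fun x => kloc χ (x - y) * b₂ x) := by
      have := hu.1.continuous
      refine integrable_mul_cs (by unfold kloc; fun_prop) (by simp only [b₂]; fun_prop) ?_
      exact hu.2.1.norm.comp_left (g := fun t : ℝ => (1 + 1/ε) * t ^ 2) (by simp)
    simp only [Φ]
    rw [← integral_add j1 j2]
    apply integral_mono (integrable_dens (continuous_Alin _ _) hcd hcs _ _ _) (j1.add j2)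
    intro x
    have := loc_est hχ hu.1 hε y x
    simp only [Pi.add_apply, b₁, b₂, dens]
    have n1 : ‖χ (x - y) • u x‖ = χ (x - y) * ‖u x‖ := by
      rw [norm_smul, Real.norm_eq_abs, abs_of_nonneg (hχ0 _)]
    rw [n1]
    have h4 : ν * (χ (x - y) * ‖u x‖) ^ 4 ≤ ν * (χ (x - y) ^ 2 * ‖u x‖ ^ 4) := by
      rw [mul_pow]
      have h5 := pow_le_pow_of_le_one (hχ0 (x - y)) (hχ1 (x - y)) (show 2 ≤ 4 by norm_num)
      exact mul_le_mul_of_nonneg_left (mul_le_mul_of_nonneg_right h5 (by positivity)) hν0.le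
    nlinarith
  have hΨ : Ψ ≤ᵐ[volume] Φ := by
    have hz : ∀ᵐ y : ℝ × ℝ, y.2 ≠ 0 := by
      have : (volume : Measure (ℝ × ℝ)) {y | y.2 = 0} = 0 := by
        have : {y : ℝ × ℝ | y.2 = 0} = univ ×ˢ {0} := by ext ⟨a, b⟩; simp
        rw [this, Measure.volume_eq_prod, Measure.prod_prod]; simp
      rw [ae_iff]
      simp only [ne_eq, not_not]
      exact this
    filter_upwards [hz] with y hy
    obtain ⟨h1, h2⟩ := hw y
    by_cases hS : y.1 ∈ S
    · refine le_trans ?_ h2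
      simp only [Ψ, indicator_of_mem hS]
      have := cell_lower hg hy (y.2 ^ 2 / 2) y one_pos hμ0 hν0 h1
      rw [abs_div, abs_of_pos hμ0, gh_pos (by positivity)]
      rwa [mul_one] at this
    · simp only [Ψ, indicator_of_notMem hS, zero_mul]
      have : (fun x => χ (x - y) • u x) = fun _ => 0 := by
        ext1 x
        by_contra h
        have hx1 : χ (x - y) ≠ 0 := fun h' => h (by simp [h'])
        have hx2 : u x ≠ 0 := fun h' => h (by simp [h'])
        have m1 := mem_Qsq.mp (hχs (subset_tsupport _ hx1))
        have m2 := mem_Strip.mp (hu.2.2 (subset_tsupport _ hx2))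
        apply hS
        have m3 := m1.1
        rw [abs_lt] at m2 m3
        simp only [Prod.fst_sub] at m3
        constructor <;> linarith [m2.1, m2.2, m3.1, m3.2]
      rw [this] at h2
      refine le_trans (le_of_eq ?_) h2
      unfold JJ dens magGradSq; simp
  have hfin := integral_mono_ae ?_ iΦ hΨ
  · rw [eΦ] at hfin
    have eΨ : ∫ y, Ψ y = (R + 1) * (μ ^ 2 / (2 * ν)) * (μ * Gtot g) := by
      simp only [Ψ]
      rw [Measure.volume_eq_prod, integral_prod_mul (fun s => S.indicator (fun _ => μ ^ 2 / (2 * ν)) s)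
        (fun t => gh g |t / μ|), integral_indicator measurableSet_Ioo, setIntegral_const,
        Measure.integral_comp_div (fun t => gh g |t|) μ, abs_of_pos hμ0]
      simp only [Measure.real, Real.volume_Ioo, S, smul_eq_mul]
      rw [ENNReal.toReal_ofReal (by linarith)]
      unfold Gtot; ring
    rw [eΨ] at hfin
    have hG := Gtot_nonpos hg
    have h5 : (R + 1) * (μ ^ 2 / (2 * ν)) * (μ * Gtot g) =
        (1 + ε) * ((R + 1) * ((1 + ε) * (lam + C) ^ 3 / lam) * Gtot g) := by
      rw [hμ, hν]; field_simp
    rw [h5] at hfin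
    have h6 : (R + 1) * ((1 + ε) * (lam + C) ^ 3 / lam) * Gtot g ≤ m * JJ Avan 1 lam (lam / 2) u := by
      have h0 : 0 < 1 + ε := by positivity
      apply le_of_mul_le_mul_left _ h0
      linarith
    have h7 : (R + 1) * ((1 + ε) ^ 2 * (lam + C) ^ 3 / lam) * Gtot g ≤
        ((R + 1) * ((1 + ε) * (lam + C) ^ 3 / lam) * Gtot g) / m := by
      rw [le_div_iff₀ hm0]
      have h8 : 1 ≤ (1 + ε) * m := by
        rw [div_le_iff₀ (by positivity)] at hm; linarith
      have h9 : (R + 1) * ((1 + ε) * (lam + C) ^ 3 / lam) * Gtot g ≤ 0 :=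
        mul_nonpos_of_nonneg_of_nonpos (by positivity) hG
      have h10 : (R + 1) * ((1 + ε) ^ 2 * (lam + C) ^ 3 / lam) * Gtot g * m =
        ((1 + ε) * m) * ((R + 1) * ((1 + ε) * (lam + C) ^ 3 / lam) * Gtot g) := by ring
      rw [h10]; nlinarith
    refine h7.trans ?_
    rw [div_le_iff₀ hm0]; linarith
  · simp only [Ψ]
    rw [Measure.volume_eq_prod]
    refine Integrable.mul_prod (f := fun s : ℝ => S.indicator (fun _ => μ ^ 2 / (2 * ν)) s)
      (g := fun t : ℝ => gh g |t / μ|) ?_ ?_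
    · rw [integrable_indicator_iff measurableSet_Ioo]
      exact integrableOn_const (by simp [S])
    · exact (integrable_gh hg).comp_div hμ0.ne'

lemma Estrip_eq (L R : ℝ) (u : ℝ × ℝ → ℂ) :
    Estrip L R u = ∫ x in Strip R, dens Avan 1 (L ^ (-(2:ℝ)/3)) (L ^ (-(2:ℝ)/3) / 2) u x := by
  unfold Estrip stripDensity dens
  congr 1; ext x; ring

lemma isOpen_Strip (R : ℝ) : IsOpen (Strip R) := isOpen_Ioo.prod isOpen_univ

lemma mg_smul_le {χ : ℝ × ℝ → ℝ} (hχ : ContDiff ℝ 1 χ) {u : ℝ × ℝ → ℂ} (hu : ContDiff ℝ 1 u)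
    (A : ℝ × ℝ → ℝ × ℝ) (x : ℝ × ℝ) :
    magGradSq A (fun x => χ x • u x) x ≤ 2 * (χ x ^ 2 * magGradSq A u x) +
      2 * (((fderiv ℝ χ x (1, 0)) ^ 2 + (fderiv ℝ χ x (0, 1)) ^ 2) * ‖u x‖ ^ 2) := by
  have hd : HasFDerivAt (fun x => χ x • u x)
      (χ x • fderiv ℝ u x + (fderiv ℝ χ x).smulRight (u x)) x :=
    ((hχ.differentiable (by norm_num)) x).hasFDerivAt.smul
      ((hu.differentiable (by norm_num)) x).hasFDerivAt
  unfold magGradSq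
  rw [hd.fderiv]
  simp only [add_apply, smul_apply, ContinuousLinearMap.smulRight_apply, Complex.real_smul]
  set X := χ x
  set d₁ := fderiv ℝ χ x (1, 0) with hd₁
  set d₂ := fderiv ℝ χ x (0, 1) with hd₂
  set U₁ := fderiv ℝ u x (1, 0)
  set U₂ := fderiv ℝ u x (0, 1)
  set v := u x
  have e1 : (X:ℂ) * U₁ + (d₁:ℂ) * v - Complex.I * ((A x).1 : ℂ) * (X * v) =
      (X:ℂ) * (U₁ - Complex.I * ((A x).1 : ℂ) * v) + (d₁:ℂ) * v := by ring
  have e2 : (X:ℂ) * U₂ + (d₂:ℂ) * v - Complex.I * ((A x).2 : ℂ) * (X * v) =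
      (X:ℂ) * (U₂ - Complex.I * ((A x).2 : ℂ) * v) + (d₂:ℂ) * v := by ring
  rw [e1, e2]
  have f1 := norm_add_sq_le_eps one_pos ((X:ℂ) * (U₁ - Complex.I * ((A x).1 : ℂ) * v)) ((d₁:ℂ) * v)
  have f2 := norm_add_sq_le_eps one_pos ((X:ℂ) * (U₂ - Complex.I * ((A x).2 : ℂ) * v)) ((d₂:ℂ) * v)
  simp only [norm_mul, mul_pow, Complex.norm_real, Real.norm_eq_abs, sq_abs] at f1 f2
  refine (add_le_add f1 f2).trans (le_of_eq ?_)
  ring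

lemma cutoff_family : ∃ (χ : ℕ → ℝ × ℝ → ℝ) (M : ℝ), (∀ n, ContDiff ℝ 1 (χ n)) ∧
    (∀ n x, 0 ≤ χ n x ∧ χ n x ≤ 1) ∧
    (∀ (n : ℕ) (x : ℝ × ℝ), |x.2| < n + 1 → χ n x = 1) ∧
    (∀ (n : ℕ) (x : ℝ × ℝ), 2 * ((n:ℝ) + 1) ≤ |x.2| → χ n x = 0) ∧
    (∀ n x, (fderiv ℝ (χ n) x (1, 0)) ^ 2 + (fderiv ℝ (χ n) x (0, 1)) ^ 2 ≤ M) := by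
  let f : ContDiffBump (0 : ℝ) := ⟨1, 2, one_pos, one_lt_two⟩
  have hf1 : ContDiff ℝ 1 f := f.contDiff
  obtain ⟨D, hD⟩ := (f.hasCompactSupport.fderiv ℝ).exists_bound_of_continuous
    (hf1.continuous_fderiv (by norm_num))
  let l : ℕ → (ℝ × ℝ →L[ℝ] ℝ) := fun n => ((n:ℝ) + 1)⁻¹ • ContinuousLinearMap.snd ℝ ℝ ℝ
  have hl : ∀ n x, l n x = x.2 / ((n:ℝ) + 1) := by
    intro n x; simp [l]; ring
  have hn : ∀ n : ℕ, (0:ℝ) < n + 1 := fun n => by positivity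
  have hd : ∀ n x, fderiv ℝ (fun x => f (l n x)) x = (fderiv ℝ f (l n x)).comp (l n) := by
    intro n x
    have : HasFDerivAt (fun x => f (l n x)) ((fderiv ℝ f (l n x)).comp (l n)) x :=
      ((hf1.differentiable (by norm_num)) _).hasFDerivAt.comp x (l n).hasFDerivAt
    exact this.fderiv
  refine ⟨fun n x => f (l n x), D ^ 2, fun n => hf1.comp (l n).contDiff,
    fun n x => ⟨f.nonneg, f.le_one⟩, ?_, ?_, ?_⟩
  · intro n x hx
    apply f.one_of_mem_closedBall
    rw [Metric.mem_closedBall, dist_zero_right, hl, Real.norm_eq_abs, abs_div, abs_of_pos (hn n),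
      div_le_iff₀ (hn n)]
    have : f.rIn = 1 := rfl
    rw [this]; linarith
  · intro n x hx
    apply f.zero_of_le_dist
    rw [dist_zero_right, hl, Real.norm_eq_abs, abs_div, abs_of_pos (hn n), le_div_iff₀ (hn n)]
    exact hx
  · intro n x
    rw [hd]
    have h1 : l n (1, 0) = 0 := by rw [hl]; simp
    have h2 : |l n (0, 1)| ≤ 1 := by
      rw [hl, abs_div, abs_of_pos (hn n)]
      simp only [abs_one]
      rw [div_le_one (hn n)]; linarith [(Nat.cast_nonneg n : (0:ℝ) ≤ n)]
    simp only [ContinuousLinearMap.comp_apply, h1, map_zero]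
    have h3 : |fderiv ℝ f (l n x) (l n (0, 1))| ≤ D := by
      have := (fderiv ℝ f (l n x)).le_opNorm (l n (0, 1))
      rw [Real.norm_eq_abs, Real.norm_eq_abs] at this
      have h4 := hD (l n x)
      have h5 := norm_nonneg (fderiv ℝ f (l n x))
      nlinarith [abs_nonneg (l n (0,1))]
    have := sq_le_sq' (by linarith [abs_nonneg (fderiv ℝ f (l n x) (l n (0, 1)))]) h3
    rw [sq_abs] at this
    nlinarith

lemma strip_dense {R : ℝ} {u : ℝ × ℝ → ℂ} (hu : MemH1mag0 R u) {lam : ℝ} (hlam : 0 < lam)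
    {η : ℝ} (hη : 0 < η) :
    ∃ v, Adm (Strip R) v ∧ JJ Avan 1 lam (lam / 2) v ≤
      (∫ x in Strip R, dens Avan 1 lam (lam / 2) u x) + η := by
  obtain ⟨uC, u2, uM, u4, u0⟩ := hu
  obtain ⟨χ, M, hχ, hχb, hχ1, hχ0, hχM⟩ := cutoff_family
  let w : ℕ → ℝ × ℝ → ℂ := fun n x => χ n x • u x
  have wC : ∀ n, ContDiff ℝ 1 (w n) := fun n => (hχ n).smul uC
  have hlim : Tendsto (fun n => ∫ x in Strip R, dens Avan 1 lam (lam / 2) (w n) x) atTop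
      (𝓝 (∫ x in Strip R, dens Avan 1 lam (lam / 2) u x)) := by
    apply tendsto_integral_of_dominated_convergence (fun x => 2 * magGradSq Avan u x +
      (2 * M + lam) * ‖u x‖ ^ 2 + lam / 2 * ‖u x‖ ^ 4)
    · intro n
      exact (continuous_dens continuous_Avan (wC n) _ _ _).aestronglyMeasurable
    · exact ((uM.const_mul 2).add (u2.const_mul _)).add (u4.const_mul _)
    · intro n
      refine Eventually.of_forall fun x => ?_
      have h1 := mg_smul_le (hχ n) uC Avan x
      have h2 := hχM n x
      obtain ⟨h3, h4⟩ := hχb n x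
      have h5 := magGradSq_nonneg Avan (w n) x
      have h6 := magGradSq_nonneg Avan u x
      have h7 : ‖w n x‖ ≤ ‖u x‖ := by
        simp only [w, norm_smul, Real.norm_eq_abs, abs_of_nonneg h3]
        nlinarith [norm_nonneg (u x)]
      have h8 : ‖w n x‖ ^ 2 ≤ ‖u x‖ ^ 2 := by gcongr
      have h9 : ‖w n x‖ ^ 4 ≤ ‖u x‖ ^ 4 := by gcongr
      have h10 : χ n x ^ 2 * magGradSq Avan u x ≤ magGradSq Avan u x := by
        have : χ n x ^ 2 ≤ 1 := by nlinarith
        nlinarith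
      have h11 : ((fderiv ℝ (χ n) x (1, 0)) ^ 2 + (fderiv ℝ (χ n) x (0, 1)) ^ 2) * ‖u x‖ ^ 2
        ≤ M * ‖u x‖ ^ 2 := by gcongr
      have h12 := mul_le_mul_of_nonneg_left h8 hlam.le
      have h13 := mul_le_mul_of_nonneg_left h9 hlam.le
      have h14 : 0 ≤ lam * ‖w n x‖ ^ 2 := by positivity
      have h15 : 0 ≤ lam * ‖w n x‖ ^ 4 := by positivity
      have h16 : magGradSq Avan (w n) x ≤ 2 * (χ n x ^ 2 * magGradSq Avan u x) +
        2 * (((fderiv ℝ (χ n) x (1, 0)) ^ 2 + (fderiv ℝ (χ n) x (0, 1)) ^ 2) * ‖u x‖ ^ 2) := h1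
      have h17 : 0 ≤ M * ‖u x‖ ^ 2 := le_trans (by positivity) h11
      have h18 : 0 ≤ lam * ‖u x‖ ^ 4 := by positivity
      rw [Real.norm_eq_abs, abs_le]
      unfold dens
      constructor <;> nlinarith
    · refine Eventually.of_forall fun x => ?_
      apply tendsto_const_nhds.congr'
      obtain ⟨N, hN⟩ := exists_nat_gt |x.2|
      filter_upwards [eventually_ge_atTop N] with n hn
      have hnN : (N:ℝ) ≤ n := by exact_mod_cast hn
      have hev : w n =ᶠ[𝓝 x] u := by
        have : {z : ℝ × ℝ | |z.2| < n + 1} ∈ 𝓝 x := by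
          apply IsOpen.mem_nhds
          · exact isOpen_lt (by fun_prop) continuous_const
          · show |x.2| < n + 1
            linarith
        filter_upwards [this] with z hz
        simp [w, hχ1 n z hz]
      unfold dens magGradSq
      rw [hev.fderiv_eq, hev.eq_of_nhds]
  obtain ⟨n, hn⟩ := (hlim.eventually (gt_mem_nhds
    (show _ < (∫ x in Strip R, dens Avan 1 lam (lam / 2) u x) + η / 2 by linarith))).exists
  let U : Set (ℝ × ℝ) := Ioo (-R/2) (R/2) ×ˢ Ioo (-(3 * ((n:ℝ)+1))) (3 * ((n:ℝ)+1))
  have hUo : IsOpen U := isOpen_Ioo.prod isOpen_Ioo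
  have hUb : Bornology.IsBounded U := (Metric.isBounded_Ioo _ _).prod (Metric.isBounded_Ioo _ _)
  have hUS : U ⊆ Strip R := prod_mono_right (subset_univ _)
  have hn1 : (0:ℝ) < n + 1 := by positivity
  have hw0 : ∀ x ∈ frontier U, w n x = 0 := by
    intro x hx
    rw [hUo.frontier_eq] at hx
    by_cases h : x ∈ Strip R
    · have : 2 * ((n:ℝ) + 1) ≤ |x.2| := by
        by_contra h2
        push Not at h2
        apply hx.2
        rw [abs_lt] at h2
        exact ⟨h.1, by constructor <;> linarith [h2.1, h2.2]⟩
      simp [w, hχ0 n x this]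
    · have : x ∈ frontier (Strip R) := by
        rw [(isOpen_Strip R).frontier_eq]
        exact ⟨closure_mono hUS hx.1, h⟩
      simp [w, u0 x this]
  obtain ⟨v, hv, hv2⟩ := exists_adm_le hUo hUb continuous_Avan (wC n) hw0 zero_le_one hlam.le
    (half_pos hlam).le (half_pos hη)
  refine ⟨v, ⟨hv.1, hv.2.1, hv.2.2.trans hUS⟩, hv2.trans ?_⟩
  have heq : ∫ x in U, dens Avan 1 lam (lam / 2) (w n) x =
      ∫ x in Strip R, dens Avan 1 lam (lam / 2) (w n) x := by
    symm
    apply setIntegral_eq_of_subset_of_forall_sdiff_eq_zero (isOpen_Strip R).measurableSet hUS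
    intro x hx
    apply dens_of_notMem
    intro hxt
    have hsub : tsupport (w n) ⊆ {z | |z.2| ≤ 2 * ((n:ℝ)+1)} := by
      apply closure_minimal
      · intro z hz
        by_contra h
        simp only [mem_setOf, not_le] at h
        exact hz (by simp [w, hχ0 n z h.le])
      · exact isClosed_le (by fun_prop) continuous_const
    have := hsub hxt
    simp only [mem_setOf, abs_le] at this
    exact hx.2 ⟨hx.1.1, by constructor <;> linarith [this.1, this.2]⟩
  rw [heq]; linarith

lemma lam_pos {L : ℝ} (hL : 0 < L) : 0 < L ^ (-(2:ℝ)/3) := Real.rpow_pos_of_pos hL _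

lemma memH1mag0_of_adm {R : ℝ} {u : ℝ × ℝ → ℂ} (hu : Adm (Strip R) u) : MemH1mag0 R u := by
  refine ⟨hu.1, (integrable_normpow hu.1.continuous hu.2.1 two_ne_zero).integrableOn,
    (integrable_mg continuous_Avan hu.1 hu.2.1).integrableOn,
    (integrable_normpow hu.1.continuous hu.2.1 four_ne_zero).integrableOn, fun x hx => ?_⟩
  by_contra h
  rw [(isOpen_Strip R).frontier_eq] at hx
  exact hx.2 (hu.2.2 (subset_tsupport _ h))

lemma memH1mag0_zero (R : ℝ) : MemH1mag0 R (fun _ => 0) := by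
  apply memH1mag0_of_adm
  refine ⟨contDiff_const, HasCompactSupport.zero, ?_⟩
  have : tsupport (fun _ : ℝ × ℝ => (0:ℂ)) = ∅ := by
    rw [tsupport_eq_empty_iff]; rfl
  rw [this]; exact empty_subset _

lemma nonempty_Estrip (L R : ℝ) : (Estrip L R '' {u | MemH1mag0 R u}).Nonempty :=
  ⟨_, _, memH1mag0_zero R, rfl⟩

lemma Estrip_lower {g : ℝ → ℝ} (hg : IsLimitG g) {ε : ℝ} (hε : 0 < ε) :
    ∃ C : ℝ, 0 ≤ C ∧ ∀ R L : ℝ, 0 ≤ R → 0 < L → ∀ u, MemH1mag0 R u →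
      (R + 1) * ((1 + ε) ^ 2 * (L ^ (-(2:ℝ)/3) + C) ^ 3 / L ^ (-(2:ℝ)/3)) * Gtot g ≤
        Estrip L R u := by
  obtain ⟨C, hC, h⟩ := strip_lower hg hε
  refine ⟨C, hC, fun R L hR hL u hu => ?_⟩
  apply le_of_forall_pos_le_add
  intro η hη
  obtain ⟨v, hv, hv2⟩ := strip_dense hu (lam_pos hL) hη
  rw [← Estrip_eq] at hv2
  exact (h R _ hR (lam_pos hL) v hv).trans hv2

lemma bddBelow_Estrip {g : ℝ → ℝ} (hg : IsLimitG g) {L R : ℝ} (hL : 0 < L) (hR : 0 ≤ R) :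
    BddBelow (Estrip L R '' {u | MemH1mag0 R u}) := by
  obtain ⟨C, hC, h⟩ := Estrip_lower hg one_pos
  refine ⟨(R + 1) * ((1 + 1) ^ 2 * (L ^ (-(2:ℝ)/3) + C) ^ 3 / L ^ (-(2:ℝ)/3)) * Gtot g, ?_⟩
  rintro _ ⟨u, hu, rfl⟩
  exact h R L hR hL u hu

lemma E_lower {g E : ℝ → ℝ} (hg : IsLimitG g) (hE : IsLimitE E) {ε : ℝ} (hε : 0 < ε) :
    ∃ C : ℝ, 0 ≤ C ∧ ∀ L : ℝ, 0 < L →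
      ((1 + ε) ^ 2 * (L ^ (-(2:ℝ)/3) + C) ^ 3 / L ^ (-(2:ℝ)/3)) * Gtot g ≤ E L := by
  obtain ⟨C, hC, h⟩ := Estrip_lower hg hε
  refine ⟨C, hC, fun L hL => ?_⟩
  set K := ((1 + ε) ^ 2 * (L ^ (-(2:ℝ)/3) + C) ^ 3 / L ^ (-(2:ℝ)/3)) * Gtot g with hK
  have h1 : Tendsto (fun R : ℝ => (1 + R⁻¹) * K) atTop (𝓝 ((1 + 0) * K)) :=
    (tendsto_const_nhds.add tendsto_inv_atTop_zero).mul_const K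
  rw [add_zero, one_mul] at h1
  apply le_of_tendsto_of_tendsto h1 (hE L hL)
  filter_upwards [eventually_gt_atTop 0] with R hR
  rw [le_div_iff₀ hR]
  apply le_csInf (nonempty_Estrip L R)
  rintro _ ⟨u, hu, rfl⟩
  refine le_trans (le_of_eq ?_) (h R L hR.le hL u hu)
  rw [hK]; field_simp

lemma mg_compare {w : ℝ × ℝ → ℂ} {ε : ℝ} (hε : 0 < ε) {p x : ℝ × ℝ} (hx : |x.2 - p.2| < 1/2) :
    magGradSq Avan w x ≤ (1 + ε) * magGradSq (Alin p.2 (p.2 ^ 2 / 2)) w x +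
      (1 + 1/ε) / 64 * ‖w x‖ ^ 2 := by
  unfold magGradSq
  set U₁ := fderiv ℝ w x (1, 0)
  set U₂ := fderiv ℝ w x (0, 1)
  set v := w x
  have e1 : U₁ - Complex.I * ((Avan x).1 : ℂ) * v =
      (U₁ - Complex.I * ((Alin p.2 (p.2 ^ 2 / 2) x).1 : ℂ) * v) +
        Complex.I * (((x.2 - p.2) ^ 2 / 2 : ℝ) : ℂ) * v := by
    simp only [Alin, Avan]; push_cast; ring
  have e2 : U₂ - Complex.I * ((Avan x).2 : ℂ) * v =
      (U₂ - Complex.I * ((Alin p.2 (p.2 ^ 2 / 2) x).2 : ℂ) * v) := by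
    simp only [Alin, Avan]
  rw [e1, e2]
  have f1 := norm_add_sq_le_eps hε (U₁ - Complex.I * ((Alin p.2 (p.2 ^ 2 / 2) x).1 : ℂ) * v)
    (Complex.I * (((x.2 - p.2) ^ 2 / 2 : ℝ) : ℂ) * v)
  have n1 : ‖Complex.I * (((x.2 - p.2) ^ 2 / 2 : ℝ) : ℂ) * v‖ ^ 2 =
      ((x.2 - p.2) ^ 2 / 2) ^ 2 * ‖v‖ ^ 2 := by
    rw [norm_mul, norm_mul, Complex.norm_I, Complex.norm_real, mul_pow, one_mul, Real.norm_eq_abs,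
      sq_abs]
  rw [n1] at f1
  have h1 : (x.2 - p.2) ^ 2 ≤ 1/4 := by
    have := sq_le_sq' (by linarith [abs_nonneg (x.2 - p.2)]) hx.le
    rw [sq_abs] at this; linarith
  have h2 : ((x.2 - p.2) ^ 2 / 2) ^ 2 ≤ 1/64 := by nlinarith [sq_nonneg (x.2 - p.2)]
  have h3 : (1 + 1/ε) * (((x.2 - p.2) ^ 2 / 2) ^ 2 * ‖v‖ ^ 2) ≤ (1 + 1/ε) * (1 / 64 * ‖v‖ ^ 2) := by
    gcongr
  have h4 := mul_nonneg hε.le (sq_nonneg ‖U₂ - Complex.I * ((Alin p.2 (p.2 ^ 2 / 2) x).2 : ℂ) * v‖)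
  linarith

lemma JJ_compare {w : ℝ × ℝ → ℂ} {ε : ℝ} (hε : 0 < ε) {p : ℝ × ℝ} (hw : Adm (cell p 1) w)
    (lam : ℝ) :
    JJ Avan 1 lam (lam / 2) w ≤
      JJ (Alin p.2 (p.2 ^ 2 / 2)) (1 + ε) (lam - (1 + 1/ε) / 64) (lam / 2) w := by
  apply integral_mono (integrable_dens continuous_Avan hw.1 hw.2.1 _ _ _)
    (integrable_dens (continuous_Alin _ _) hw.1 hw.2.1 _ _ _)
  intro x
  by_cases hx : x ∈ tsupport w
  · have h1 := mem_cell.mp (hw.2.2 hx)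
    have := mg_compare (w := w) hε (p := p) (x := x) (by linarith [h1.2])
    unfold dens
    dsimp only
    linarith
  · dsimp only
    rw [dens_of_notMem hx, dens_of_notMem hx]

/-- rescaled cell energy -/
def FM (M c : ℝ) : ℝ := eD (c / M) (√c) / c

lemma egs_le {g : ℝ → ℝ} (hg : IsLimitG g) {ε : ℝ} (hε : 0 < ε) {L : ℝ} (hL : 0 < L)
    (hlam : (1 + 1/ε) / 64 < L ^ (-(2:ℝ)/3)) (N K : ℕ) {η : ℝ} (hη : 0 < η) :
    egs L N ≤ N * ∑ j ∈ Finset.range (2 * K), ((L ^ (-(2:ℝ)/3) - (1 + 1/ε) / 64) ^ 2 /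
      L ^ (-(2:ℝ)/3) * FM ((L ^ (-(2:ℝ)/3) - (1 + 1/ε) / 64) / (1 + ε))
        |(j:ℝ) + 1/2 - K| + η) := by
  set lam := L ^ (-(2:ℝ)/3) with hlamdef
  have hlam0 : 0 < lam := lam_pos hL
  set mu := lam - (1 + 1/ε) / 64 with hmu
  have hmu0 : 0 < mu := by linarith
  let c : ℕ → ℝ := fun j => (j:ℝ) + 1/2 - K
  let d : ℕ → ℝ := fun i => (i:ℝ) + 1/2 - N / 2
  let P : ℕ × ℕ → ℝ × ℝ := fun ij => (d ij.1, c ij.2)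
  have hc : ∀ j, c j ≠ 0 := by
    intro j h
    have h1 : (2:ℝ) * j + 1 = 2 * K := by simp only [c] at h; linarith
    have h2 : 2 * j + 1 = 2 * K := by exact_mod_cast h1
    omega
  have hex : ∀ ij : ℕ × ℕ, ∃ w, Adm (cell (P ij) 1) w ∧
      JJ Avan 1 lam (lam / 2) w ≤ mu ^ 2 / lam * FM (mu / (1 + ε)) |c ij.2| + η := by
    intro ij
    obtain ⟨w, h1, h2⟩ := cell_upper (hc ij.2) ((c ij.2) ^ 2 / 2) (P ij) (α := 1 + ε) (μ := mu)
      (ν := lam / 2) (by positivity) hmu0 (by positivity) hη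
    refine ⟨w, h1, (JJ_compare hε h1 lam).trans (h2.trans (le_of_eq ?_))⟩
    unfold FM
    rw [show 2 * (lam / 2) = lam by ring, show |c ij.2| * (1 + ε) / mu = |c ij.2| / (mu / (1 + ε)) by
      field_simp]
  choose w hw1 hw2 using hex
  obtain ⟨h1, h2⟩ := glue (Finset.range N ×ˢ Finset.range (2 * K)) continuous_Avan
    (fun ij => cell (P ij) 1) w (fun ij _ => hw1 ij) (by
      intro i _ j _ hij
      apply cell_disjoint
      by_cases h : i.1 = j.1
      · right
        have : i.2 ≠ j.2 := fun h' => hij (Prod.ext h h')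
        have h3 := nat_sep zero_le_one this
        simp only [P, c]
        rwa [show (i.2:ℝ) + 1/2 - K - ((j.2:ℝ) + 1/2 - K) = ((i.2:ℝ) - j.2) * 1 by ring]
      · left
        have h3 := nat_sep zero_le_one h
        simp only [P, d]
        rwa [show (i.1:ℝ) + 1/2 - N/2 - ((j.1:ℝ) + 1/2 - N/2) = ((i.1:ℝ) - j.1) * 1 by ring])
    (Strip N) (by
      intro ij hij x hx
      rw [Finset.mem_product, Finset.mem_range, Finset.mem_range] at hij
      rw [mem_cell] at hx
      have hx1 := hx.1
      simp only [P, d] at hx1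
      rw [abs_lt] at hx1
      rw [mem_Strip, abs_lt]
      have a1 : (ij.1:ℝ) + 1 ≤ N := by exact_mod_cast hij.1
      have a2 : (0:ℝ) ≤ ij.1 := by positivity
      constructor <;> linarith [hx1.1, hx1.2]) 1 lam (lam / 2)
  have h3 : egs L N ≤ JJ Avan 1 lam (lam / 2)
      (fun x => ∑ i ∈ Finset.range N ×ˢ Finset.range (2 * K), w i x) := by
    refine (csInf_le (bddBelow_Estrip hg hL (Nat.cast_nonneg N))
      ⟨_, memH1mag0_of_adm h1, rfl⟩).trans ?_
    rw [Estrip_eq, setIntegral_dens h1.2.2]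
  rw [h2] at h3
  refine h3.trans ((Finset.sum_le_sum fun ij _ => hw2 ij).trans (le_of_eq ?_))
  rw [Finset.sum_product]
  simp only [Finset.sum_const, Finset.card_range, nsmul_eq_mul]
  rfl

lemma E_le_sum {g E : ℝ → ℝ} (hg : IsLimitG g) (hE : IsLimitE E) {ε : ℝ} (hε : 0 < ε) {L : ℝ}
    (hL : 0 < L) (hlam : (1 + 1/ε) / 64 < L ^ (-(2:ℝ)/3)) (K : ℕ) :
    E L ≤ (L ^ (-(2:ℝ)/3) - (1 + 1/ε) / 64) ^ 2 /
      L ^ (-(2:ℝ)/3) * ∑ j ∈ Finset.range (2 * K),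
        FM ((L ^ (-(2:ℝ)/3) - (1 + 1/ε) / 64) / (1 + ε)) |(j:ℝ) + 1/2 - K| := by
  apply le_of_forall_pos_le_add
  intro η hη
  have h1 := (hE L hL).comp tendsto_natCast_atTop_atTop
  apply le_of_tendsto h1
  filter_upwards [eventually_gt_atTop 0] with N hN
  have hN' : (0:ℝ) < N := by exact_mod_cast hN
  have h2 := egs_le hg hε hL hlam N K (η := η / (2 * K + 1)) (by positivity)
  simp only [Function.comp]
  rw [div_le_iff₀ hN', mul_comm]
  refine h2.trans ?_
  gcongr
  rw [Finset.sum_add_distrib, ← Finset.mul_sum]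
  gcongr
  simp only [Finset.sum_const, Finset.card_range, nsmul_eq_mul]
  push_cast
  rw [mul_div_assoc', div_le_iff₀ (by positivity)]
  nlinarith

lemma FM_nonpos {M c : ℝ} (hM : 0 < M) (hc : 0 ≤ c) : FM M c ≤ 0 :=
  div_nonpos_of_nonpos_of_nonneg (eD_nonpos (by positivity) (Real.sqrt_nonneg _)) hc

lemma FM_lower {M c : ℝ} (hM : 0 < M) (hc : 0 < c) : -(1/2) ≤ FM M c := by
  unfold FM
  rw [le_div_iff₀ hc]
  have := eD_lower (b := c / M) (r := √c) (by positivity) (Real.sqrt_nonneg _)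
  rw [Real.sq_sqrt hc.le] at this
  linarith

lemma FM_zero {M c : ℝ} (hM : 0 < M) (hc : M ≤ c) : FM M c = 0 := by
  unfold FM
  rw [eD_zero_of_one_le (by rwa [one_le_div hM]) (Real.sqrt_nonneg _), zero_div]

/-- step function -/
def PhiM (M s : ℝ) : ℝ := FM M |(⌊s⌋ : ℝ) + 1/2|

lemma floor_half_ne (n : ℤ) : 0 < |(n:ℝ) + 1/2| := by
  rw [abs_pos]
  intro h
  have h1 : (2:ℝ) * n + 1 = 0 := by linarith
  have h2 : 2 * n + 1 = 0 := by exact_mod_cast h1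
  omega

lemma measurable_PhiM (M : ℝ) : Measurable (PhiM M) := by
  have : PhiM M = (fun n : ℤ => FM M |(n:ℝ) + 1/2|) ∘ (fun s : ℝ => ⌊s⌋) := rfl
  rw [this]
  exact (Measurable.of_discrete).comp Int.measurable_floor

lemma PhiM_abs {M : ℝ} (hM : 0 < M) (s : ℝ) : |PhiM M s| ≤ 1/2 := by
  rw [abs_le]
  have := floor_half_ne ⌊s⌋
  exact ⟨FM_lower hM this, (FM_nonpos hM this.le).trans (by norm_num)⟩

lemma floor_half_close (s : ℝ) : |((⌊s⌋:ℝ) + 1/2) - s| ≤ 1/2 := by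
  have h1 := Int.floor_le s
  have h2 := Int.lt_floor_add_one s
  rw [abs_le]; constructor <;> linarith

lemma PhiM_zero {M : ℝ} (hM : 0 < M) {s : ℝ} (hs : M + 1/2 ≤ |s|) : PhiM M s = 0 := by
  apply FM_zero hM
  have := floor_half_close s
  have h2 := abs_sub_abs_le_abs_sub s ((⌊s⌋:ℝ) + 1/2)
  rw [abs_sub_comm] at h2
  linarith

lemma sum_eq_integral {M : ℝ} (hM : 0 < M) {K : ℕ} (hK : M + 1/2 ≤ K) :
    ∑ j ∈ Finset.range (2 * K), FM M |(j:ℝ) + 1/2 - K| = M * ∫ t, PhiM M (M * t) := by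
  have hintg : ∀ a b : ℝ, IntervalIntegrable (PhiM M) volume a b := by
    intro a b
    rw [intervalIntegrable_iff]
    exact Measure.integrableOn_of_bounded (M := 1/2) (by simp)
      (measurable_PhiM M).aestronglyMeasurable (Eventually.of_forall fun t => PhiM_abs hM t)
  have h1 := intervalIntegral.sum_integral_adjacent_intervals (f := PhiM M) (μ := volume)
    (a := fun j : ℕ => (j:ℝ) - K) (n := 2 * K) (fun k _ => hintg _ _)
  have h2 : ∀ j : ℕ, ∫ s in ((j:ℝ) - K)..(((j + 1 : ℕ):ℝ) - K), PhiM M s =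
      FM M |(j:ℝ) + 1/2 - K| := by
    intro j
    have h3 : ∫ s in ((j:ℝ) - K)..(((j + 1 : ℕ):ℝ) - K), PhiM M s =
        ∫ s in ((j:ℝ) - K)..(((j + 1 : ℕ):ℝ) - K), FM M |(j:ℝ) + 1/2 - K| := by
      have hle : ((j:ℝ) - K) ≤ (((j + 1 : ℕ):ℝ) - K) := by push_cast; linarith
      rw [intervalIntegral.integral_of_le hle, intervalIntegral.integral_of_le hle,
        integral_Ioc_eq_integral_Ioo, integral_Ioc_eq_integral_Ioo]
      apply setIntegral_congr_fun measurableSet_Ioo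
      intro s hs
      have : ⌊s⌋ = (j:ℤ) - K := by
        rw [Int.floor_eq_iff]
        push_cast
        push_cast at hs
        exact ⟨hs.1.le, by linarith [hs.2]⟩
      simp only [PhiM, this]
      push_cast
      congr 2; ring
    rw [h3, intervalIntegral.integral_const]
    push_cast
    simp
  simp_rw [h2] at h1
  rw [h1, Measure.integral_comp_mul_left, abs_of_pos (inv_pos.mpr hM), smul_eq_mul, ← mul_assoc,
    mul_inv_cancel₀ hM.ne', one_mul, intervalIntegral.integral_of_le (by push_cast; linarith)]
  apply setIntegral_eq_integral_of_forall_compl_eq_zero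
  intro s hs
  apply PhiM_zero hM
  by_contra h
  push Not at h
  apply hs
  rw [abs_lt] at h
  push_cast
  constructor <;> linarith [h.1, h.2]

lemma cM_div_tendsto (t : ℝ) :
    Tendsto (fun M : ℝ => |((⌊M * t⌋ : ℤ):ℝ) + 1/2| / M) atTop (𝓝 |t|) := by
  rw [tendsto_iff_norm_sub_tendsto_zero]
  have h : Tendsto (fun M : ℝ => (1/2) * M⁻¹) atTop (𝓝 ((1/2) * 0)) :=
    tendsto_inv_atTop_zero.const_mul _
  rw [mul_zero] at h
  refine squeeze_zero' (Eventually.of_forall fun M => norm_nonneg _) ?_ h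
  filter_upwards [eventually_gt_atTop (0:ℝ)] with M hM
  have h1 := floor_half_close (M * t)
  have h2 := abs_abs_sub_abs_le_abs_sub (((⌊M * t⌋ : ℤ):ℝ) + 1/2) (M * t)
  rw [abs_mul, abs_of_pos hM] at h2
  have e : |((⌊M * t⌋ : ℤ):ℝ) + 1/2| / M - |t| =
      (|((⌊M * t⌋ : ℤ):ℝ) + 1/2| - M * |t|) * M⁻¹ := by field_simp
  rw [e, norm_mul, Real.norm_eq_abs, Real.norm_eq_abs, abs_of_pos (inv_pos.mpr hM)]
  exact mul_le_mul_of_nonneg_right (h2.trans h1) (inv_pos.mpr hM).le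

lemma cM_atTop {t : ℝ} (ht : t ≠ 0) :
    Tendsto (fun M : ℝ => |((⌊M * t⌋ : ℤ):ℝ) + 1/2|) atTop atTop := by
  have h := (cM_div_tendsto t).pos_mul_atTop (abs_pos.mpr ht) tendsto_id
  refine h.congr' ?_
  filter_upwards [eventually_gt_atTop (0:ℝ)] with M hM
  simp only [id]
  field_simp

lemma PhiM_tendsto {g : ℝ → ℝ} (hg : IsLimitG g) {t : ℝ} (ht : t ≠ 0)
    (hc : ContinuousAt (gh g) |t|) :
    Tendsto (fun M : ℝ => PhiM M (M * t)) atTop (𝓝 (gh g |t|)) := by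
  have h1 := cM_div_tendsto t
  have h2 := cM_atTop ht
  have h3 : Tendsto (fun M : ℝ => √|((⌊M * t⌋ : ℤ):ℝ) + 1/2|) atTop atTop :=
    Real.tendsto_sqrt_atTop.comp h2
  rw [tendsto_order]
  constructor
  · intro a ha
    have h4 := (hc.tendsto.comp h1).eventually (eventually_gt_nhds ha)
    filter_upwards [h4, eventually_gt_atTop (0:ℝ)] with M hM hM0
    have hp := floor_half_ne ⌊M * t⌋
    refine lt_of_lt_of_le hM ?_
    simp only [Function.comp]
    rw [gh_pos (by positivity)]
    have := g_le_eD hg (b := |((⌊M * t⌋ : ℤ):ℝ) + 1/2| / M) (by positivity)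
      (Real.sqrt_pos.mpr hp)
    rw [Real.sq_sqrt hp.le] at this
    exact this
  · intro a ha
    obtain ⟨t', ht', hta⟩ : ∃ t' : ℝ, |t| < t' ∧ gh g t' < a := by
      have h4 : ∀ᶠ s in 𝓝[>] |t|, gh g s < a :=
        (hc.tendsto.eventually (eventually_lt_nhds ha)).filter_mono nhdsWithin_le_nhds
      obtain ⟨s, hs1, hs2⟩ := (h4.and self_mem_nhdsWithin).exists
      exact ⟨s, hs2, hs1⟩
    have ht0 : 0 < t' := (abs_nonneg t).trans_lt ht'
    rw [gh_pos ht0] at hta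
    have h4 := ((hg t' ht0).comp h3).eventually (eventually_lt_nhds hta)
    have h5 := h1.eventually (eventually_lt_nhds ht')
    filter_upwards [h4, h5, eventually_gt_atTop (0:ℝ)] with M hM hM1 hM0
    have hp := floor_half_ne ⌊M * t⌋
    refine lt_of_le_of_lt ?_ hM
    simp only [Function.comp]
    rw [Real.sq_sqrt hp.le]
    exact div_le_div_of_nonneg_right (eD_mono (by positivity) hM1.le (Real.sqrt_nonneg _)) hp.le

lemma HM_tendsto {g : ℝ → ℝ} (hg : IsLimitG g) :
    Tendsto (fun M : ℝ => ∫ t, PhiM M (M * t)) atTop (𝓝 (Gtot g)) := by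
  apply tendsto_integral_filter_of_dominated_convergence
    ((Icc (-2:ℝ) 2).indicator fun _ => (1/2 : ℝ))
  · exact Eventually.of_forall fun M =>
      ((measurable_PhiM M).comp (measurable_const_mul M)).aestronglyMeasurable
  · filter_upwards [eventually_ge_atTop (1:ℝ)] with M hM
    refine Eventually.of_forall fun t => ?_
    have hM0 : 0 < M := by linarith
    by_cases h : t ∈ Icc (-2:ℝ) 2
    · rw [indicator_of_mem h]; exact PhiM_abs hM0 _
    · rw [indicator_of_notMem h, PhiM_zero hM0]; · simp
      have : 2 < |t| := by
        by_contra h'; push Not at h'; exact h (abs_le.mp h')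
      rw [abs_mul, abs_of_pos hM0]
      nlinarith
  · exact (integrable_indicator_iff measurableSet_Icc).mpr (by simp)
  · have hcount := (gh_mono hg).countable_not_continuousAt
    have hc2 : ({t : ℝ | ¬ ContinuousAt (gh g) |t|} ∪ {0}).Countable := by
      refine Countable.union ?_ (countable_singleton _)
      have : {t : ℝ | ¬ ContinuousAt (gh g) |t|} ⊆
          {x | ¬ ContinuousAt (gh g) x} ∪ (fun x => -x) '' {x | ¬ ContinuousAt (gh g) x} := by
        intro t ht
        rcases abs_choice t with h | h
        · left; rw [← h]; exact ht
        · right; exact ⟨|t|, ht, by simp only [h, neg_neg]⟩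
      exact (hcount.union (hcount.image _)).mono this
    have := hc2.ae_notMem volume
    filter_upwards [this] with t ht
    simp only [mem_union, mem_setOf_eq, mem_singleton_iff, not_or, not_not] at ht
    exact PhiM_tendsto hg ht.2 ht.1

lemma E_asymp {g E : ℝ → ℝ} (hg : IsLimitG g) (hE : IsLimitE E) :
    Tendsto (fun L : ℝ => L ^ ((4:ℝ)/3) * E L) (𝓝[>] 0) (𝓝 (Gtot g)) := by
  have hlam : Tendsto (fun L : ℝ => L ^ (-(2:ℝ)/3)) (𝓝[>] 0) atTop := 
    tendsto_rpow_neg_nhdsGT_zero (by norm_num)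
  have heq : ∀ L : ℝ, 0 < L → L ^ ((4:ℝ)/3) = ((L ^ (-(2:ℝ)/3)) ^ 2)⁻¹ := by
    intro L hL
    rw [← Real.rpow_natCast, ← Real.rpow_mul hL.le, ← Real.rpow_neg hL.le]
    norm_num
  have hinv := tendsto_inv_atTop_zero.comp hlam
  have heps : Tendsto (fun ε : ℝ => ε) (𝓝[>] 0) (𝓝 0) := tendsto_id.mono_left nhdsWithin_le_nhds
  rw [tendsto_order]
  constructor
  · intro a ha
    obtain ⟨ε, hε, hεa⟩ : ∃ ε : ℝ, 0 < ε ∧ a < (1 + ε) ^ 2 * Gtot g := by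
      have : Tendsto (fun ε : ℝ => (1 + ε) ^ 2 * Gtot g) (𝓝[>] 0) (𝓝 ((1 + 0) ^ 2 * Gtot g)) :=
        ((heps.const_add 1).pow 2).mul_const _
      rw [add_zero, one_pow, one_mul] at this
      obtain ⟨s, hs1, hs2⟩ := ((this.eventually (eventually_gt_nhds ha)).and self_mem_nhdsWithin).exists
      exact ⟨s, hs2, hs1⟩
    obtain ⟨C, hC, h⟩ := E_lower hg hE hε
    have h1 : Tendsto (fun L : ℝ => (1 + ε) ^ 2 * (1 + C * (L ^ (-(2:ℝ)/3))⁻¹) ^ 3 * Gtot g)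
        (𝓝[>] 0) (𝓝 ((1 + ε) ^ 2 * (1 + C * 0) ^ 3 * Gtot g)) :=
      ((((hinv.const_mul C).const_add 1).pow 3).const_mul _).mul_const _
    rw [mul_zero, add_zero, one_pow, mul_one] at h1
    filter_upwards [h1.eventually (eventually_gt_nhds hεa), self_mem_nhdsWithin] with L hL hL0
    refine hL.trans_le ?_
    have hl := lam_pos hL0
    rw [heq L hL0]
    have := h L hL0
    set l := L ^ (-(2:ℝ)/3)
    calc _ = (l ^ 2)⁻¹ * (((1 + ε) ^ 2 * (l + C) ^ 3 / l) * Gtot g) := by field_simp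
      _ ≤ _ := by gcongr
  · intro a ha
    obtain ⟨ε, hε, hεa⟩ : ∃ ε : ℝ, 0 < ε ∧ (1 / (1 + ε)) * Gtot g < a := by
      have : Tendsto (fun ε : ℝ => (1 / (1 + ε)) * Gtot g) (𝓝[>] 0) (𝓝 ((1 / (1 + 0)) * Gtot g)) :=
        (tendsto_const_nhds.div (heps.const_add 1) (by norm_num)).mul_const _
      rw [add_zero, one_div_one, one_mul] at this
      obtain ⟨s, hs1, hs2⟩ := ((this.eventually (eventually_lt_nhds ha)).and self_mem_nhdsWithin).exists
      exact ⟨s, hs2, hs1⟩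
    set C := (1 + 1/ε) / 64 with hC
    have hMt : Tendsto (fun L : ℝ => (L ^ (-(2:ℝ)/3) - C) / (1 + ε)) (𝓝[>] 0) atTop := by
      apply Tendsto.atTop_div_const (by positivity)
      exact tendsto_atTop_add_const_right _ (-C) hlam
    have h1 : Tendsto (fun L : ℝ => (1 / (1 + ε)) * (1 - C * (L ^ (-(2:ℝ)/3))⁻¹) ^ 3 *
        ∫ t, PhiM ((L ^ (-(2:ℝ)/3) - C) / (1 + ε)) ((L ^ (-(2:ℝ)/3) - C) / (1 + ε) * t))
        (𝓝[>] 0) (𝓝 ((1 / (1 + ε)) * (1 - C * 0) ^ 3 * Gtot g)) :=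
      ((((hinv.const_mul C).const_sub 1).pow 3).const_mul _).mul ((HM_tendsto hg).comp hMt)
    rw [mul_zero, sub_zero, one_pow, mul_one] at h1
    filter_upwards [h1.eventually (eventually_lt_nhds hεa), self_mem_nhdsWithin,
      hlam.eventually_gt_atTop C] with L hL hL0 hLC
    refine lt_of_le_of_lt ?_ hL
    have hl := lam_pos hL0
    rw [heq L hL0]
    have hM : 0 < (L ^ (-(2:ℝ)/3) - C) / (1 + ε) := div_pos (by linarith) (by positivity)
    obtain ⟨K, hK⟩ := exists_nat_ge ((L ^ (-(2:ℝ)/3) - C) / (1 + ε) + 1/2)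
    have := E_le_sum hg hE hε hL0 hLC K
    rw [sum_eq_integral hM hK] at this
    set l := L ^ (-(2:ℝ)/3)
    set H := ∫ t, PhiM ((l - C) / (1 + ε)) ((l - C) / (1 + ε) * t)
    calc _ ≤ (l ^ 2)⁻¹ * ((l - C) ^ 2 / l * ((l - C) / (1 + ε) * H)) := by gcongr
      _ = _ := by field_simp

lemma Estrip_decomp (L R : ℝ) {u : ℝ × ℝ → ℂ} (hu : MemH1mag0 R u) :
    Estrip L R u = (∫ x in Strip R, magGradSq Avan u x) + L ^ (-(2:ℝ)/3) *
      ∫ x in Strip R, (-‖u x‖ ^ 2 + 1/2 * ‖u x‖ ^ 4) := by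
  obtain ⟨_, h2, hm, h4, _⟩ := hu
  have hP : IntegrableOn (fun x => -‖u x‖ ^ 2 + 1/2 * ‖u x‖ ^ 4) (Strip R) :=
    h2.neg.add (h4.const_mul _)
  rw [← integral_const_mul, ← integral_add hm (hP.const_mul _)]
  unfold Estrip stripDensity
  congr 1; ext x; ring

lemma egs_mono {g : ℝ → ℝ} (hg : IsLimitG g) {L L' R : ℝ} (hL : 0 < L) (hLL : L ≤ L')
    (hR : 0 ≤ R) :
    (L ^ (-(2:ℝ)/3))⁻¹ * egs L R ≤ (L' ^ (-(2:ℝ)/3))⁻¹ * egs L' R := by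
  have hL' := hL.trans_le hLL
  have hl := lam_pos hL
  have hl' := lam_pos hL'
  have hle : L' ^ (-(2:ℝ)/3) ≤ L ^ (-(2:ℝ)/3) :=
    Real.rpow_le_rpow_of_nonpos hL hLL (by norm_num)
  have key : L' ^ (-(2:ℝ)/3) * ((L ^ (-(2:ℝ)/3))⁻¹ * egs L R) ≤ egs L' R := by
    apply le_csInf (nonempty_Estrip L' R)
    rintro _ ⟨u, hu, rfl⟩
    have h1 : egs L R ≤ Estrip L R u := csInf_le (bddBelow_Estrip hg hL hR) ⟨u, hu, rfl⟩
    rw [Estrip_decomp L R hu] at h1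
    rw [Estrip_decomp L' R hu]
    have hK : 0 ≤ ∫ x in Strip R, magGradSq Avan u x :=
      integral_nonneg fun x => by unfold magGradSq; positivity
    set K := ∫ x in Strip R, magGradSq Avan u x
    set P := ∫ x in Strip R, (-‖u x‖ ^ 2 + 1/2 * ‖u x‖ ^ 4)
    set l := L ^ (-(2:ℝ)/3)
    set l' := L' ^ (-(2:ℝ)/3)
    calc l' * (l⁻¹ * egs L R) ≤ l' * (l⁻¹ * (K + l * P)) := by gcongr
      _ = (l' / l) * K + l' * P := by field_simp
      _ ≤ 1 * K + l' * P := by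
        have : l' / l ≤ 1 := (div_le_one hl).mpr hle
        gcongr
      _ = _ := by ring
  rw [le_inv_mul_iff₀ hl']
  exact key

lemma E_meas {g E : ℝ → ℝ} (hg : IsLimitG g) (hE : IsLimitE E) :
    ∃ E' : ℝ → ℝ, Measurable E' ∧ ∀ L > 0, E L = E' L := by
  let Φ : ℝ → ℝ := fun s => ((rexp s) ^ (-(2:ℝ)/3))⁻¹ * E (rexp s)
  have hΦ : Monotone Φ := by
    intro s t hst
    have h1 := (hE _ (exp_pos s)).const_mul ((rexp s) ^ (-(2:ℝ)/3))⁻¹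
    have h2 := (hE _ (exp_pos t)).const_mul ((rexp t) ^ (-(2:ℝ)/3))⁻¹
    refine le_of_tendsto_of_tendsto h1 h2 ?_
    filter_upwards [eventually_gt_atTop (0:ℝ)] with R hR
    have := egs_mono hg (exp_pos s) (exp_le_exp.mpr hst) hR.le
    rw [← mul_div_assoc, ← mul_div_assoc]
    exact div_le_div_of_nonneg_right this hR.le
  refine ⟨fun L => L ^ (-(2:ℝ)/3) * Φ (Real.log L), ?_, ?_⟩
  · exact (measurable_id.pow_const _).mul (hΦ.measurable.comp Real.measurable_log)
  · intro L hL
    simp only [Φ, Real.exp_log hL]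
    have := (lam_pos hL).ne'
    field_simp

lemma scale_lim {g : ℝ → ℝ} (hg : IsLimitG g) {F : ℝ × ℝ → ℝ} (hF : Measurable F) {C R : ℝ}
    (hC : ∀ z, |F z| ≤ C) (hR : ∀ z, F z ≠ 0 → z.1 ∈ Icc (-R) R ∧ z.2 ∈ Icc (-R) R)
    (hcont : ∀ᵐ y : ℝ, Tendsto (fun s => F (y, s)) (𝓝 0) (𝓝 (F (y, 0)))) :
    Tendsto (fun t : ℝ => t * ∫ z, F z * gh g (t * |z.2|)) atTop
      (𝓝 (Gtot g * ∫ y, F (y, 0))) := by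
  have hC0 : 0 ≤ C := (abs_nonneg _).trans (hC 0)
  have hintg : ∀ t : ℝ, Integrable (fun z : ℝ × ℝ => F z * gh g (t * |z.2|)) := by
    intro t
    have hm : Measurable (fun z : ℝ × ℝ => F z * gh g (t * |z.2|)) :=
      hF.mul ((measurable_gh hg).comp (measurable_const.mul measurable_snd.abs))
    have hs : MeasurableSet (Icc (-R) R ×ˢ Icc (-R) R) := measurableSet_Icc.prod measurableSet_Icc
    have : IntegrableOn (fun z : ℝ × ℝ => F z * gh g (t * |z.2|)) (Icc (-R) R ×ˢ Icc (-R) R) := by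
      refine Measure.integrableOn_of_bounded (M := C * (1/2)) ?_ hm.aestronglyMeasurable ?_
      · exact (isCompact_Icc.prod isCompact_Icc).measure_lt_top.ne
      · refine Eventually.of_forall fun z => ?_
        rw [norm_mul]
        exact mul_le_mul (hC z) (gh_abs_le hg _) (norm_nonneg _) hC0
    rw [← integrableOn_univ]
    refine this.of_forall_sdiff_eq_zero MeasurableSet.univ ?_
    intro z hz
    have : F z = 0 := by
      by_contra h
      exact hz.2 (hR z h)
    rw [this, zero_mul]
  have e1 : ∀ t : ℝ, 0 < t → t * ∫ z, F z * gh g (t * |z.2|) =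
      ∫ y, ∫ σ, F (y, σ / t) * gh g |σ| := by
    intro t ht
    rw [Measure.volume_eq_prod, integral_prod _ (by rw [← Measure.volume_eq_prod]; exact hintg t),
      ← integral_const_mul]
    congr 1; ext y
    have := Measure.integral_comp_mul_left (fun σ => F (y, σ / t) * gh g |σ|) t
    rw [abs_of_pos (inv_pos.mpr ht), smul_eq_mul] at this
    have e2 : (fun s => F (y, t * s / t) * gh g |t * s|) = fun s => F (y, s) * gh g (t * |s|) := by
      ext s
      rw [mul_div_cancel_left₀ _ ht.ne', abs_mul, abs_of_pos ht]
    rw [e2] at this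
    rw [this, ← mul_assoc, mul_inv_cancel₀ ht.ne', one_mul]
  have e3 : Gtot g * ∫ y, F (y, 0) = ∫ y, F (y, 0) * Gtot g := by
    rw [integral_mul_const, mul_comm]
  rw [e3]
  have hgi := integrable_gh hg
  have key : Tendsto (fun t : ℝ => ∫ y, ∫ σ, F (y, σ / t) * gh g |σ|) atTop
      (𝓝 (∫ y, F (y, 0) * Gtot g)) := by
    apply tendsto_integral_filter_of_dominated_convergence
      ((Icc (-R) R).indicator fun _ => C * ∫ σ, ‖gh g |σ|‖)
    · refine Eventually.of_forall fun t => ?_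
      have hm : Measurable (fun z : ℝ × ℝ => F (z.1, z.2 / t) * gh g |z.2|) :=
        (hF.comp (measurable_fst.prodMk (measurable_snd.div_const t))).mul
          ((measurable_gh hg).comp measurable_snd.abs)
      exact (hm.stronglyMeasurable.integral_prod_right').aestronglyMeasurable
    · refine Eventually.of_forall fun t => Eventually.of_forall fun y => ?_
      by_cases hy : y ∈ Icc (-R) R
      · rw [indicator_of_mem hy, ← integral_const_mul]
        refine norm_integral_le_of_norm_le (hgi.norm.const_mul C) (Eventually.of_forall fun σ => ?_)
        rw [norm_mul]
        exact mul_le_mul_of_nonneg_right (hC _) (norm_nonneg _)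
      · rw [indicator_of_notMem hy]
        have : ∀ s, F (y, s) = 0 := by
          intro s; by_contra h; exact hy (hR _ h).1
        simp [this]
    · exact (integrable_indicator_iff measurableSet_Icc).mpr (integrableOn_const (by simp))
    · filter_upwards [hcont] with y hy
      rw [Gtot, ← integral_const_mul]
      apply tendsto_integral_filter_of_dominated_convergence (fun σ => C * ‖gh g |σ|‖)
      · refine Eventually.of_forall fun t => Measurable.aestronglyMeasurable ?_
        exact (hF.comp (measurable_const.prodMk (measurable_id.div_const t))).mul
          ((measurable_gh hg).comp measurable_id.abs)
      · refine Eventually.of_forall fun t => Eventually.of_forall fun σ => ?_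
        rw [norm_mul]
        exact mul_le_mul_of_nonneg_right (hC _) (norm_nonneg _)
      · exact hgi.norm.const_mul C
      · refine Eventually.of_forall fun σ => ?_
        apply Tendsto.mul_const
        exact hy.comp (tendsto_const_nhds.div_atTop tendsto_id)
  refine key.congr' ?_
  filter_upwards [eventually_gt_atTop (0:ℝ)] with t ht
  exact (e1 t ht).symm

/-- The graph curve of `h` in the orthonormal frame `T`. -/
def crv (T : (ℝ × ℝ) ≃L[ℝ] E2) (h : ℝ → ℝ) (y : ℝ) : E2 := T (y, h y)

/-- First coordinate in the frame `T`. -/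
def pr1 (T : (ℝ × ℝ) ≃L[ℝ] E2) (x : E2) : ℝ := (T.symm x).1

lemma pr1_crv (T : (ℝ × ℝ) ≃L[ℝ] E2) (h : ℝ → ℝ) (y : ℝ) : pr1 T (crv T h y) = y := by
  simp [pr1, crv]

lemma continuous_pr1 (T : (ℝ × ℝ) ≃L[ℝ] E2) : Continuous (pr1 T) :=
  continuous_fst.comp T.symm.continuous

section

lemma curve_est {T : (ℝ × ℝ) ≃L[ℝ] E2}
    (hT : ∀ p, ‖T p‖ = √(p.1 ^ 2 + p.2 ^ 2)) {h : ℝ → ℝ} {m δ : ℝ} {s : Set ℝ} (hs : Convex ℝ s)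
    (hd : ∀ y ∈ s, DifferentiableAt ℝ h y) (hm : ∀ y ∈ s, |deriv h y - m| ≤ δ)
    {y z : ℝ} (hy : y ∈ s) (hz : z ∈ s) :
    abs (‖crv T h y - crv T h z‖ - √(1 + m ^ 2) * |y - z|) ≤ δ * |y - z| := by
  have h1 : |(h y - m * y) - (h z - m * z)| ≤ δ * |y - z| := by
    refine Convex.norm_image_sub_le_of_norm_deriv_le (f := fun y => h y - m * y) (s := s)
      (fun x hx => (hd x hx).sub (by fun_prop)) ?_ hs hz hy
    intro x hx
    have : deriv (fun y => h y - m * y) x = deriv h x - m := by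
      have h0 : HasDerivAt (fun y => h y - m * y) (deriv h x - m * 1) x :=
        (hd x hx).hasDerivAt.sub ((hasDerivAt_id x).const_mul m)
      rw [h0.deriv, mul_one]
    rw [this]; exact hm x hx
  have h2 : ‖T (y - z, m * (y - z))‖ = √(1 + m ^ 2) * |y - z| := by
    rw [hT, ← Real.sqrt_sq_eq_abs, ← Real.sqrt_mul (by positivity)]
    congr 1; ring
  rw [← h2]
  refine (abs_norm_sub_norm_le _ _).trans ?_
  have h3 : crv T h y - crv T h z - T (y - z, m * (y - z)) =
      T (0, (h y - m * y) - (h z - m * z)) := by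
    unfold crv
    rw [← map_sub, ← map_sub]
    congr 1
    ext
    · simp
    · simp; ring
  rw [h3, hT]
  simp only [ne_eq, OfNat.ofNat_ne_zero, not_false_eq_true, zero_pow, zero_add]
  rw [Real.sqrt_sq_eq_abs]
  exact h1

lemma curve_upper {T : (ℝ × ℝ) ≃L[ℝ] E2}
    (hT : ∀ p, ‖T p‖ = √(p.1 ^ 2 + p.2 ^ 2)) {h : ℝ → ℝ} {m δ : ℝ} {s : Set ℝ} (hs : Convex ℝ s)
    (hd : ∀ y ∈ s, DifferentiableAt ℝ h y) (hm : ∀ y ∈ s, |deriv h y - m| ≤ δ) :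
    μH[1] (crv T h '' s) ≤ ENNReal.ofReal (√(1 + m ^ 2) + δ) * volume s := by
  have hL : LipschitzOnWith (√(1 + m ^ 2) + δ).toNNReal (crv T h) s := by
    apply LipschitzOnWith.of_dist_le_mul
    intro y hy z hz
    rw [dist_eq_norm, dist_eq_norm, Real.norm_eq_abs]
    have h1 := (abs_le.mp (curve_est hT hs hd hm hy hz)).2
    have h2 := Real.le_coe_toNNReal (√(1 + m ^ 2) + δ)
    calc _ ≤ (√(1 + m ^ 2) + δ) * |y - z| := by linarith
      _ ≤ _ := by gcongr
  have := hL.hausdorffMeasure_image_le (d := 1) zero_le_one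
  rw [ENNReal.rpow_one, hausdorffMeasure_real] at this
  exact this

lemma curve_lower {T : (ℝ × ℝ) ≃L[ℝ] E2}
    (hT : ∀ p, ‖T p‖ = √(p.1 ^ 2 + p.2 ^ 2)) {h : ℝ → ℝ} {m δ : ℝ} {s : Set ℝ} (hs : Convex ℝ s)
    (hd : ∀ y ∈ s, DifferentiableAt ℝ h y) (hm : ∀ y ∈ s, |deriv h y - m| ≤ δ) :
    ENNReal.ofReal (√(1 + m ^ 2) - δ) * volume s ≤ μH[1] (crv T h '' s) := by
  rcases le_or_gt (√(1 + m ^ 2) - δ) 0 with h0 | h0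
  · rw [ENNReal.ofReal_of_nonpos h0, zero_mul]; exact zero_le
  have hL : LipschitzOnWith (√(1 + m ^ 2) - δ)⁻¹.toNNReal (pr1 T) (crv T h '' s) := by
    apply LipschitzOnWith.of_dist_le_mul
    rintro _ ⟨y, hy, rfl⟩ _ ⟨z, hz, rfl⟩
    rw [pr1_crv, pr1_crv, dist_eq_norm, dist_eq_norm, Real.norm_eq_abs,
      Real.coe_toNNReal _ (inv_pos.mpr h0).le, le_inv_mul_iff₀ h0]
    have h1 := (abs_le.mp (curve_est hT hs hd hm hy hz)).1
    linarith
  have := hL.hausdorffMeasure_image_le (d := 1) zero_le_one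
  have e : pr1 T '' (crv T h '' s) = s := by
    rw [image_image]; simp [pr1_crv]
  rw [ENNReal.rpow_one, hausdorffMeasure_real, e] at this
  calc _ ≤ ENNReal.ofReal (√(1 + m ^ 2) - δ) *
        (ENNReal.ofReal (√(1 + m ^ 2) - δ)⁻¹ * μH[1] (crv T h '' s)) := by
        gcongr; exact this
    _ = _ := by
        rw [← mul_assoc, ← ENNReal.ofReal_mul h0.le, mul_inv_cancel₀ h0.ne', ENNReal.ofReal_one,
          one_mul]

end

/-- Push-forward of the length measure of the curve to the parameter. -/
def nuc (T : (ℝ × ℝ) ≃L[ℝ] E2) (h : ℝ → ℝ) (a b : ℝ) : Measure ℝ :=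
  Measure.map (pr1 T) ((μH[1] : Measure E2).restrict (crv T h '' Ioc a b))

lemma nuc_apply (T : (ℝ × ℝ) ≃L[ℝ] E2) (h : ℝ → ℝ) (a b : ℝ) {A : Set ℝ} (hA : MeasurableSet A) :
    nuc T h a b A = μH[1] (crv T h '' (A ∩ Ioc a b)) := by
  unfold nuc
  rw [Measure.map_apply (continuous_pr1 T).measurable hA,
    Measure.restrict_apply ((continuous_pr1 T).measurable hA)]
  congr 1
  ext x
  constructor
  · rintro ⟨h1, y, hy, rfl⟩
    rw [mem_preimage, pr1_crv] at h1
    exact ⟨y, ⟨h1, hy⟩, rfl⟩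
  · rintro ⟨y, ⟨h1, h2⟩, rfl⟩
    refine ⟨?_, y, h2, rfl⟩
    rw [mem_preimage, pr1_crv]; exact h1

section

lemma nuc_finite {T : (ℝ × ℝ) ≃L[ℝ] E2}
    (hT : ∀ p, ‖T p‖ = √(p.1 ^ 2 + p.2 ^ 2)) {h : ℝ → ℝ} {a b : ℝ}
    (hd : ∀ y ∈ Icc a b, DifferentiableAt ℝ h y)
    (hc : ∀ y ∈ Icc a b, ContinuousAt (deriv h) y) : IsFiniteMeasure (nuc T h a b) := by
  constructor
  rw [nuc_apply _ _ _ _ MeasurableSet.univ, univ_inter]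
  obtain ⟨D, hD⟩ := isCompact_Icc.exists_bound_of_continuousOn
    (fun y hy => (hc y hy).continuousWithinAt)
  refine lt_of_le_of_lt (curve_upper hT (m := 0) (δ := D) (convex_Ioc a b)
    (fun y hy => hd y (Ioc_subset_Icc_self hy))
    (fun y hy => by rw [sub_zero]; exact hD y (Ioc_subset_Icc_self hy))) ?_
  exact ENNReal.mul_lt_top ENNReal.ofReal_lt_top (by simp)

lemma nuc_est {T : (ℝ × ℝ) ≃L[ℝ] E2}
    (hT : ∀ p, ‖T p‖ = √(p.1 ^ 2 + p.2 ^ 2)) {h : ℝ → ℝ} {a b : ℝ}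
    (hd : ∀ y ∈ Icc a b, DifferentiableAt ℝ h y)
    (hc : ∀ y ∈ Icc a b, ContinuousAt (deriv h) y) {c d m δ : ℝ} (hac : a ≤ c) (hdb : d ≤ b) (hcd : c ≤ d) (hδ : 0 ≤ δ)
    (hm : ∀ y ∈ Ioc c d, |deriv h y - m| ≤ δ) :
    |(nuc T h a b).real (Ioc c d) - √(1 + m ^ 2) * (d - c)| ≤ δ * (d - c) := by
  have hfin := nuc_finite hT hd hc
  have e : nuc T h a b (Ioc c d) = μH[1] (crv T h '' Ioc c d) := by
    rw [nuc_apply _ _ _ _ measurableSet_Ioc,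
      inter_eq_left.mpr (Ioc_subset_Ioc hac hdb)]
  have hd' : ∀ y ∈ Ioc c d, DifferentiableAt ℝ h y := fun y hy =>
    hd y ⟨hac.trans hy.1.le, hy.2.trans hdb⟩
  have h1 := curve_upper hT (convex_Ioc c d) hd' hm
  have h2 := curve_lower hT (convex_Ioc c d) hd' hm
  rw [← e, Real.volume_Ioc] at h1 h2
  have hs : 0 ≤ √(1 + m ^ 2) := Real.sqrt_nonneg _
  rw [← ENNReal.ofReal_mul (by positivity)] at h1
  rw [abs_le]
  constructor
  · rcases le_or_gt (√(1 + m ^ 2) - δ) 0 with h0 | h0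
    · have : 0 ≤ (nuc T h a b).real (Ioc c d) := measureReal_nonneg
      nlinarith
    · rw [← ENNReal.ofReal_mul h0.le] at h2
      have := (ENNReal.ofReal_le_iff_le_toReal (measure_ne_top _ _)).mp h2
      change _ ≤ (nuc T h a b).real (Ioc c d) at this
      linarith
  · have := ENNReal.toReal_le_of_le_ofReal (mul_nonneg (by positivity) (by linarith)) h1
    change (nuc T h a b).real (Ioc c d) ≤ _ at this
    linarith

lemma nuc_Ioc {T : (ℝ × ℝ) ≃L[ℝ] E2}
    (hT : ∀ p, ‖T p‖ = √(p.1 ^ 2 + p.2 ^ 2)) {h : ℝ → ℝ} {a b : ℝ}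
    (hd : ∀ y ∈ Icc a b, DifferentiableAt ℝ h y)
    (hc : ∀ y ∈ Icc a b, ContinuousAt (deriv h) y) {c d : ℝ} (hac : a ≤ c) (hdb : d ≤ b) (hcd : c ≤ d) :
    (nuc T h a b).real (Ioc c d) = ∫ y in c..d, √(1 + (deriv h y) ^ 2) := by
  have hfin := nuc_finite hT hd hc
  obtain ⟨D, hD⟩ := isCompact_Icc.exists_bound_of_continuousOn
    (fun y hy => (hc y hy).continuousWithinAt)
  have hadd : ∀ x ∈ Icc c d, ∀ x' ∈ Icc c d, x ≤ x' →
      (nuc T h a b).real (Ioc c x') - (nuc T h a b).real (Ioc c x) =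
        (nuc T h a b).real (Ioc x x') := by
    intro x hx x' hx' hxx
    rw [← Ioc_union_Ioc_eq_Ioc hx.1 hxx, measureReal_union (Ioc_disjoint_Ioc_of_le le_rfl)
      measurableSet_Ioc]
    ring
  have hI : ∀ x ∈ Icc c d, x ∈ Icc a b := fun x hx => ⟨hac.trans hx.1, hx.2.trans hdb⟩
  have hw : ContinuousOn (fun y => √(1 + (deriv h y) ^ 2)) (Icc c d) := fun y hy =>
    ((((hc y (hI y hy)).pow 2).const_add 1).sqrt).continuousWithinAt
  have := intervalIntegral.integral_eq_sub_of_hasDeriv_right_of_le hcd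
    (f := fun x => (nuc T h a b).real (Ioc c x)) (f' := fun y => √(1 + (deriv h y) ^ 2)) ?_ ?_ ?_
  · rw [this]; simp
  · have hDn : 0 ≤ D := (norm_nonneg _).trans (hD c ⟨hac, hcd.trans hdb⟩)
    have hlip : LipschitzOnWith (1 + D).toNNReal
        (fun x => (nuc T h a b).real (Ioc c x)) (Icc c d) := by
      apply LipschitzOnWith.of_dist_le_mul
      have key : ∀ x ∈ Icc c d, ∀ y ∈ Icc c d, x ≤ y →
          dist ((nuc T h a b).real (Ioc c x)) ((nuc T h a b).real (Ioc c y)) ≤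
            (1 + D) * dist x y := by
        intro x hx y hy hxy
        rw [dist_comm, Real.dist_eq, hadd x hx y hy hxy, dist_comm, Real.dist_eq,
          abs_of_nonneg measureReal_nonneg, abs_of_nonneg (by linarith)]
        have := nuc_est hT hd hc (c := x) (d := y) (m := 0) (hI x hx).1 (hI y hy).2 hxy hDn
          (fun z hz => by
            rw [sub_zero]; exact hD z ⟨(hI x hx).1.trans hz.1.le, hz.2.trans (hI y hy).2⟩)
        have := (abs_le.mp this).2
        norm_num at this
        linarith
      intro x hx y hy
      rw [Real.coe_toNNReal _ (by positivity)]
      rcases le_total x y with hxy | hxy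
      · exact key x hx y hy hxy
      · rw [dist_comm, dist_comm x y]; exact key y hy x hx hxy
    exact hlip.continuousOn
  · intro x hx
    rw [hasDerivWithinAt_iff_isLittleO, Asymptotics.isLittleO_iff]
    intro ε hε
    have hxI := Ioo_subset_Icc_self hx
    have h1 := (Metric.continuousAt_iff.mp (hc x (hI x hxI))) ε hε
    obtain ⟨r, hr, hr2⟩ := h1
    have h2 : ∀ᶠ x' in 𝓝[>] x, x' < min d (x + r) :=
      (eventually_lt_nhds (lt_min hx.2 (by linarith))).filter_mono nhdsWithin_le_nhds
    filter_upwards [h2, self_mem_nhdsWithin] with x' hx' hxx'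
    have hxx : x < x' := hxx'
    have hx'd := lt_min_iff.mp hx'
    have hx'I : x' ∈ Icc c d := ⟨hx.1.le.trans hxx.le, hx'd.1.le⟩
    rw [hadd x hxI x' hx'I hxx.le]
    have := nuc_est hT hd hc (c := x) (d := x') (m := deriv h x) (hI x hxI).1 (hI x' hx'I).2
      hxx.le hε.le (fun z hz => by
        rw [← Real.dist_eq]
        apply (hr2 _).le
        rw [Real.dist_eq, abs_of_pos (by linarith [hz.1])]
        linarith [hz.2, hx'd.2])
    rw [smul_eq_mul, Real.norm_eq_abs, Real.norm_eq_abs, abs_of_pos (sub_pos.mpr hxx), mul_comm]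
    rw [mul_comm (√_)] at this
    convert this using 3 <;> ring
  · exact hw.intervalIntegrable_of_Icc hcd

lemma nuc_eq {T : (ℝ × ℝ) ≃L[ℝ] E2}
    (hT : ∀ p, ‖T p‖ = √(p.1 ^ 2 + p.2 ^ 2)) {h : ℝ → ℝ} {a b : ℝ}
    (hd : ∀ y ∈ Icc a b, DifferentiableAt ℝ h y)
    (hc : ∀ y ∈ Icc a b, ContinuousAt (deriv h) y) (hab : a ≤ b) : nuc T h a b =
    (volume.restrict (Ioc a b)).withDensity (fun y => ENNReal.ofReal √(1 + (deriv h y) ^ 2)) := by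
  have hfin := nuc_finite hT hd hc
  apply Measure.ext_of_Ioc
  intro c d hcd
  have hw : ContinuousOn (fun y => √(1 + (deriv h y) ^ 2)) (Icc a b) := fun y hy =>
    ((((hc y hy).pow 2).const_add 1).sqrt).continuousWithinAt
  rw [withDensity_apply _ measurableSet_Ioc, Measure.restrict_restrict measurableSet_Ioc]
  have e : nuc T h a b (Ioc c d) = nuc T h a b (Ioc c d ∩ Ioc a b) := by
    rw [nuc_apply _ _ _ _ measurableSet_Ioc, nuc_apply _ _ _ _ (measurableSet_Ioc.inter measurableSet_Ioc),
      inter_assoc, inter_self]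
  rw [e, Ioc_inter_Ioc]
  rcases le_or_gt (min d b) (max c a) with h0 | h0
  · rw [Ioc_eq_empty (not_lt.mpr h0)]; simp
  · have h1 := nuc_Ioc hT hd hc (le_max_right c a) (min_le_right d b) h0.le
    rw [intervalIntegral.integral_of_le h0.le] at h1
    rw [← ofReal_integral_eq_lintegral_ofReal, ← h1, ofReal_measureReal]
    · exact (hw.mono (fun y hy => ⟨(le_max_right c a).trans hy.1,
        hy.2.trans (min_le_right d b)⟩)).integrableOn_Icc.mono_set Ioc_subset_Icc_self
    · exact Eventually.of_forall fun y => Real.sqrt_nonneg _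

lemma area_formula {T : (ℝ × ℝ) ≃L[ℝ] E2}
    (hT : ∀ p, ‖T p‖ = √(p.1 ^ 2 + p.2 ^ 2)) {h : ℝ → ℝ} {a b : ℝ}
    (hd : ∀ y ∈ Icc a b, DifferentiableAt ℝ h y)
    (hc : ∀ y ∈ Icc a b, ContinuousAt (deriv h) y) (hab : a ≤ b) {k : E2 → ℝ} (hk : Measurable k) :
    ∫ x in crv T h '' Ioc a b, k x ∂μH[1] =
      ∫ y in Ioc a b, √(1 + (deriv h y) ^ 2) * k (crv T h y) := by
  have hν := nuc_eq hT hd hc hab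
  have hw : ContinuousOn (fun y => √(1 + (deriv h y) ^ 2)) (Icc a b) := fun y hy =>
    ((((hc y hy).pow 2).const_add 1).sqrt).continuousWithinAt
  have hcc : ContinuousOn (crv T h) (Icc a b) := fun y hy =>
    (T.continuous.continuousAt.comp
      (continuousAt_id.prodMk (hd y hy).continuousAt)).continuousWithinAt
  have hcm : AEMeasurable (crv T h) (volume.restrict (Ioc a b)) :=
    (hcc.mono Ioc_subset_Icc_self).aemeasurable measurableSet_Ioc
  have hcm' : AEMeasurable (crv T h) (nuc T h a b) := by
    rw [hν]; exact hcm.mono_ac (withDensity_absolutelyContinuous _ _)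
  have hmap : Measure.map (crv T h) (nuc T h a b) =
      (μH[1] : Measure E2).restrict (crv T h '' Ioc a b) := by
    unfold nuc at hcm' ⊢
    rw [AEMeasurable.map_map_of_aemeasurable hcm' (continuous_pr1 T).measurable.aemeasurable]
    have hinj : InjOn (crv T h) (Ioc a b) := fun y _ z _ hyz => by
      rw [← pr1_crv T h y, hyz, pr1_crv]
    have hms : MeasurableSet (crv T h '' Ioc a b) :=
      measurableSet_Ioc.image_of_continuousOn_injOn (hcc.mono Ioc_subset_Icc_self) hinj
    have : (crv T h ∘ pr1 T) =ᵐ[(μH[1] : Measure E2).restrict (crv T h '' Ioc a b)] id := by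
      filter_upwards [ae_restrict_mem hms] with x hx
      obtain ⟨y, hy, rfl⟩ := hx
      simp [pr1_crv]
    rw [Measure.map_congr this, Measure.map_id]
  rw [← hmap, integral_map hcm' hk.aestronglyMeasurable, hν,
    integral_withDensity_eq_integral_toReal_smul₀]
  · congr 1; ext y
    rw [ENNReal.toReal_ofReal (Real.sqrt_nonneg _), smul_eq_mul]
  · exact ((hw.mono Ioc_subset_Icc_self).aemeasurable measurableSet_Ioc).ennreal_ofReal
  · exact Eventually.of_forall fun y => ENNReal.ofReal_lt_top
end

/-- The map straightening the zero set of `Bt`. -/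
def Psi (Bt : ℝ × ℝ → ℝ) (p : ℝ × ℝ) : ℝ × ℝ := (p.1, Bt p)

lemma hasFDerivAt_Psi {Bt : ℝ × ℝ → ℝ} (hB : Differentiable ℝ Bt) (p : ℝ × ℝ) :
    HasFDerivAt (Psi Bt) ((ContinuousLinearMap.fst ℝ ℝ ℝ).prod (fderiv ℝ Bt p)) p :=
  hasFDerivAt_fst.prodMk (hB p).hasFDerivAt

lemma det_Psi (ℓ : ℝ × ℝ →L[ℝ] ℝ) :
    ((ContinuousLinearMap.fst ℝ ℝ ℝ).prod ℓ).det = ℓ (0, 1) := by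
  rw [ContinuousLinearMap.det, ← LinearMap.det_toMatrix (Module.Basis.finTwoProd ℝ), Matrix.det_fin_two]
  simp [LinearMap.toMatrix_apply]

lemma chart {Bt : ℝ × ℝ → ℝ} (hB : ContDiff ℝ (⊤ : ℕ∞) Bt) {p₀ : ℝ × ℝ} (h0 : Bt p₀ = 0)
    (h2 : fderiv ℝ Bt p₀ (0, 1) ≠ 0) :
    ∃ (W : Set (ℝ × ℝ)) (r δ : ℝ) (s : ℝ × ℝ → ℝ × ℝ), IsOpen W ∧ p₀ ∈ W ∧ 0 < r ∧ 0 < δ ∧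
      (∀ z ∈ Metric.ball (p₀.1, (0:ℝ)) (2 * r), ContDiffAt ℝ 1 s z ∧ (s z).1 = z.1 ∧
        Bt (s z) = z.2 ∧ δ ≤ |fderiv ℝ Bt (s z) (0, 1)|) ∧
      (∀ z ∈ Metric.ball (p₀.1, (0:ℝ)) r, s z ∈ W) ∧
      (∀ p ∈ W, Psi Bt p ∈ Metric.ball (p₀.1, (0:ℝ)) r ∧ s (Psi Bt p) = p) := by
  have hB1 : ContDiff ℝ 1 Bt := hB.of_le (by exact_mod_cast le_top)
  have hBd : Differentiable ℝ Bt := hB1.differentiable (by norm_num)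
  have hΨ : ContDiff ℝ 1 (Psi Bt) := contDiff_fst.prodMk hB1
  have hdet : ∀ p, fderiv ℝ Bt p (0, 1) ≠ 0 →
      ((ContinuousLinearMap.fst ℝ ℝ ℝ).prod (fderiv ℝ Bt p)).det ≠ 0 := by
    intro p hp; rw [det_Psi]; exact hp
  have hD2 : Continuous (fun p => |fderiv ℝ Bt p (0, 1)|) :=
    ((hB1.continuous_fderiv (by norm_num)).clm_apply continuous_const).abs
  let f' := ContinuousLinearMap.toContinuousLinearEquivOfDetNeZero _ (hdet p₀ h2)
  have hf' : HasFDerivAt (Psi Bt) (f' : ℝ × ℝ →L[ℝ] ℝ × ℝ) p₀ := by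
    simp only [f', ContinuousLinearMap.coe_toContinuousLinearEquivOfDetNeZero]
    exact hasFDerivAt_Psi hBd p₀
  let e := ContDiffAt.toOpenPartialHomeomorph (Psi Bt) hΨ.contDiffAt hf' one_ne_zero
  have he : ∀ p, e p = Psi Bt p := fun p => rfl
  have hp₀ : p₀ ∈ e.source := ContDiffAt.mem_toOpenPartialHomeomorph_source _ hf' one_ne_zero
  have hq : Psi Bt p₀ = (p₀.1, (0:ℝ)) := by simp [Psi, h0]
  have hqt : (p₀.1, (0:ℝ)) ∈ e.target := by rw [← hq]; exact e.map_source hp₀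
  have hqs : e.symm (p₀.1, (0:ℝ)) = p₀ := by rw [← hq, ← he]; exact e.left_inv hp₀
  set δ := |fderiv ℝ Bt p₀ (0, 1)| / 2 with hδ
  have hδ0 : 0 < δ := by have := abs_pos.mpr h2; positivity
  have hev : ∀ᶠ z in 𝓝 (p₀.1, (0:ℝ)), z ∈ e.target ∧ δ < |fderiv ℝ Bt (e.symm z) (0, 1)| := by
    refine Filter.Eventually.and (e.open_target.mem_nhds hqt) ?_
    have hc : ContinuousAt (fun z => |fderiv ℝ Bt (e.symm z) (0, 1)|) (p₀.1, (0:ℝ)) :=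
      hD2.continuousAt.comp (e.continuousAt_symm hqt)
    apply hc.eventually (lt_mem_nhds _)
    change δ < |fderiv ℝ Bt (e.symm (p₀.1, (0:ℝ))) (0, 1)|
    rw [hqs, hδ]; have := abs_pos.mpr h2; linarith
  obtain ⟨R, hR, hRb⟩ := Metric.eventually_nhds_iff_ball.mp hev
  refine ⟨e.source ∩ e ⁻¹' Metric.ball (p₀.1, (0:ℝ)) (R/2), R/2, δ, e.symm,
    e.isOpen_inter_preimage Metric.isOpen_ball, ⟨hp₀, ?_⟩, by positivity, hδ0, ?_, ?_, ?_⟩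
  · rw [mem_preimage, he, hq]; exact Metric.mem_ball_self (by positivity)
  · intro z hz
    rw [mul_div_cancel₀ _ (two_ne_zero)] at hz
    obtain ⟨hzt, hzδ⟩ := hRb z hz
    have hr := e.right_inv hzt
    rw [he] at hr
    have hne : fderiv ℝ Bt (e.symm z) (0, 1) ≠ 0 := by
      intro h; rw [h, abs_zero] at hzδ; linarith
    refine ⟨?_, (congrArg Prod.fst hr :), (congrArg Prod.snd hr :), hzδ.le⟩
    let f₁ := ContinuousLinearMap.toContinuousLinearEquivOfDetNeZero _ (hdet _ hne)
    refine e.contDiffAt_symm (f₀' := f₁) hzt ?_ hΨ.contDiffAt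
    simp only [f₁, ContinuousLinearMap.coe_toContinuousLinearEquivOfDetNeZero]
    exact hasFDerivAt_Psi hBd _
  · intro z hz
    have hz2 : z ∈ Metric.ball (p₀.1, (0:ℝ)) R := Metric.ball_subset_ball (by linarith) hz
    have hzt := (hRb z hz2).1
    refine ⟨e.map_target hzt, ?_⟩
    rw [mem_preimage, e.right_inv hzt]; exact hz
  · intro p hp
    exact ⟨hp.2, e.left_inv hp.1⟩

lemma norm_dual {T : (ℝ × ℝ) ≃L[ℝ] E2} (hT : ∀ p, ‖T p‖ = √(p.1 ^ 2 + p.2 ^ 2))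
    (ℓ : E2 →L[ℝ] ℝ) : ‖ℓ‖ = √((ℓ (T (1, 0))) ^ 2 + (ℓ (T (0, 1))) ^ 2) := by
  set α := ℓ (T (1, 0))
  set β := ℓ (T (0, 1))
  have hl : ∀ p : ℝ × ℝ, ℓ (T p) = p.1 * α + p.2 * β := by
    intro p
    have : p = p.1 • ((1:ℝ), (0:ℝ)) + p.2 • ((0:ℝ), (1:ℝ)) := by ext <;> simp
    calc ℓ (T p) = ℓ (T (p.1 • ((1:ℝ), (0:ℝ)) + p.2 • ((0:ℝ), (1:ℝ)))) := by rw [← this]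
      _ = _ := by rw [map_add, map_add, map_smul, map_smul, map_smul, map_smul]; rfl
  apply le_antisymm
  · apply ContinuousLinearMap.opNorm_le_bound _ (Real.sqrt_nonneg _)
    intro x
    obtain ⟨p, rfl⟩ := T.surjective x
    rw [hl, hT, ← Real.sqrt_mul (by positivity), Real.norm_eq_abs, ← Real.sqrt_sq_eq_abs]
    apply Real.sqrt_le_sqrt
    nlinarith [sq_nonneg (p.1 * β - p.2 * α)]
  · have h1 := ℓ.le_opNorm (T (α, β))
    rw [hl, hT] at h1
    simp only at h1
    rcases eq_or_lt_of_le (Real.sqrt_nonneg (α ^ 2 + β ^ 2)) with h | h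
    · rw [← h]; exact norm_nonneg _
    · have h2 : √(α ^ 2 + β ^ 2) * √(α ^ 2 + β ^ 2) = α ^ 2 + β ^ 2 :=
        Real.mul_self_sqrt (by positivity)
      refine le_of_mul_le_mul_right ?_ h
      rw [h2]
      refine le_trans ?_ h1
      rw [Real.norm_eq_abs]
      exact le_trans (by linarith) (le_abs_self (α * α + β * β))

/-- The localized limit formula holds for test functions supported in `V`. -/
def LocOK (g : ℝ → ℝ) (B : E2 → ℝ) (V : Set E2) : Prop :=
  ∀ f : E2 → ℝ, Measurable f → (∃ C, ∀ x, |f x| ≤ C) → HasCompactSupport f → tsupport f ⊆ V →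
    ∀ S : Set E2, S.Finite → (∀ x, B x = 0 → x ∉ S → ContinuousAt f x) →
    Tendsto (fun t : ℝ => t * ∫ x, f x * gh g (t * |B x|)) atTop
      (𝓝 (Gtot g * ∫ x in {x | B x = 0}, f x / ‖fderiv ℝ B x‖ ∂μH[1]))

lemma local_nonzero {g : ℝ → ℝ} (hg : IsLimitG g) {B : E2 → ℝ} (hB : Continuous B) {x₀ : E2}
    (h : B x₀ ≠ 0) : ∃ V, IsOpen V ∧ x₀ ∈ V ∧ LocOK g B V := by
  have hp := abs_pos.mpr h
  refine ⟨{x | |B x₀| / 2 < |B x|}, isOpen_lt continuous_const hB.abs, ?_, ?_⟩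
  · rw [mem_setOf_eq]; linarith
  intro f _ _ _ hV S _ _
  have hf : ∀ x, ¬ (|B x₀| / 2 < |B x|) → f x = 0 := by
    intro x hx
    by_contra h'
    exact hx (hV (subset_tsupport f h'))
  have h1 : ∫ x in {x | B x = 0}, f x / ‖fderiv ℝ B x‖ ∂μH[1] = 0 := by
    apply setIntegral_eq_zero_of_forall_eq_zero
    intro x hx
    have hx' : B x = 0 := hx
    rw [hf x (by rw [hx', abs_zero]; linarith), zero_div]
  rw [h1, mul_zero]
  refine tendsto_const_nhds.congr' ?_
  filter_upwards [eventually_ge_atTop (2 / |B x₀|)] with t ht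
  have : ∀ x, f x * gh g (t * |B x|) = 0 := by
    intro x
    by_cases hx : |B x₀| / 2 < |B x|
    · rw [gh_zero hg, mul_zero]
      rw [div_le_iff₀ hp] at ht
      have : 0 < t := by
        by_contra h'; push Not at h'; nlinarith
      nlinarith
    · rw [hf x hx, zero_mul]
  simp [this]

section
variable {B : E2 → ℝ} (hB : ContDiff ℝ (⊤ : ℕ∞) B) {T : (ℝ × ℝ) ≃L[ℝ] E2}
  (hT : ∀ p, ‖T p‖ = √(p.1 ^ 2 + p.2 ^ 2)) 

lemma fderiv_comp_T (hB : ContDiff ℝ (⊤ : ℕ∞) B) (p v : ℝ × ℝ) :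
    fderiv ℝ (fun p => B (T p)) p v = fderiv ℝ B (T p) (T v) := by
  have hd : DifferentiableAt ℝ B (T p) := hB.contDiffAt.differentiableAt (by simp)
  have : HasFDerivAt (fun p => B (T p)) ((fderiv ℝ B (T p)).comp (T : ℝ × ℝ →L[ℝ] E2)) p :=
    hd.hasFDerivAt.comp p T.hasFDerivAt
  rw [this.fderiv]; rfl

lemma slope_formula (hB : ContDiff ℝ (⊤ : ℕ∞) B)
    (hT : ∀ p, ‖T p‖ = √(p.1 ^ 2 + p.2 ^ 2)) {h : ℝ → ℝ} {y : ℝ}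
    (hd : DifferentiableAt ℝ h y) (hz : ∀ᶠ y' in 𝓝 y, B (T (y', h y')) = 0)
    (h2 : fderiv ℝ (fun p => B (T p)) (y, h y) (0, 1) ≠ 0) :
    √(1 + (deriv h y) ^ 2) =
      ‖fderiv ℝ B (T (y, h y))‖ / |fderiv ℝ (fun p => B (T p)) (y, h y) (0, 1)| := by
  rw [norm_dual hT, ← fderiv_comp_T hB, ← fderiv_comp_T hB]
  set Bt := fun p => B (T p)
  have hBt : DifferentiableAt ℝ Bt (y, h y) :=
    (hB.contDiffAt.differentiableAt (by simp)).comp _ T.differentiableAt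
  have h1 : HasDerivAt (fun y' => Bt (y', h y')) (fderiv ℝ Bt (y, h y) (1, deriv h y)) y :=
    HasFDerivAt.comp_hasDerivAt (f := fun y' => (y', h y')) y hBt.hasFDerivAt
      ((hasDerivAt_id y).prodMk hd.hasDerivAt)
  have h3 : HasDerivAt (fun y' => Bt (y', h y')) 0 y :=
    (hasDerivAt_const y (0:ℝ)).congr_of_eventuallyEq hz
  have h4 := h1.unique h3
  have h5 : ((1:ℝ), deriv h y) = ((1:ℝ), (0:ℝ)) + deriv h y • ((0:ℝ), (1:ℝ)) := by ext <;> simp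
  rw [h5, map_add, map_smul, smul_eq_mul] at h4
  set α := fderiv ℝ Bt (y, h y) (1, 0)
  set β := fderiv ℝ Bt (y, h y) (0, 1)
  have hα : α = - (deriv h y * β) := by linarith
  rw [hα, ← Real.sqrt_sq_eq_abs, ← Real.sqrt_div (by positivity)]
  congr 1
  field_simp
  ring

end

lemma local_zero {g : ℝ → ℝ} (hg : IsLimitG g) {B : E2 → ℝ} (hB : ContDiff ℝ (⊤ : ℕ∞) B)
    {T : (ℝ × ℝ) ≃L[ℝ] E2} (hT : ∀ p, ‖T p‖ = √(p.1 ^ 2 + p.2 ^ 2))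
    (hTm : MeasurePreserving T volume volume) {p₀ : ℝ × ℝ} (h0 : B (T p₀) = 0)
    (h2 : fderiv ℝ B (T p₀) (T (0, 1)) ≠ 0) :
    ∃ V, IsOpen V ∧ T p₀ ∈ V ∧ LocOK g B V := by
  have hBt : ContDiff ℝ (⊤ : ℕ∞) (fun p => B (T p)) := hB.comp T.contDiff
  set Bt := fun p => B (T p) with hBtdef
  have hBtd : Differentiable ℝ Bt := hBt.differentiable (by simp)
  obtain ⟨W, r, δ, s, hWo, hpW, hr, hδ, hs, hsW, hW⟩ := chart hBt h0
    (by rw [fderiv_comp_T hB]; exact h2)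
  have hTh : IsOpenMap T := T.toHomeomorph.isOpenMap
  refine ⟨T '' W, hTh _ hWo, ⟨p₀, hpW, rfl⟩, ?_⟩
  rintro f hfm ⟨C, hC⟩ hfc hfV S hS hfcont
  have hC0 : 0 ≤ C := (abs_nonneg _).trans (hC 0)
  set Q := Metric.ball (p₀.1, (0:ℝ)) r with hQ
  have hQ2 : Q ⊆ Metric.ball (p₀.1, (0:ℝ)) (2 * r) := Metric.ball_subset_ball (by linarith)
  have hmemQ : ∀ z : ℝ × ℝ, z ∈ Q ↔ |z.1 - p₀.1| < r ∧ |z.2| < r := by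
    intro z
    rw [hQ, Metric.mem_ball, Prod.dist_eq, max_lt_iff, Real.dist_eq, Real.dist_eq, sub_zero]
  have hmemQ2 : ∀ y : ℝ, |y - p₀.1| ≤ r → (y, (0:ℝ)) ∈ Metric.ball (p₀.1, (0:ℝ)) (2 * r) := by
    intro y hy
    rw [Metric.mem_ball, Prod.dist_eq, max_lt_iff, Real.dist_eq, dist_self]
    exact ⟨by simp only; linarith, by linarith⟩
  have hQm : MeasurableSet Q := Metric.isOpen_ball.measurableSet
  have hD2c : Continuous (fun p => |fderiv ℝ Bt p (0, 1)|) :=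
    ((hBt.continuous_fderiv (by simp)).clm_apply continuous_const).abs
  classical
  -- a measurable version of the inverse chart
  set s' : ℝ × ℝ → ℝ × ℝ := Q.piecewise s (fun _ => 0) with hs'
  have hs'm : Measurable s' := by
    refine ContinuousOn.measurable_piecewise ?_ continuousOn_const hQm
    exact fun z hz => (hs z (hQ2 hz)).1.continuousAt.continuousWithinAt
  have hs'Q : ∀ z ∈ Q, s' z = s z := fun z hz => piecewise_eq_of_mem _ _ _ hz
  set F : ℝ × ℝ → ℝ := Q.indicator (fun z => f (T (s' z)) / |fderiv ℝ Bt (s' z) (0, 1)|) with hF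
  have hFm : Measurable F := by
    refine Measurable.indicator ?_ hQm
    exact (hfm.comp (T.continuous.measurable.comp hs'm)).div (hD2c.measurable.comp hs'm)
  have hFQ : ∀ z ∈ Q, F z = f (T (s z)) / |fderiv ℝ Bt (s z) (0, 1)| := by
    intro z hz
    rw [hF, indicator_of_mem hz, hs'Q z hz]
  have hFn : ∀ z, z ∉ Q → F z = 0 := fun z hz => indicator_of_notMem hz _
  have hFC : ∀ z, |F z| ≤ C / δ := by
    intro z
    by_cases hz : z ∈ Q
    · rw [hFQ z hz, abs_div, abs_abs]
      exact div_le_div₀ hC0 (hC _) hδ (hs z (hQ2 hz)).2.2.2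
    · rw [hFn z hz, abs_zero]; positivity
  have hFR : ∀ z, F z ≠ 0 → z.1 ∈ Icc (-(|p₀.1| + r)) (|p₀.1| + r) ∧
      z.2 ∈ Icc (-(|p₀.1| + r)) (|p₀.1| + r) := by
    intro z hz
    have hzQ : z ∈ Q := by by_contra h; exact hz (hFn z h)
    obtain ⟨ha, hb⟩ := (hmemQ z).mp hzQ
    have hn := abs_nonneg p₀.1
    rw [mem_Icc, mem_Icc, ← abs_le, ← abs_le]
    refine ⟨?_, by linarith⟩
    have := abs_sub_abs_le_abs_sub z.1 p₀.1
    linarith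
  have hsz : ∀ y : ℝ, |y - p₀.1| ≤ r → s (y, 0) = (y, (s (y, 0)).2) := by
    intro y hy
    ext
    · exact (hs _ (hmemQ2 y hy)).2.1
    · rfl
  have hcontF : ∀ᵐ y : ℝ, Tendsto (fun σ => F (y, σ)) (𝓝 0) (𝓝 (F (y, 0))) := by
    have hfin : ((pr1 T) '' S).Finite := hS.image _
    filter_upwards [hfin.countable.ae_notMem volume] with y hy
    suffices hca : ContinuousAt F (y, 0) from
      hca.tendsto.comp ((continuous_const.prodMk continuous_id).tendsto' _ _ rfl)
    by_cases hyQ : (y, (0:ℝ)) ∈ Q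
    · have heq : (fun z => f (T (s z)) / |fderiv ℝ Bt (s z) (0, 1)|) =ᶠ[𝓝 (y, 0)] F := by
        filter_upwards [Metric.isOpen_ball.mem_nhds hyQ] with z hz
        exact (hFQ z hz).symm
      refine ContinuousAt.congr ?_ heq
      have hsy := hs _ (hQ2 hyQ)
      have hsc : ContinuousAt s (y, 0) := hsy.1.continuousAt
      have hyr : |y - p₀.1| ≤ r := ((hmemQ _).mp hyQ).1.le
      have hfc2 : ContinuousAt f (T (s (y, 0))) := by
        apply hfcont _ hsy.2.2.1
        intro hmem
        apply hy
        refine ⟨_, hmem, ?_⟩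
        simp only [pr1, ContinuousLinearEquiv.symm_apply_apply]
        exact hsy.2.1
      refine ContinuousAt.div ?_ (hD2c.continuousAt.comp hsc) ?_
      · exact ContinuousAt.comp (f := fun z => T (s z)) hfc2 (T.continuous.continuousAt.comp hsc)
      · exact (hδ.trans_le hsy.2.2.2).ne'
    · have hKc : IsCompact (Psi Bt '' (T.symm '' tsupport f)) := by
        refine (IsCompact.image hfc T.symm.continuous).image ?_
        exact continuous_fst.prodMk hBtd.continuous
      have hKQ : Psi Bt '' (T.symm '' tsupport f) ⊆ Q := by
        rintro _ ⟨_, ⟨x, hx, rfl⟩, rfl⟩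
        obtain ⟨p, hp, rfl⟩ := hfV hx
        rw [ContinuousLinearEquiv.symm_apply_apply]
        exact (hW p hp).1
      have hF0 : ∀ z, z ∉ Psi Bt '' (T.symm '' tsupport f) → F z = 0 := by
        intro z hz
        by_cases hzQ : z ∈ Q
        · rw [hFQ z hzQ]
          have : f (T (s z)) = 0 := by
            by_contra hne
            apply hz
            refine ⟨s z, ⟨T (s z), subset_tsupport f hne, by simp⟩, ?_⟩
            have := hs z (hQ2 hzQ)
            exact Prod.ext this.2.1 this.2.2.1
          rw [this, zero_div]
        · exact hFn z hzQ
      have heq : (fun _ => (0:ℝ)) =ᶠ[𝓝 (y, 0)] F := by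
        filter_upwards [hKc.isClosed.isOpen_compl.mem_nhds (fun h => hyQ (hKQ h))] with z hz
        exact (hF0 z hz).symm
      exact continuousAt_const.congr heq
  have hlim := scale_lim hg hFm hFC hFR hcontF
  -- change of variables
  have hf0 : ∀ p, p ∉ W → f (T p) = 0 := by
    intro p hp
    by_contra hne
    obtain ⟨q, hq, hqp⟩ := hfV (subset_tsupport f hne)
    exact hp (T.injective hqp ▸ hq)
  have hΨW : Psi Bt '' W = Q := by
    ext z
    constructor
    · rintro ⟨p, hp, rfl⟩; exact (hW p hp).1
    · intro hz
      have := hs z (hQ2 hz)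
      exact ⟨s z, hsW z hz, Prod.ext this.2.1 this.2.2.1⟩
  have hinj : InjOn (Psi Bt) W := by
    intro p hp q hq hpq
    rw [← (hW p hp).2, hpq, (hW q hq).2]
  have hcv : ∀ t : ℝ, ∫ x, f x * gh g (t * |B x|) = ∫ z, F z * gh g (t * |z.2|) := by
    intro t
    rw [← hTm.integral_comp T.toHomeomorph.measurableEmbedding]
    have e1 : ∫ p, f (T p) * gh g (t * |B (T p)|) =
        ∫ p in W, f (T p) * gh g (t * |Bt p|) := by
      symm
      apply setIntegral_eq_integral_of_forall_compl_eq_zero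
      intro p hp
      rw [hf0 p hp, zero_mul]
    have e2 : ∫ z, F z * gh g (t * |z.2|) = ∫ z in Q, F z * gh g (t * |z.2|) := by
      symm
      apply setIntegral_eq_integral_of_forall_compl_eq_zero
      intro p hp
      rw [hFn p hp, zero_mul]
    rw [e1, e2, ← hΨW, integral_image_eq_integral_abs_det_fderiv_smul volume hWo.measurableSet
      (fun p _ => (hasFDerivAt_Psi hBtd p).hasFDerivWithinAt) hinj]
    apply setIntegral_congr_fun hWo.measurableSet
    intro p hp
    obtain ⟨hpQ, hsp⟩ := hW p hp
    have hne := (hs _ (hQ2 hpQ)).2.2.2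
    simp only
    rw [hFQ _ hpQ, det_Psi, smul_eq_mul]
    rw [hsp] at hne ⊢
    have hpos := hδ.trans_le hne
    rw [← mul_assoc, mul_div_cancel₀ _ hpos.ne']
    rfl
  simp_rw [hcv]
  -- identify the limit
  set h : ℝ → ℝ := fun y => (s (y, 0)).2 with hh
  have hhc : ContDiffOn ℝ 1 h (Ioo (p₀.1 - 2 * r) (p₀.1 + 2 * r)) := by
    intro y hy
    have hyb : (y, (0:ℝ)) ∈ Metric.ball (p₀.1, (0:ℝ)) (2 * r) := by
      rw [Metric.mem_ball, Prod.dist_eq, max_lt_iff, Real.dist_eq, dist_self, abs_lt]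
      refine ⟨⟨?_, ?_⟩, by linarith⟩ <;> simp only <;> linarith [hy.1, hy.2]
    have h1 : ContDiffAt ℝ 1 (fun y : ℝ => s (y, 0)) y :=
      ContDiffAt.comp (f := fun y : ℝ => (y, (0:ℝ))) y (hs _ hyb).1
        (contDiffAt_id.prodMk contDiffAt_const)
    exact h1.snd.contDiffWithinAt
  have hsub : Icc (p₀.1 - r) (p₀.1 + r) ⊆ Ioo (p₀.1 - 2 * r) (p₀.1 + 2 * r) := fun y hy =>
    ⟨by linarith [hy.1], by linarith [hy.2]⟩
  have hhd : ∀ y ∈ Icc (p₀.1 - r) (p₀.1 + r), DifferentiableAt ℝ h y := fun y hy =>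
    (hhc.differentiableOn (by norm_num)).differentiableAt (isOpen_Ioo.mem_nhds (hsub hy))
  have hhdc : ∀ y ∈ Icc (p₀.1 - r) (p₀.1 + r), ContinuousAt (deriv h) y := fun y hy =>
    (hhc.continuousOn_deriv_of_isOpen isOpen_Ioo le_rfl).continuousAt
      (isOpen_Ioo.mem_nhds (hsub hy))
  have hyabs : ∀ y ∈ Icc (p₀.1 - r) (p₀.1 + r), |y - p₀.1| ≤ r := fun y hy => by
    rw [abs_le]; constructor <;> linarith [hy.1, hy.2]
  have hBm : Measurable (fun x => ‖fderiv ℝ B x‖) :=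
    (hB.continuous_fderiv (by simp)).norm.measurable
  have hk : Measurable (fun x => f x / ‖fderiv ℝ B x‖) := hfm.div hBm
  have harea := area_formula hT hhd hhdc (by linarith) hk
  have hcrv : ∀ y ∈ Icc (p₀.1 - r) (p₀.1 + r), crv T h y = T (s (y, 0)) := by
    intro y hy
    rw [crv, hsz y (hyabs y hy)]
  have hZ : ∫ x in {x | B x = 0}, f x / ‖fderiv ℝ B x‖ ∂μH[1] =
      ∫ x in crv T h '' Ioc (p₀.1 - r) (p₀.1 + r), f x / ‖fderiv ℝ B x‖ ∂μH[1] := by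
    apply setIntegral_eq_of_subset_of_forall_sdiff_eq_zero
      (hB.continuous.measurable (measurableSet_singleton 0))
    · rintro _ ⟨y, hy, rfl⟩
      rw [hcrv y (Ioc_subset_Icc_self hy)]
      exact (hs _ (hmemQ2 y (hyabs y (Ioc_subset_Icc_self hy)))).2.2.1
    · rintro x ⟨hx, hxn⟩
      have : f x = 0 := by
        by_contra hne
        obtain ⟨p, hp, rfl⟩ := hfV (subset_tsupport f hne)
        apply hxn
        obtain ⟨hpQ, hsp⟩ := hW p hp
        have hPp : Psi Bt p = (p.1, 0) := Prod.ext rfl hx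
        rw [hPp] at hpQ hsp
        have := abs_lt.mp ((hmemQ _).mp hpQ).1
        simp only at this
        have hI : p.1 ∈ Ioc (p₀.1 - r) (p₀.1 + r) := ⟨by linarith, by linarith⟩
        refine ⟨p.1, hI, ?_⟩
        rw [hcrv _ (Ioc_subset_Icc_self hI), hsp]
      rw [this, zero_div]
  have hFy : ∫ y, F (y, 0) = ∫ y in Ioc (p₀.1 - r) (p₀.1 + r), F (y, 0) := by
    symm
    apply setIntegral_eq_integral_of_forall_compl_eq_zero
    intro y hy
    apply hFn
    intro hQ'
    apply hy
    have := abs_lt.mp ((hmemQ _).mp hQ').1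
    simp only at this
    exact ⟨by linarith, by linarith⟩
  have hfinal : ∫ y, F (y, 0) = ∫ x in {x | B x = 0}, f x / ‖fderiv ℝ B x‖ ∂μH[1] := by
    rw [hZ, harea, hFy]
    apply setIntegral_congr_fun measurableSet_Ioc
    intro y hy
    have hyI := Ioc_subset_Icc_self hy
    have hsy := hs _ (hmemQ2 y (hyabs y hyI))
    have hpos := hδ.trans_le hsy.2.2.2
    simp only
    by_cases hyQ : (y, (0:ℝ)) ∈ Q
    · have hslope := slope_formula hB hT (hhd y hyI) ?_ ?_
      · rw [hslope, hFQ _ hyQ, ← crv, hcrv y hyI]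
        have e : (y, h y) = s (y, 0) := (hsz y (hyabs y hyI)).symm
        rw [e]
        by_cases hn : ‖fderiv ℝ B (T (s (y, 0)))‖ = 0
        · exfalso
          rw [norm_eq_zero] at hn
          have := fderiv_comp_T hB (T := T) (s (y, 0)) (0, 1)
          rw [hn] at this
          rw [this] at hpos
          simp at hpos
        · set N := ‖fderiv ℝ B (T (s (y, 0)))‖
          set D := |fderiv ℝ Bt (s (y, 0)) (0, 1)|
          have hDne : D ≠ 0 := hpos.ne'
          change f (T (s (y, 0))) / D = N / D * (f (T (s (y, 0))) / N)
          field_simp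
      · have : ∀ᶠ y' in 𝓝 y, y' ∈ Ioo (p₀.1 - r) (p₀.1 + r) := by
          apply isOpen_Ioo.mem_nhds
          have := abs_lt.mp ((hmemQ _).mp hyQ).1
          simp only at this
          exact ⟨by linarith, by linarith⟩
        filter_upwards [this] with y' hy'
        have hyI' := Ioo_subset_Icc_self hy'
        rw [← crv, hcrv y' hyI']
        exact (hs _ (hmemQ2 y' (hyabs y' hyI'))).2.2.1
      · have e : (y, h y) = s (y, 0) := (hsz y (hyabs y hyI)).symm
        rw [e]
        exact abs_pos.mp hpos
    · rw [hFn _ hyQ]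
      have : f (crv T h y) = 0 := by
        by_contra hne
        obtain ⟨p, hp, hpe⟩ := hfV (subset_tsupport f hne)
        rw [hcrv y hyI] at hpe
        have hps := T.injective hpe
        obtain ⟨hpQ, hsp⟩ := hW p hp
        apply hyQ
        have : Psi Bt p = (y, 0) := by
          rw [hps]; exact Prod.ext hsy.2.1 hsy.2.2.1
        rwa [this] at hpQ
      rw [this, zero_div, mul_zero]
  rw [← hfinal]
  exact hlim

/-- The standard frame of the plane. -/
def T1 : (ℝ × ℝ) ≃L[ℝ] E2 :=
  (ContinuousLinearEquiv.finTwoArrow ℝ ℝ).symm.trans (EuclideanSpace.equiv (Fin 2) ℝ).symm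

/-- The swapped frame of the plane. -/
def T2 : (ℝ × ℝ) ≃L[ℝ] E2 := (ContinuousLinearEquiv.prodComm ℝ ℝ ℝ).trans T1

lemma T1_norm (p : ℝ × ℝ) : ‖T1 p‖ = √(p.1 ^ 2 + p.2 ^ 2) := by
  rw [EuclideanSpace.norm_eq, Fin.sum_univ_two]
  simp [T1]

lemma T2_apply (p : ℝ × ℝ) : T2 p = T1 (p.2, p.1) := rfl

lemma T2_norm (p : ℝ × ℝ) : ‖T2 p‖ = √(p.1 ^ 2 + p.2 ^ 2) := by
  rw [T2_apply, T1_norm, add_comm]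

lemma T1_mp : MeasurePreserving T1 volume volume :=
  (PiLp.volume_preserving_toLp (Fin 2)).comp
    ((volume_preserving_finTwoArrow ℝ).symm MeasurableEquiv.finTwoArrow)

lemma T2_mp : MeasurePreserving T2 volume volume :=
  T1_mp.comp (Measure.measurePreserving_swap (μ := (volume : Measure ℝ)) (ν := (volume : Measure ℝ)))

lemma exists_loc {g : ℝ → ℝ} (hg : IsLimitG g) {B : E2 → ℝ} (hB : ContDiff ℝ (⊤ : ℕ∞) B) {x₀ : E2}
    (h : B x₀ = 0 → fderiv ℝ B x₀ ≠ 0) : ∃ V, IsOpen V ∧ x₀ ∈ V ∧ LocOK g B V := by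
  by_cases h0 : B x₀ = 0
  · by_cases h2 : fderiv ℝ B x₀ (T1 (0, 1)) = 0
    · have h3 : fderiv ℝ B x₀ (T2 (0, 1)) ≠ 0 := by
        intro h3
        rw [T2_apply] at h3
        have := norm_dual T1_norm (fderiv ℝ B x₀)
        rw [h2] at this
        simp only [] at h3
        rw [h3] at this
        simp at this
        exact h h0 this
      have e : T2 (T2.symm x₀) = x₀ := T2.apply_symm_apply x₀
      have := local_zero hg hB T2_norm T2_mp (p₀ := T2.symm x₀) (by rw [e]; exact h0)
        (by rw [e]; exact h3)
      rwa [e] at this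
    · have e : T1 (T1.symm x₀) = x₀ := T1.apply_symm_apply x₀
      have := local_zero hg hB T1_norm T1_mp (p₀ := T1.symm x₀) (by rw [e]; exact h0)
        (by rw [e]; exact h2)
      rwa [e] at this
  · exact local_nonzero hg hB.continuous h0

lemma gamma_finite {Ω : Set E2} {B₀ : E2 → ℝ} {Γ : Set E2} (h : VanishingFieldAssumption Ω B₀ Γ) :
    μH[1] Γ < ⊤ := by
  obtain ⟨n, γ, _, hγ, hΓ⟩ := h.curves
  rw [hΓ]
  refine (measure_iUnion_le _).trans_lt ?_
  rw [tsum_fintype]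
  refine ENNReal.sum_lt_top.mpr fun i _ => ?_
  obtain ⟨K, hK⟩ := (((hγ i).of_le (by exact_mod_cast le_top) :
    ContDiff ℝ 1 (γ i)).contDiffOn (s := Icc 0 1)).exists_lipschitzOnWith (by simp) (convex_Icc 0 1) isCompact_Icc
  refine (hK.hausdorffMeasure_image_le (d := 1) zero_le_one).trans_lt ?_
  rw [hausdorffMeasure_real]
  simp

lemma gamma_null {Ω : Set E2} {B₀ : E2 → ℝ} {Γ : Set E2} (h : VanishingFieldAssumption Ω B₀ Γ) :
    volume Γ = 0 := by
  obtain ⟨n, γ, _, hγ, hΓ⟩ := h.curves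
  rw [hΓ]
  refine measure_iUnion_null fun i => ?_
  refine measure_mono_null (image_subset_range _ _) ?_
  have h1 := (((hγ i).of_le (by exact_mod_cast le_top) : ContDiff ℝ 1 (γ i))).dimH_range_le
  rw [Module.finrank_self] at h1
  have hh := isAddHaarMeasure_hausdorffMeasure (E := E2)
  have hr : Module.finrank ℝ E2 = 2 := by simp
  rw [hr] at hh
  have hh' : (μH[((2 : NNReal) : ℝ)] : Measure E2).IsAddHaarMeasure := by exact_mod_cast hh
  refine measure_zero_of_dimH_lt (d := 2) ?_ (h1.trans_lt (by norm_num))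
  exact Measure.absolutelyContinuous_isAddHaarMeasure volume _

lemma gamma_compact {Ω : Set E2} (hΩb : Bornology.IsBounded Ω) {B₀ : E2 → ℝ} {Γ : Set E2}
    (h : VanishingFieldAssumption Ω B₀ Γ) : IsCompact Γ := by
  rw [h.zeroSet]
  have : {x ∈ closure Ω | B₀ x = 0} = closure Ω ∩ B₀ ⁻¹' {0} := rfl
  rw [this]
  exact hΩb.isCompact_closure.inter_right (isClosed_singleton.preimage h.smooth.continuous)

lemma grad_cont {B₀ : E2 → ℝ} (h : ContDiff ℝ (⊤ : ℕ∞) B₀) :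
    Continuous fun x => ‖fderiv ℝ B₀ x‖ :=
  (h.continuous_fderiv (by simp)).norm

lemma grad_bounds {Ω : Set E2} (hΩb : Bornology.IsBounded Ω) {B₀ : E2 → ℝ} {Γ : Set E2}
    (h : VanishingFieldAssumption Ω B₀ Γ) :
    ∃ c > 0, ∃ C, ∀ x ∈ Γ, c ≤ ‖fderiv ℝ B₀ x‖ ∧ ‖fderiv ℝ B₀ x‖ ≤ C := by
  obtain ⟨c, hc, hh⟩ := h.nondeg
  obtain ⟨C, hC⟩ := (gamma_compact hΩb h).exists_bound_of_continuousOn (grad_cont h.smooth).continuousOn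
  refine ⟨c, hc, C, fun x hx => ⟨?_, ?_⟩⟩
  · have hx' := hx
    rw [h.zeroSet] at hx'
    have := hh x hx'.1
    rw [hx'.2] at this
    simpa using this
  · simpa using hC x hx

lemma bulk_limit {Ω : Set E2} (hΩo : IsOpen Ω) (hΩb : Bornology.IsBounded Ω) {B₀ : E2 → ℝ}
    {Γ : Set E2} (h : VanishingFieldAssumption Ω B₀ Γ) {g : ℝ → ℝ} (hg : IsLimitG g) :
    Tendsto (fun t : ℝ => t * ∫ x in Ω, g (t * |B₀ x|)) atTop
      (𝓝 (Gtot g * ∫ x in Γ, 1 / ‖fderiv ℝ B₀ x‖ ∂μH[1])) := by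
  have hloc : ∀ x ∈ closure Ω, ∃ V, IsOpen V ∧ x ∈ V ∧ LocOK g B₀ V := by
    intro x hx
    refine exists_loc hg h.smooth fun h0 hd => ?_
    obtain ⟨c, hc, hh⟩ := h.nondeg
    have := hh x hx
    rw [h0, hd] at this
    simp at this
    linarith
  choose! V hVo hxV hV using hloc
  obtain ⟨F, hF, hcov⟩ := hΩb.isCompact_closure.elim_nhds_subcover V
    (fun x hx => (hVo x hx).mem_nhds (hxV x hx))
  set e := F.equivFin
  obtain ⟨f, hfs, hf1, hf01, hfc⟩ := exists_continuous_sum_one_of_isOpen_isCompact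
    (n := F.card) (t := closure Ω) (s := fun i => V (e.symm i))
    (fun i => hVo _ (hF _ (e.symm i).2)) hΩb.isCompact_closure (by
      intro x hx
      obtain ⟨y, hy, hxy⟩ := mem_iUnion₂.mp (hcov hx)
      exact mem_iUnion.mpr ⟨e ⟨y, hy⟩, by simpa using hxy⟩)
  have hΓΩ : ∀ x, B₀ x = 0 → x ∈ closure Ω → x ∈ Γ := fun x h1 h2 => by
    rw [h.zeroSet]; exact ⟨h2, h1⟩
  have hsum : ∀ x ∈ closure Ω, ∑ i, f i x = 1 := fun x hx => by
    have := hf1 hx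
    simpa using this
  have key : ∀ i, Tendsto (fun t : ℝ => t * ∫ x, Ω.indicator (f i) x * gh g (t * |B₀ x|)) atTop
      (𝓝 (Gtot g * ∫ x in {x | B₀ x = 0}, Ω.indicator (f i) x / ‖fderiv ℝ B₀ x‖ ∂μH[1])) := by
    intro i
    have hts : tsupport (Ω.indicator (f i)) ⊆ tsupport (f i) := by
      apply closure_mono
      intro x hx
      rw [Function.mem_support] at hx ⊢
      intro h0
      apply hx
      by_cases hxΩ : x ∈ Ω <;> simp [hxΩ, h0]
    refine hV _ (hF _ (e.symm i).2) _ ((f i).continuous.measurable.indicator hΩo.measurableSet)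
      ⟨1, fun x => ?_⟩ ?_ (hts.trans (hfs i)) _ h.finiteBoundary ?_
    · by_cases hx : x ∈ Ω
      · rw [indicator_of_mem hx, abs_of_nonneg (hf01 i x).1]; exact (hf01 i x).2
      · rw [indicator_of_notMem hx]; simp
    · exact (hfc i).of_isClosed_subset (isClosed_tsupport _) hts
    · intro x hx hxS
      by_cases hxΩ : x ∈ Ω
      · refine (f i).continuous.continuousAt.congr ?_
        filter_upwards [hΩo.mem_nhds hxΩ] with y hy
        rw [indicator_of_mem hy]
      · have hxc : x ∉ closure Ω := by
          intro hc
          apply hxS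
          refine ⟨hΓΩ x hx hc, hc, ?_⟩
          rwa [hΩo.interior_eq]
        refine (continuousAt_const (y := (0:ℝ))).congr ?_
        filter_upwards [isClosed_closure.isOpen_compl.mem_nhds hxc] with y hy
        rw [indicator_of_notMem]
        exact fun hh => hy (subset_closure hh)
  have hsumT := tendsto_finsetSum Finset.univ (fun i _ => key i)
  -- right side
  have hZm : MeasurableSet {x | B₀ x = 0} :=
    (isClosed_singleton.preimage h.smooth.continuous).measurableSet
  have hΓm : MeasurableSet Γ := (gamma_compact hΩb h).measurableSet
  obtain ⟨c, hc, C, hcC⟩ := grad_bounds hΩb h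
  have hZΩ : {x | B₀ x = 0} ∩ Ω ⊆ Γ := fun x hx => hΓΩ x hx.1 (subset_closure hx.2)
  have hfin : μH[1] ({x | B₀ x = 0} ∩ Ω) < ⊤ := (measure_mono hZΩ).trans_lt (gamma_finite h)
  have hmg : Measurable fun x => ‖fderiv ℝ B₀ x‖ := (grad_cont h.smooth).measurable
  have hR : ∑ i, Gtot g * ∫ x in {x | B₀ x = 0}, Ω.indicator (f i) x / ‖fderiv ℝ B₀ x‖ ∂μH[1]
      = Gtot g * ∫ x in Γ, 1 / ‖fderiv ℝ B₀ x‖ ∂μH[1] := by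
    rw [← Finset.mul_sum]
    congr 1
    have e1 : ∀ i, ∫ x in {x | B₀ x = 0}, Ω.indicator (f i) x / ‖fderiv ℝ B₀ x‖ ∂μH[1]
        = ∫ x in {x | B₀ x = 0} ∩ Ω, f i x / ‖fderiv ℝ B₀ x‖ ∂μH[1] := by
      intro i
      rw [← setIntegral_indicator hΩo.measurableSet]
      congr 1
      ext x
      by_cases hx : x ∈ Ω <;> simp [hx]
    simp_rw [e1]
    rw [← integral_finsetSum]
    · have e2 : ∫ x in {x | B₀ x = 0} ∩ Ω, ∑ i, f i x / ‖fderiv ℝ B₀ x‖ ∂μH[1]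
          = ∫ x in {x | B₀ x = 0} ∩ Ω, 1 / ‖fderiv ℝ B₀ x‖ ∂μH[1] := by
        apply setIntegral_congr_fun (hZm.inter hΩo.measurableSet)
        intro x hx
        simp only []
        rw [← Finset.sum_div, hsum x (subset_closure hx.2)]
      rw [e2]
      apply setIntegral_congr_set
      have hnull : μH[1] (Γ \ ({x | B₀ x = 0} ∩ Ω)) = 0 := by
        have := Measure.nullSingletonClass_hausdorff E2 (d := 1) one_pos
        refine measure_mono_null ?_ ((h.finiteBoundary).measure_zero μH[1])
        intro x hx
        refine ⟨hx.1, ?_⟩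
        have hx1 := hx.1
        rw [h.zeroSet] at hx1
        refine ⟨hx1.1, ?_⟩
        rw [hΩo.interior_eq]
        exact fun hh => hx.2 ⟨hx1.2, hh⟩
      exact (hZΩ.eventuallyLE).antisymm (ae_le_set.mpr hnull)
    · intro i _
      refine Measure.integrableOn_of_bounded (M := 1 / c) hfin.ne
        ((f i).continuous.measurable.div hmg).aestronglyMeasurable ?_
      refine (ae_restrict_iff' (hZm.inter hΩo.measurableSet)).mpr (Eventually.of_forall ?_)
      intro x hx
      have := (hcC x (hZΩ hx)).1
      rw [norm_div, norm_norm, Real.norm_of_nonneg (hf01 i x).1]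
      have := hf01 i x
      exact div_le_div₀ zero_le_one this.2 hc (by assumption)
  rw [hR] at hsumT
  refine hsumT.congr' ?_
  filter_upwards [eventually_gt_atTop 0] with t ht
  rw [← Finset.mul_sum]
  congr 1
  have e1 : ∀ i, ∫ x, Ω.indicator (f i) x * gh g (t * |B₀ x|)
      = ∫ x in Ω, f i x * gh g (t * |B₀ x|) := by
    intro i
    rw [← integral_indicator hΩo.measurableSet]
    congr 1
    ext x
    by_cases hx : x ∈ Ω <;> simp [hx]
  simp_rw [e1]
  have hghm : Measurable fun x => gh g (t * |B₀ x|) :=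
    (measurable_gh hg).comp (h.smooth.continuous.abs.const_mul t).measurable
  rw [← integral_finsetSum]
  · apply setIntegral_congr_ae hΩo.measurableSet
    have : ∀ᵐ x : E2, x ∉ Γ := measure_eq_zero_iff_ae_notMem.mp (gamma_null h)
    filter_upwards [this] with x hx hxΩ
    rw [← Finset.sum_mul, hsum x (subset_closure hxΩ), one_mul, gh_pos]
    have : B₀ x ≠ 0 := fun h0 => hx (hΓΩ x h0 (subset_closure hxΩ))
    positivity
  · intro i _
    refine Measure.integrableOn_of_bounded (M := 1 / 2) hΩb.measure_lt_top.ne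
      ((f i).continuous.measurable.mul hghm).aestronglyMeasurable ?_
    refine Eventually.of_forall fun x => ?_
    rw [norm_mul, Real.norm_of_nonneg (hf01 i x).1, Real.norm_eq_abs]
    have h1 := hf01 i x
    have h2 := gh_abs_le hg (t * |B₀ x|)
    nlinarith [h1.1, h1.2, abs_nonneg (gh g (t * |B₀ x|))]

lemma line_limit {Ω : Set E2} (hΩb : Bornology.IsBounded Ω) {B₀ : E2 → ℝ}
    {Γ : Set E2} (h : VanishingFieldAssumption Ω B₀ Γ) {g E : ℝ → ℝ} (hg : IsLimitG g)
    (hE : IsLimitE E) :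
    Tendsto (fun β : ℝ => β * ∫ x in Γ, (β * ‖fderiv ℝ B₀ x‖) ^ ((1:ℝ)/3)
      * E (β * ‖fderiv ℝ B₀ x‖) ∂μH[1]) (𝓝[>] 0)
      (𝓝 (Gtot g * ∫ x in Γ, 1 / ‖fderiv ℝ B₀ x‖ ∂μH[1])) := by
  obtain ⟨c, hc, C, hcC⟩ := grad_bounds hΩb h
  obtain ⟨E', hE'm, hE'⟩ := E_meas hg hE
  have hmg : Measurable fun x => ‖fderiv ℝ B₀ x‖ := (grad_cont h.smooth).measurable
  have hΓm : MeasurableSet Γ := (gamma_compact hΩb h).measurableSet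
  have hfinite : IsFiniteMeasure ((μH[1] : Measure E2).restrict Γ) :=
    ⟨by rw [Measure.restrict_apply_univ]; exact gamma_finite h⟩
  have hA := E_asymp hg hE
  have hC0 : 0 < C := by
    obtain ⟨x, hx⟩ := h.nonempty
    linarith [hcC x hx]
  simp_rw [← integral_const_mul]
  have hev : ∀ᶠ L in 𝓝[>] (0:ℝ), |L ^ ((4:ℝ)/3) * E L| ≤ |Gtot g| + 1 := by
    have := hA.abs.eventually (eventually_lt_nhds (show |Gtot g| < |Gtot g| + 1 by linarith))
    exact this.mono fun _ h => h.le
  obtain ⟨δ, hδ, hδs⟩ := mem_nhdsGT_iff_exists_Ioo_subset.mp hev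
  have hδ0 : (0:ℝ) < δ := hδ
  have hid : ∀ β > 0, ∀ m > 0, β * ((β * m) ^ ((1:ℝ)/3) * E (β * m))
      = ((β * m) ^ ((4:ℝ)/3) * E (β * m)) / m := by
    intro β hβ m hm
    have : (β * m) ^ ((4:ℝ)/3) = (β * m) ^ ((1:ℝ)/3) * (β * m) := by
      rw [show ((4:ℝ)/3) = 1/3 + 1 by norm_num, Real.rpow_add_one (by positivity)]
    rw [this]
    field_simp
  apply tendsto_integral_filter_of_dominated_convergence (fun _ => (|Gtot g| + 1) / c)
  · filter_upwards [self_mem_nhdsWithin] with β hβ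
    have hβ0 : (0:ℝ) < β := hβ
    have hm : Measurable fun x => β * ((β * ‖fderiv ℝ B₀ x‖) ^ ((1:ℝ)/3)
      * E' (β * ‖fderiv ℝ B₀ x‖)) :=
      (((hmg.const_mul β).pow_const _).mul (hE'm.comp (hmg.const_mul β))).const_mul β
    refine hm.aestronglyMeasurable.congr ?_
    refine (ae_restrict_iff' hΓm).mpr (Eventually.of_forall fun x hx => ?_)
    have := hcC x hx
    simp only []
    rw [hE' _ (mul_pos hβ0 (by linarith))]
  · filter_upwards [Ioo_mem_nhdsGT (show (0:ℝ) < δ / C by positivity)] with β hβ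
    refine (ae_restrict_iff' hΓm).mpr (Eventually.of_forall fun x hx => ?_)
    obtain ⟨h1, h2⟩ := hcC x hx
    have hm : 0 < ‖fderiv ℝ B₀ x‖ := by linarith
    rw [hid β hβ.1 _ hm, norm_div, norm_norm, Real.norm_eq_abs]
    refine div_le_div₀ (by positivity) (hδs ⟨mul_pos hβ.1 hm, ?_⟩) hc h1
    have := (lt_div_iff₀ hC0).mp hβ.2
    nlinarith [hβ.1]
  · exact integrable_const _
  · refine (ae_restrict_iff' hΓm).mpr (Eventually.of_forall fun x hx => ?_)
    obtain ⟨h1, h2⟩ := hcC x hx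
    have hm : 0 < ‖fderiv ℝ B₀ x‖ := by linarith
    have ht : Tendsto (fun β => β * ‖fderiv ℝ B₀ x‖) (𝓝[>] 0) (𝓝[>] 0) := by
      refine tendsto_nhdsWithin_iff.mpr ⟨?_, ?_⟩
      · have : Tendsto (fun β => β * ‖fderiv ℝ B₀ x‖) (𝓝 0) (𝓝 (0 * ‖fderiv ℝ B₀ x‖)) :=
          tendsto_id.mul_const _
        rw [zero_mul] at this
        exact this.mono_left nhdsWithin_le_nhds
      · filter_upwards [self_mem_nhdsWithin] with β hβ
        exact mul_pos hβ hm
    have := (hA.comp ht).div_const ‖fderiv ℝ B₀ x‖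
    rw [mul_one_div]
    refine this.congr' ?_
    filter_upwards [self_mem_nhdsWithin] with β hβ
    exact (hid β hβ _ hm).symm


/-- Comparison of the bulk and line energies via the co-area formula:
`∫_Ω g(b(κ)κ|B₀|) dx = κ⁻¹ ∫_Γ (b(κ)|∇B₀|)^{1/3} E(b(κ)|∇B₀|) ds + o(b(κ)⁻¹κ⁻¹)`. -/
theorem bulk_energy_eq_line_energy
    (Ω : Set E2) (hΩo : IsOpen Ω) (hΩb : Bornology.IsBounded Ω) (hΩne : Ω.Nonempty)
    (hΩsc : SimplyConnectedSpace Ω)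
    (B₀ : E2 → ℝ) (Γ : Set E2) (hB₀ : VanishingFieldAssumption Ω B₀ Γ)
    (b : ℝ → ℝ) (hbpos : ∀ κ > 0, 0 < b κ)
    (hbκ : Tendsto (fun κ => κ * b κ) atTop atTop)
    (hb0 : Tendsto b atTop (nhds 0))
    (g E : ℝ → ℝ) (hg : IsLimitG g) (hE : IsLimitE E) :
    Tendsto (fun κ => (b κ * κ) *
        ((∫ x in Ω, g (b κ * κ * |B₀ x|)) -
          κ⁻¹ * ∫ x in Γ, (b κ * ‖fderiv ℝ B₀ x‖) ^ ((1:ℝ)/3) *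
            E (b κ * ‖fderiv ℝ B₀ x‖) ∂μH[1]))
      atTop (nhds 0) := by
  have hκ : Tendsto (fun κ => b κ * κ) atTop atTop := hbκ.congr fun κ => mul_comm _ _
  have hb0' : Tendsto b atTop (𝓝[>] 0) := by
    refine tendsto_nhdsWithin_iff.mpr ⟨hb0, ?_⟩
    filter_upwards [eventually_gt_atTop 0] with κ h
    exact hbpos κ h
  have h1 := (bulk_limit hΩo hΩb hB₀ hg).comp hκ
  have h2 := (line_limit hΩb hB₀ hg hE).comp hb0'
  have h3 := h1.sub h2
  rw [sub_self] at h3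
  refine h3.congr' ?_
  filter_upwards [eventually_gt_atTop 0] with κ h
  simp only [Function.comp_apply]
  rw [mul_sub]
  congr 1
  rw [← mul_assoc]
  congr 1
  field_simp

end
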